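/- Let P ∈ ℤ[x] be a polynomial that is either a product of at least two pairwise non-proportional linear factors a_i x + b_i over ℤ (i.e. a_i b_j − a_j b_i ≠ 0 for i ≠ j) or an irreducible quadratic, assume P is admissible, and assume P(n) ≥ 1 for all positive integers n. Then there exist constants κ > 0 and δ > 0 such that: (i) #{n ≤ N : P(n) is squarefree} = κ·N + O_P(N^{3/4}); and (ii) for every ε > 0, #{(n₁,n₂,n₃,n₄) ∈ [1,N]⁴ : each P(n_i) is squarefree and P(n₁)P(n₂)P(n₃)P(n₄) is a perfect square} = 3κ²·N² + O_{P,ε}(N^{2−δ+ε}), as N → ∞. -/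

import Mathlib

/-!
**Density.** In the Möbius identity `μ²(m) = ∑_{d² ∣ m} μ(d)` keep only `d ≤ N^{7/10}`. If `P(n)` is
divisible by the square of a larger squarefree `d`, then it is divisible either by `e²` for some
`e ∣ d` of moderate size, which root counting modulo `e²` controls, or by the square of a prime
`p > N^{7/10}`. For a linear factor the latter hardly occurs; for a quadratic factor the cofactor of
`p²` is small, and each value of it gives a Pell equation with few solutions.

**Fourth moment.** Quadruples that match up in two pairs give the main term. Since `P(x) = P(y)`
with `x ≠ y` forces `x` and `y` to be bounded, the other quadruples with coinciding values are
`O(N)`. Otherwise order the quadruple as `(a, b, c, d)` with `a` the largest entry and `P(b)` having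
the largest gcd `g` with `P(a)`. As `P(a) ∣ P(b)P(c)P(d)`, we get `g³ ≥ P(a)`, so there are few
pairs `(a, b)` for each `g`. Let `R` be the squarefree part of `P(a)P(b)`.
* If `R > a^{1/12}`, then `P(c)`, up to exchanging `c` and `d`, is divisible by a divisor of `R`
  that is at least `√R`, so there are few `c`, and `c` determines `d` up to `O(1)` choices.
* If `R ≤ a^{1/12}`, then `t P(c) = s P(d)` for some `s ≠ t` with `s t = R`. The solutions of this
  equation lie so near a fixed line that those in a short interval are collinear, and a line carries
  at most `deg P` of them: an affine substitution multiplying `P` by a positive constant permutes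
  the complex roots of `P`, hence has linear coefficient of modulus `1`, so the constant is `1`.
-/

/-! ### Powers indexed by the number of prime factors -/

section PrimeFactors

open Finset

theorem exists_pow_card_primeFactors_le (K : ℕ) {ε : ℝ} (hε : 0 < ε) :
    ∃ C : ℝ, 0 < C ∧ ∀ n : ℕ, n ≠ 0 → (K : ℝ) ^ #n.primeFactors ≤ C * (n : ℝ) ^ ε := by
  obtain ⟨B, hB⟩ := exists_nat_gt (((K : ℝ) + 1) ^ ε⁻¹)
  refine ⟨((K : ℝ) + 1) ^ B, by positivity, fun n hn ↦ ?_⟩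
  -- A prime `p ≥ B` has `K ≤ p ^ ε`; each of the at most `B` smaller primes costs `K + 1`.
  have factor_le : ∀ p ∈ n.primeFactors,
      (K : ℝ) ≤ (if p < B then (K : ℝ) + 1 else 1) * (p : ℝ) ^ ε := by
    intro p hp
    have one_le_p : (1 : ℝ) ≤ p := by exact_mod_cast (Nat.prime_of_mem_primeFactors hp).one_le
    split_ifs with hpB
    · have : (1 : ℝ) ≤ (p : ℝ) ^ ε := Real.one_le_rpow one_le_p hε.le
      nlinarith [Nat.cast_nonneg (α := ℝ) K]
    · have hBp : (B : ℝ) ≤ p := by exact_mod_cast not_lt.mp hpB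
      have hKp : (K : ℝ) + 1 ≤ (p : ℝ) ^ ε :=
        (Real.rpow_inv_le_iff_of_pos (by positivity) (by positivity) hε).mp (hB.le.trans hBp)
      linarith
  have small_le : ∏ p ∈ n.primeFactors, (if p < B then (K : ℝ) + 1 else 1) ≤ ((K : ℝ) + 1) ^ B := by
    rw [← prod_filter, prod_const]
    refine pow_le_pow_right₀ (by linarith [Nat.cast_nonneg (α := ℝ) K]) ?_
    calc #{p ∈ n.primeFactors | p < B} ≤ #(range B) :=
          card_le_card fun p hp ↦ mem_range.mpr (mem_filter.mp hp).2
      _ = B := card_range B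
  have radical_le : ∏ p ∈ n.primeFactors, (p : ℝ) ^ ε ≤ (n : ℝ) ^ ε := by
    rw [Real.finsetProd_rpow _ _ fun _ _ ↦ by positivity]
    gcongr
    rw [← Nat.cast_prod]
    exact_mod_cast Nat.le_of_dvd (Nat.pos_of_ne_zero hn) (Nat.prod_primeFactors_dvd n)
  calc (K : ℝ) ^ #n.primeFactors = ∏ _p ∈ n.primeFactors, (K : ℝ) := (prod_const _).symm
    _ ≤ ∏ p ∈ n.primeFactors, ((if p < B then (K : ℝ) + 1 else 1) * (p : ℝ) ^ ε) :=
        prod_le_prod (fun _ _ ↦ by positivity) factor_le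
    _ = (∏ p ∈ n.primeFactors, (if p < B then (K : ℝ) + 1 else 1)) *
          ∏ p ∈ n.primeFactors, (p : ℝ) ^ ε := prod_mul_distrib
    _ ≤ ((K : ℝ) + 1) ^ B * (n : ℝ) ^ ε := by gcongr

theorem le_pow_card_primeFactors_of_submultiplicative {F : ℕ → ℕ} {K : ℕ} (map_one : F 1 ≤ 1)
    (map_mul : ∀ a b : ℕ, Nat.Coprime a b → F (a * b) ≤ F a * F b)
    (map_prime : ∀ p : ℕ, p.Prime → F p ≤ K) {n : ℕ} (hn : Squarefree n) :
    F n ≤ K ^ #n.primeFactors := by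
  induction n using Nat.recOnMul with
  | zero => exact absurd hn not_squarefree_zero
  | one => simpa using map_one
  | prime p hp => simpa [hp.primeFactors] using map_prime p hp
  | mul a b iha ihb =>
    have hab : Nat.Coprime a b := Nat.coprime_of_squarefree_mul hn
    rw [hab.primeFactors_mul, card_union_of_disjoint hab.disjoint_primeFactors, pow_add]
    exact (map_mul a b hab).trans (Nat.mul_le_mul (iha hn.of_mul_left) (ihb hn.of_mul_right))

theorem card_filter_squarefree_divisors {m : ℕ} (hm : m ≠ 0) :
    #{d ∈ m.divisors | Squarefree d} = 2 ^ #m.primeFactors := by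
  have h := Nat.sum_divisors_filter_squarefree hm (f := fun _ ↦ (1 : ℕ))
  simp only [sum_const, smul_eq_mul, mul_one, card_powerset] at h
  rw [h, Nat.factors_eq]
  rfl

theorem card_divisors_of_squarefree {m : ℕ} (hm : Squarefree m) :
    #m.divisors = 2 ^ #m.primeFactors := by
  rw [← card_filter_squarefree_divisors hm.ne_zero,
    filter_true_of_mem fun d hd ↦ hm.squarefree_of_dvd (Nat.dvd_of_mem_divisors hd)]

end PrimeFactors

/-! ### Roots of a polynomial modulo `q` -/

section RootCount

open Finset Polynomial

/-- The absolute value `|P(n)|` as a natural number, so that divisibility and squarefreeness of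
values can be discussed in `ℕ`. -/
def absEval (P : ℤ[X]) (n : ℕ) : ℕ := (P.eval (n : ℤ)).natAbs

/-- The number `ρ_P(q)` of residue classes modulo `q` on which `P` vanishes, counted through the
representatives `0, …, q - 1`. -/
def rootCount (P : ℤ[X]) (q : ℕ) : ℕ := #{r ∈ range q | q ∣ absEval P r}

variable {P : ℤ[X]}

theorem dvd_absEval_iff {q n : ℕ} : q ∣ absEval P n ↔ (q : ℤ) ∣ P.eval (n : ℤ) :=
  Int.natCast_dvd.symm

theorem cast_absEval (P : ℤ[X]) (n : ℕ) :
    (absEval P n : ℝ) = |(P.map (Int.castRingHom ℝ)).eval (n : ℝ)| := by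
  rw [absEval, Nat.cast_natAbs, Int.cast_abs, eval_map, eval₂_at_natCast]
  simp

theorem dvd_absEval_congr {m x y : ℕ} (hxy : x ≡ y [MOD m]) :
    m ∣ absEval P x ↔ m ∣ absEval P y := by
  rw [dvd_absEval_iff, dvd_absEval_iff]
  exact (dvd_iff_dvd_of_dvd_sub
    ((Nat.modEq_iff_dvd.mp hxy).trans (sub_dvd_eval_sub _ _ P))).symm

theorem rootCount_one (P : ℤ[X]) : rootCount P 1 = 1 := by
  simp [rootCount]

theorem rootCount_le (P : ℤ[X]) (q : ℕ) : rootCount P q ≤ q :=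
  (card_filter_le _ _).trans (card_range q).le

theorem rootCount_eq_self_iff {q : ℕ} (hq : 0 < q) :
    rootCount P q = q ↔ ∀ n : ℕ, q ∣ absEval P n := by
  calc rootCount P q = q ↔ #{r ∈ range q | q ∣ absEval P r} = #(range q) := by
        rw [card_range]; rfl
    _ ↔ ∀ r ∈ range q, q ∣ absEval P r := card_filter_eq_iff
    _ ↔ ∀ n : ℕ, q ∣ absEval P n :=
        ⟨fun h n ↦ (dvd_absEval_congr (Nat.mod_modEq n q)).mp
          (h _ (mem_range.mpr (Nat.mod_lt n hq))), fun h r _ ↦ h r⟩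

theorem rootCount_mul_of_coprime (P : ℤ[X]) {m n : ℕ} (hmn : Nat.Coprime m n) :
    rootCount P (m * n) = rootCount P m * rootCount P n := by
  rcases Nat.eq_zero_or_pos m with rfl | hm
  · simp [rootCount]
  rcases Nat.eq_zero_or_pos n with rfl | hn
  · simp [rootCount]
  rw [rootCount, rootCount, rootCount, ← card_product]
  refine card_bij (fun r _ ↦ (r % m, r % n)) ?_ ?_ ?_
  · intro r hr
    simp only [mem_filter, mem_range, mem_product] at hr ⊢
    exact ⟨⟨Nat.mod_lt _ hm,
        (dvd_absEval_congr (Nat.mod_modEq r m)).mpr ((dvd_mul_right m n).trans hr.2)⟩,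
      Nat.mod_lt _ hn, (dvd_absEval_congr (Nat.mod_modEq r n)).mpr ((dvd_mul_left n m).trans hr.2)⟩
  · intro r hr r' hr' hrr'
    simp only [mem_filter, mem_range, Prod.mk.injEq] at hr hr' hrr'
    exact ((Nat.modEq_and_modEq_iff_modEq_mul hmn).mp hrr').eq_of_lt_of_lt hr.1 hr'.1
  · rintro ⟨x, y⟩ hxy
    simp only [mem_filter, mem_range, mem_product] at hxy
    obtain ⟨z, hzx, hzy⟩ := Nat.chineseRemainder hmn x y
    refine ⟨z % (m * n), ?_, ?_⟩
    · simp only [mem_filter, mem_range]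
      refine ⟨Nat.mod_lt _ (Nat.mul_pos hm hn), ?_⟩
      rw [dvd_absEval_congr (Nat.mod_modEq z _)]
      exact hmn.mul_dvd_of_dvd_of_dvd ((dvd_absEval_congr hzx).mpr hxy.1.2)
        ((dvd_absEval_congr hzy).mpr hxy.2.2)
    · rw [Prod.mk.injEq, Nat.mod_mul_right_mod, Nat.mod_mul_left_mod]
      exact ⟨Nat.mod_eq_of_modEq hzx hxy.1.1, Nat.mod_eq_of_modEq hzy hxy.2.1⟩

theorem rootCount_prime_le_natDegree {p : ℕ} (hp : p.Prime) (hlc : ¬ (p : ℤ) ∣ P.leadingCoeff) :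
    rootCount P p ≤ P.natDegree := by
  have := Fact.mk hp
  set Q := P.map (Int.castRingHom (ZMod p)) with hQ
  have hQ0 : Q ≠ 0 := by
    intro h0
    refine hlc ((ZMod.intCast_zmod_eq_zero_iff_dvd _ p).mp ?_)
    simpa [hQ] using congrArg (coeff · P.natDegree) h0
  calc rootCount P p ≤ #Q.roots.toFinset := by
        refine card_le_card_of_injOn (fun r : ℕ ↦ (r : ZMod p)) (fun r hr ↦ ?_)
          (fun r hr r' hr' hrr' ↦ ?_)
        · have hdvd := dvd_absEval_iff.mp (mem_filter.mp hr).2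
          rw [mem_coe, Multiset.mem_toFinset, mem_roots hQ0, IsRoot, hQ, eval_map,
            eval₂_at_natCast]
          simpa using (ZMod.intCast_zmod_eq_zero_iff_dvd _ p).mpr hdvd
        · exact ((ZMod.natCast_eq_natCast_iff _ _ _).mp hrr').eq_of_lt_of_lt
            (mem_range.mp (mem_filter.mp hr).1) (mem_range.mp (mem_filter.mp hr').1)
    _ ≤ Q.natDegree := (Multiset.toFinset_card_le _).trans (card_roots' Q)
    _ ≤ P.natDegree := natDegree_map_le

theorem rootCount_prime_le (hP : P ≠ 0) {p : ℕ} (hp : p.Prime) :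
    rootCount P p ≤ P.natDegree + P.leadingCoeff.natAbs := by
  by_cases hlc : (p : ℤ) ∣ P.leadingCoeff
  · have : p ≤ P.leadingCoeff.natAbs :=
      Nat.le_of_dvd (by simpa [Nat.pos_iff_ne_zero] using hP) (Int.natCast_dvd.mp hlc)
    have := rootCount_le P p
    lia
  · exact (rootCount_prime_le_natDegree hp hlc).trans (Nat.le_add_right _ _)

/-- Uniqueness in Hensel's lemma. -/
theorem modEq_sq_of_not_dvd_derivative {p r s : ℕ} (hp : p.Prime) (hrs : r ≡ s [MOD p])
    (hr : p ^ 2 ∣ absEval P r) (hs : p ^ 2 ∣ absEval P s)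
    (hder : ¬ (p : ℤ) ∣ P.derivative.eval (r : ℤ)) : r ≡ s [MOD p ^ 2] := by
  rw [dvd_absEval_iff, Nat.cast_pow] at hr hs
  obtain ⟨t, ht⟩ := Nat.modEq_iff_dvd.mp hrs
  obtain ⟨k, hk⟩ := binomExpansion P (r : ℤ) (p * t)
  rw [show (s : ℤ) = r + p * t by linarith, hk] at hs
  have hdvd : (p : ℤ) ^ 2 ∣ p * (P.derivative.eval (r : ℤ) * t) := by
    refine (dvd_sub (dvd_sub hs hr) (dvd_mul_right ((p : ℤ) ^ 2) (k * t ^ 2))).trans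
      (dvd_of_eq ?_)
    ring
  have hpt : (p : ℤ) ∣ t := by
    rw [pow_two, mul_dvd_mul_iff_left (by exact_mod_cast hp.ne_zero)] at hdvd
    exact ((Nat.prime_iff_prime_int.mp hp).dvd_or_dvd hdvd).resolve_left hder
  rw [Nat.modEq_iff_dvd, ht, Nat.cast_pow, pow_two]
  exact mul_dvd_mul_left _ hpt

theorem rootCount_prime_sq_le (hP : P ≠ 0) {U V : ℤ[X]} {R : ℤ} (hR : R ≠ 0)
    (hUV : U * P + V * derivative P = C R) {p : ℕ} (hp : p.Prime) :
    rootCount P (p ^ 2) ≤ P.natDegree + P.leadingCoeff.natAbs + R.natAbs ^ 2 := by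
  by_cases hpR : (p : ℤ) ∣ R
  · have : p ≤ R.natAbs := Nat.le_of_dvd (by lia) (Int.natCast_dvd.mp hpR)
    have := Nat.pow_le_pow_left this 2
    have := rootCount_le P (p ^ 2)
    lia
  refine le_trans ?_ ((rootCount_prime_le hP hp).trans (Nat.le_add_right _ _))
  refine card_le_card_of_injOn (· % p) (fun r hr ↦ ?_) (fun r hr s hs hrs ↦ ?_)
  · have hr := (mem_filter.mp hr).2
    exact mem_filter.mpr ⟨mem_range.mpr (Nat.mod_lt _ hp.pos),
      (dvd_absEval_congr (Nat.mod_modEq r p)).mpr ((dvd_pow_self p two_ne_zero).trans hr)⟩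
  · rw [mem_coe, mem_filter, mem_range] at hr hs
    refine (modEq_sq_of_not_dvd_derivative hp hrs hr.2 hs.2 fun hder ↦ hpR ?_).eq_of_lt_of_lt
      hr.1 hs.1
    have hRr :
        U.eval (r : ℤ) * P.eval (r : ℤ) + V.eval (r : ℤ) * P.derivative.eval (r : ℤ) = R := by
      simpa using congrArg (eval (r : ℤ)) hUV
    have hPr := dvd_absEval_iff.mp ((dvd_pow_self p two_ne_zero).trans hr.2)
    exact hRr ▸ dvd_add (hPr.mul_left _) (hder.mul_left _)

theorem exists_bezout_of_isCoprime_map {A B : ℤ[X]}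
    (h : IsCoprime (A.map (Int.castRingHom ℚ)) (B.map (Int.castRingHom ℚ))) :
    ∃ (U V : ℤ[X]) (R : ℤ), R ≠ 0 ∧ U * A + V * B = C R := by
  obtain ⟨u, v, huv⟩ := h
  have clear_denominators : ∀ w : ℚ[X], ∃ (W : ℤ[X]) (d : ℤ), d ≠ 0 ∧
      W.map (Int.castRingHom ℚ) = C (d : ℚ) * w := by
    intro w
    obtain ⟨d, hd, hw⟩ := IsLocalization.integerNormalization_spec (nonZeroDivisors ℤ) w
    refine ⟨IsLocalization.integerNormalization (nonZeroDivisors ℤ) w, d,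
      nonZeroDivisors.ne_zero hd, ?_⟩
    change Polynomial.map (algebraMap ℤ ℚ) _ = _
    rw [hw]
    ext n
    simp
  obtain ⟨U, d, hd, hU⟩ := clear_denominators u
  obtain ⟨V, e, he, hV⟩ := clear_denominators v
  refine ⟨C e * U, C d * V, d * e, mul_ne_zero hd he,
    map_injective (Int.castRingHom ℚ) Int.cast_injective ?_⟩
  simp only [Polynomial.map_add, Polynomial.map_mul, map_C, hU, hV, C_mul,
    Int.coe_castRingHom]
  linear_combination (C (d : ℚ) * C (e : ℚ)) * huv

theorem exists_rootCount_le_pow (hsep : (P.map (Int.castRingHom ℚ)).Separable) :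
    ∃ K : ℕ, ∀ g : ℕ, Squarefree g →
      rootCount P g ≤ K ^ #g.primeFactors ∧ rootCount P (g ^ 2) ≤ K ^ #g.primeFactors := by
  have hP : P ≠ 0 := fun h ↦ hsep.ne_zero (by simp [h])
  obtain ⟨U, V, R, hR, hUV⟩ :=
    exists_bezout_of_isCoprime_map (A := P) (B := derivative P) (by rwa [← derivative_map])
  refine ⟨P.natDegree + P.leadingCoeff.natAbs + R.natAbs ^ 2, fun g hg ↦ ⟨?_, ?_⟩⟩
  · exact le_pow_card_primeFactors_of_submultiplicative (rootCount_one P).le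
      (fun a b hab ↦ (rootCount_mul_of_coprime P hab).le)
      (fun p hp ↦ (rootCount_prime_le hP hp).trans (Nat.le_add_right _ _)) hg
  · refine le_pow_card_primeFactors_of_submultiplicative (F := fun g ↦ rootCount P (g ^ 2))
      (by simp [rootCount_one]) (fun a b hab ↦ ?_)
      (fun p hp ↦ rootCount_prime_sq_le hP hR hUV hp) hg
    rw [mul_pow]
    exact (rootCount_mul_of_coprime P (hab.pow 2 2)).le

theorem exists_rootCount_le_rpow (hsep : (P.map (Int.castRingHom ℚ)).Separable) {ε : ℝ}
    (hε : 0 < ε) : ∃ C : ℝ, 0 < C ∧ ∀ g : ℕ, Squarefree g →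
      (rootCount P g : ℝ) ≤ C * (g : ℝ) ^ ε ∧ (rootCount P (g ^ 2) : ℝ) ≤ C * (g : ℝ) ^ ε := by
  obtain ⟨K, hK⟩ := exists_rootCount_le_pow hsep
  obtain ⟨C, hC, hKC⟩ := exists_pow_card_primeFactors_le K hε
  refine ⟨C, hC, fun g hg ↦ ?_⟩
  have hg' := hKC g hg.ne_zero
  exact ⟨le_trans (by exact_mod_cast (hK g hg).1) hg',
    le_trans (by exact_mod_cast (hK g hg).2) hg'⟩

theorem abs_card_modEq_sub_le_one (N r : ℕ) {q : ℕ} (hq : 0 < q) :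
    |(#{n ∈ Ioc 0 N | n ≡ r [MOD q]} : ℝ) - N / q| ≤ 1 := by
  suffices |(#{n ∈ Ioc 0 N | n ≡ r [MOD q]} : ℚ) - N / q| ≤ 1 by
    simpa using (Rat.cast_le (K := ℝ)).mpr this
  have hcard := Nat.Ioc_filter_modEq_card 0 N hq r
  have hsub : ((N : ℚ) - r) / q - (((0 : ℕ) : ℚ) - r) / q = N / q := by push_cast; ring
  have hle : (((0 : ℕ) : ℚ) - r) / q ≤ ((N : ℚ) - r) / q := by
    gcongr
    exact Nat.zero_le N
  rw [max_eq_left (sub_nonneg.mpr (Int.floor_le_floor hle))] at hcard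
  have hcard' : (#{n ∈ Ioc 0 N | n ≡ r [MOD q]} : ℚ) =
      (⌊((N : ℚ) - r) / q⌋ : ℚ) - (⌊(((0 : ℕ) : ℚ) - r) / q⌋ : ℚ) := by exact_mod_cast hcard
  rw [hcard', ← hsub, abs_le]
  constructor <;> linarith [Int.floor_le (((N : ℚ) - r) / q),
    Int.lt_floor_add_one (((N : ℚ) - r) / q), Int.floor_le ((((0 : ℕ) : ℚ) - r) / q),
    Int.lt_floor_add_one ((((0 : ℕ) : ℚ) - r) / q)]

theorem card_dvd_absEval_eq_sum (P : ℤ[X]) (N : ℕ) {q : ℕ} (hq : 0 < q) :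
    #{n ∈ Icc 1 N | q ∣ absEval P n} =
      ∑ r ∈ range q with q ∣ absEval P r, #{n ∈ Ioc 0 N | n ≡ r [MOD q]} := by
  rw [card_eq_sum_card_fiberwise (f := (· % q)) (t := {r ∈ range q | q ∣ absEval P r})]
  · refine sum_congr rfl fun r hr ↦ congrArg card ?_
    simp only [mem_filter, mem_range] at hr
    ext n
    have hmod : n % q = r ↔ n ≡ r [MOD q] := by rw [Nat.ModEq, Nat.mod_eq_of_lt hr.1]
    simp only [mem_filter, mem_Icc, mem_Ioc, hmod]
    exact ⟨fun h ↦ ⟨h.1.1, h.2⟩, fun h ↦ ⟨⟨h.1, (dvd_absEval_congr h.2).mpr hr.2⟩, h.2⟩⟩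
  · intro n hn
    exact mem_filter.mpr ⟨mem_range.mpr (Nat.mod_lt n hq),
      (dvd_absEval_congr (Nat.mod_modEq n q)).mpr (mem_filter.mp hn).2⟩

theorem abs_card_dvd_absEval_sub_le (P : ℤ[X]) (N : ℕ) {q : ℕ} (hq : 0 < q) :
    |(#{n ∈ Icc 1 N | q ∣ absEval P n} : ℝ) - N * (rootCount P q / q)| ≤ rootCount P q := by
  have main_term : (N : ℝ) * (rootCount P q / q) =
      ∑ r ∈ range q with q ∣ absEval P r, (N : ℝ) / q := by
    rw [sum_const, nsmul_eq_mul, rootCount]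
    ring
  rw [card_dvd_absEval_eq_sum P N hq, main_term, Nat.cast_sum, ← sum_sub_distrib]
  calc |∑ r ∈ range q with q ∣ absEval P r, ((#{n ∈ Ioc 0 N | n ≡ r [MOD q]} : ℝ) - N / q)|
      ≤ ∑ r ∈ range q with q ∣ absEval P r, |(#{n ∈ Ioc 0 N | n ≡ r [MOD q]} : ℝ) - N / q| :=
        abs_sum_le_sum_abs _ _
    _ ≤ ∑ r ∈ range q with q ∣ absEval P r, (1 : ℝ) :=
        sum_le_sum fun r _ ↦ abs_card_modEq_sub_le_one N r hq
    _ = rootCount P q := by simp [rootCount]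

theorem card_dvd_absEval_le (P : ℤ[X]) (N : ℕ) {q : ℕ} (hq : 0 < q) :
    (#{n ∈ Icc 1 N | q ∣ absEval P n} : ℝ) ≤ rootCount P q * (N / q + 1) := by
  have := (abs_le.mp (abs_card_dvd_absEval_sub_le P N hq)).2
  linarith [show (N : ℝ) * (rootCount P q / q) = rootCount P q * (N / q) by ring]

end RootCount

/-! ### Size of polynomial values -/

section Growth

open Finset Polynomial Filter Topology

theorem exists_abs_eval_le (R : ℝ[X]) {m : ℕ} (hm : R.natDegree ≤ m) :
    ∃ C : ℝ, 0 < C ∧ ∀ x : ℝ, 1 ≤ x → |R.eval x| ≤ C * x ^ m := by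
  refine ⟨∑ i ∈ range (m + 1), |R.coeff i| + 1, by positivity, fun x hx ↦ ?_⟩
  calc |R.eval x| = |∑ i ∈ range (m + 1), R.coeff i * x ^ i| := by
        rw [eval_eq_sum_range' (Nat.lt_succ_of_le hm)]
    _ ≤ ∑ i ∈ range (m + 1), |R.coeff i * x ^ i| := abs_sum_le_sum_abs _ _
    _ ≤ ∑ i ∈ range (m + 1), |R.coeff i| * x ^ m := by
        refine sum_le_sum fun i hi ↦ ?_
        rw [abs_mul, abs_of_nonneg (by positivity : 0 ≤ x ^ i)]
        have : i ≤ m := Nat.lt_succ_iff.mp (mem_range.mp hi)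
        gcongr
    _ = (∑ i ∈ range (m + 1), |R.coeff i|) * x ^ m := (sum_mul _ _ _).symm
    _ ≤ (∑ i ∈ range (m + 1), |R.coeff i| + 1) * x ^ m := by gcongr; linarith

variable {P : ℤ[X]}

theorem exists_absEval_le (P : ℤ[X]) {m : ℕ} (hm : P.natDegree ≤ m) :
    ∃ C : ℝ, 0 < C ∧ ∀ n : ℕ, n ≠ 0 → (absEval P n : ℝ) ≤ C * (n : ℝ) ^ m := by
  obtain ⟨C, hC, hP⟩ := exists_abs_eval_le (P.map (Int.castRingHom ℝ)) (natDegree_map_le.trans hm)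
  refine ⟨C, hC, fun n hn ↦ ?_⟩
  rw [cast_absEval]
  exact hP n (by exact_mod_cast Nat.one_le_iff_ne_zero.mpr hn)

theorem exists_pow_natDegree_le_absEval (hP : ∀ n : ℕ, n ≠ 0 → absEval P n ≠ 0) :
    ∃ C : ℝ, 0 < C ∧ ∀ n : ℕ, n ≠ 0 → (n : ℝ) ^ P.natDegree ≤ C * absEval P n := by
  have hP0 : P ≠ 0 := by
    rintro rfl
    exact hP 1 one_ne_zero (by simp [absEval])
  have hinj : Function.Injective (Int.castRingHom ℝ) := Int.cast_injective
  have hlim : Tendsto (fun n : ℕ ↦ (absEval P n : ℝ) / (n : ℝ) ^ P.natDegree) atTop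
      (𝓝 |(P.leadingCoeff : ℝ)|) := by
    have hdeg : (P.map (Int.castRingHom ℝ)).degree = (X ^ P.natDegree : ℝ[X]).degree := by
      rw [degree_map_eq_of_injective hinj, degree_X_pow, degree_eq_natDegree hP0]
    have h := ((div_tendsto_atTop_leadingCoeff_div_of_degree_eq _ _ hdeg).comp
      tendsto_natCast_atTop_atTop).abs
    simp only [leadingCoeff_map_of_injective hinj, leadingCoeff_X_pow, div_one] at h
    refine h.congr fun n ↦ ?_
    simp [cast_absEval, abs_div]
  obtain ⟨C, hC⟩ := (hlim.inv₀ (by simpa using hP0)).bddAbove_range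
  refine ⟨max C 1, by positivity, fun n hn ↦ ?_⟩
  have hpos : (0 : ℝ) < absEval P n := by exact_mod_cast Nat.pos_of_ne_zero (hP n hn)
  have hle : ((absEval P n : ℝ) / (n : ℝ) ^ P.natDegree)⁻¹ ≤ C := hC ⟨n, rfl⟩
  rw [inv_div, div_le_iff₀ hpos] at hle
  exact hle.trans (by gcongr; exact le_max_left C 1)

theorem exists_pow_card_primeFactors_absEval_le (P : ℤ[X]) (K : ℕ) {ε : ℝ} (hε : 0 < ε) :
    ∃ C : ℝ, 0 < C ∧ ∀ n N : ℕ, n ≠ 0 → n ≤ N → absEval P n ≠ 0 →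
      (K : ℝ) ^ #(absEval P n).primeFactors ≤ C * (N : ℝ) ^ ε := by
  set m := P.natDegree + 1
  have hm : (0 : ℝ) < m := by positivity
  obtain ⟨C₁, hC₁, hP⟩ := exists_absEval_le P (Nat.le_succ P.natDegree)
  obtain ⟨C₂, hC₂, hK⟩ := exists_pow_card_primeFactors_le K (div_pos hε hm)
  refine ⟨C₂ * C₁ ^ (ε / m), by positivity, fun n N hn hnN hPn ↦ ?_⟩
  calc (K : ℝ) ^ #(absEval P n).primeFactors ≤ C₂ * (absEval P n : ℝ) ^ (ε / m) := hK _ hPn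
    _ ≤ C₂ * (C₁ * (N : ℝ) ^ m) ^ (ε / m) := by
        gcongr
        exact (hP n hn).trans (by gcongr)
    _ = C₂ * C₁ ^ (ε / m) * (N : ℝ) ^ ε := by
        rw [Real.mul_rpow hC₁.le (by positivity), ← Real.rpow_natCast,
          ← Real.rpow_mul (by positivity), mul_div_cancel₀ _ hm.ne', mul_assoc]

theorem card_le_natDegree_of_eval_eq_zero (hP : P ≠ 0) {S : Finset ℕ}
    (hS : ∀ n ∈ S, P.eval (n : ℤ) = 0) : #S ≤ P.natDegree :=
  calc #S ≤ #P.roots.toFinset := by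
        refine card_le_card_of_injOn (fun n : ℕ ↦ (n : ℤ)) (fun n hn ↦ ?_)
          Nat.cast_injective.injOn
        simpa only [mem_coe, Multiset.mem_toFinset, mem_roots hP, IsRoot] using hS n hn
    _ ≤ P.natDegree := (Multiset.toFinset_card_le _).trans (card_roots' _)

theorem card_le_natDegree_of_eval_eq (hP : P.natDegree ≠ 0) {v : ℤ} {S : Finset ℕ}
    (hS : ∀ n ∈ S, P.eval (n : ℤ) = v) : #S ≤ P.natDegree := by
  have hne : P - C v ≠ 0 := by
    intro h
    rw [sub_eq_zero.mp h] at hP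
    exact hP (natDegree_C v)
  rw [← natDegree_sub_C (a := v)]
  exact card_le_natDegree_of_eval_eq_zero hne fun n hn ↦ by simp [hS n hn]

/-- The polynomials to which the counting arguments apply: degree at least two, no repeated
complex roots, and values at least one on the positive integers. -/
structure PositiveSeparable (P : ℤ[X]) : Prop where
  two_le_natDegree : 2 ≤ P.natDegree
  separable : (P.map (Int.castRingHom ℚ)).Separable
  one_le_eval : ∀ n : ℕ, 0 < n → 1 ≤ P.eval (n : ℤ)

namespace PositiveSeparable

theorem natDegree_ne_zero (h : PositiveSeparable P) : P.natDegree ≠ 0 :=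
  (zero_lt_two.trans_le h.two_le_natDegree).ne'

theorem natCast_absEval (h : PositiveSeparable P) {n : ℕ} (hn : n ≠ 0) :
    (absEval P n : ℤ) = P.eval (n : ℤ) :=
  Int.natAbs_of_nonneg (zero_le_one.trans (h.one_le_eval n (Nat.pos_of_ne_zero hn)))

theorem absEval_ne_zero (h : PositiveSeparable P) {n : ℕ} (hn : n ≠ 0) : absEval P n ≠ 0 :=
  Int.natAbs_ne_zero.mpr (zero_lt_one.trans_le (h.one_le_eval n (Nat.pos_of_ne_zero hn))).ne'

theorem cast_absEval_eq_eval (h : PositiveSeparable P) {n : ℕ} (hn : n ≠ 0) :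
    (absEval P n : ℝ) = (P.map (Int.castRingHom ℝ)).eval (n : ℝ) := by
  rw [← Int.cast_natCast, h.natCast_absEval hn, eval_map, eval₂_at_natCast]
  simp

theorem leadingCoeff_pos (h : PositiveSeparable P) : 0 < P.leadingCoeff := by
  by_contra! hlc
  have hinj : Function.Injective (Int.castRingHom ℝ) := Int.cast_injective
  have hdeg : 0 < (P.map (Int.castRingHom ℝ)).degree := by
    rw [degree_map_eq_of_injective hinj, ← natDegree_pos_iff_degree_pos]
    exact Nat.pos_of_ne_zero h.natDegree_ne_zero
  have hlim := (tendsto_atBot_of_leadingCoeff_nonpos _ hdeg (by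
    rw [leadingCoeff_map_of_injective hinj, eq_intCast]
    exact_mod_cast hlc)).comp tendsto_natCast_atTop_atTop
  obtain ⟨n, hneg, hn⟩ := ((hlim.eventually_lt_atBot 0).and (eventually_ne_atTop 0)).exists
  exact hneg.not_ge ((Nat.cast_nonneg (absEval P n)).trans_eq (h.cast_absEval_eq_eval hn))

theorem card_le_natDegree_of_absEval_eq (h : PositiveSeparable P) {v : ℕ} {S : Finset ℕ}
    (hS : ∀ n ∈ S, n ≠ 0 ∧ absEval P n = v) : #S ≤ P.natDegree :=
  card_le_natDegree_of_eval_eq h.natDegree_ne_zero (v := v) fun n hn ↦ by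
    rw [← h.natCast_absEval (hS n hn).1, (hS n hn).2]

end PositiveSeparable

end Growth

/-! ### Detecting squarefree integers by truncated Möbius sums -/

section MoebiusSum

open Finset ArithmeticFunction

theorem dvd_of_sq_dvd_sq_mul_squarefree {d b a : ℕ} (ha : Squarefree a) (h : d ^ 2 ∣ b ^ 2 * a) :
    d ∣ b := by
  rcases eq_or_ne d 0 with rfl | hd
  · have : b = 0 := by simpa [ha.ne_zero] using h
    exact this ▸ dvd_rfl
  obtain ⟨g, d', b', hg, hcop, rfl, rfl⟩ := Nat.exists_coprime' (m := d) (n := b)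
    (Nat.gcd_pos_of_pos_left _ (Nat.pos_of_ne_zero hd))
  have hdvd : d' ^ 2 ∣ b' ^ 2 * a :=
    Nat.dvd_of_mul_dvd_mul_right (pow_pos hg 2) (by convert h using 1 <;> ring)
  have hunit : IsUnit d' :=
    ha d' (pow_two d' ▸ (Nat.Coprime.pow 2 2 hcop).dvd_of_dvd_mul_left hdvd)
  rw [Nat.isUnit_iff.mp hunit, one_mul]
  exact dvd_mul_left g b'

/-- The truncation at `d ≤ Y` of the divisor sum `∑_{d² ∣ m} μ(d)`, whose full value is the
indicator of squarefree `m`. -/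
def truncatedMoebiusSum (Y m : ℕ) : ℤ := ∑ d ∈ Icc 1 Y with d ^ 2 ∣ m, moebius d

theorem abs_truncatedMoebiusSum_le (Y : ℕ) {m : ℕ} (hm : m ≠ 0) :
    |truncatedMoebiusSum Y m| ≤ 2 ^ #m.primeFactors := by
  calc |truncatedMoebiusSum Y m| ≤ ∑ d ∈ Icc 1 Y with d ^ 2 ∣ m, |moebius d| :=
        abs_sum_le_sum_abs _ _
    _ = ∑ d ∈ (Icc 1 Y).filter (· ^ 2 ∣ m) with Squarefree d, 1 := by
        simp only [abs_moebius, sum_filter]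
    _ ≤ ∑ d ∈ m.divisors with Squarefree d, 1 := by
        refine sum_le_sum_of_subset_of_nonneg (fun d hd ↦ ?_) fun _ _ _ ↦ zero_le_one
        simp only [mem_filter, Nat.mem_divisors] at hd ⊢
        exact ⟨⟨(dvd_pow_self d two_ne_zero).trans hd.1.2, hm⟩, hd.2⟩
    _ = 2 ^ #m.primeFactors := by
        rw [sum_const, card_filter_squarefree_divisors hm]
        simp

theorem truncatedMoebiusSum_eq_ite {Y m : ℕ} (hm : m ≠ 0)
    (hY : ∀ d : ℕ, Squarefree d → d ^ 2 ∣ m → d ≤ Y) :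
    truncatedMoebiusSum Y m = if Squarefree m then 1 else 0 := by
  obtain ⟨a, b, rfl, ha⟩ := Nat.sq_mul_squarefree m
  have hb : b ≠ 0 := by
    rintro rfl
    simp at hm
  have sq_dvd_iff : ∀ d : ℕ, d ^ 2 ∣ b ^ 2 * a ↔ d ∣ b := fun d ↦
    ⟨dvd_of_sq_dvd_sq_mul_squarefree ha, fun h ↦ (pow_dvd_pow_of_dvd h 2).mul_right a⟩
  have squarefree_iff : Squarefree (b ^ 2 * a) ↔ b = 1 := by
    refine ⟨fun h ↦ Nat.isUnit_iff.mp (h b ⟨a, by ring⟩), ?_⟩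
    rintro rfl
    simpa using ha
  calc truncatedMoebiusSum Y (b ^ 2 * a) = ∑ d ∈ b.divisors, moebius d := by
        refine sum_subset (fun d hd ↦ ?_) fun d hd hdY ↦ ?_
        · exact Nat.mem_divisors.mpr ⟨(sq_dvd_iff d).mp (mem_filter.mp hd).2, hb⟩
        · refine moebius_eq_zero_of_not_squarefree fun hsq ↦ hdY (mem_filter.mpr ⟨?_, ?_⟩)
          · exact mem_Icc.mpr ⟨Nat.pos_of_ne_zero hsq.ne_zero,
              hY d hsq ((sq_dvd_iff d).mpr (Nat.dvd_of_mem_divisors hd))⟩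
          · exact (sq_dvd_iff d).mpr (Nat.dvd_of_mem_divisors hd)
    _ = if b = 1 then 1 else 0 := by
        rw [← coe_mul_zeta_apply, moebius_mul_coe_zeta, one_apply]
    _ = if Squarefree (b ^ 2 * a) then 1 else 0 := by simp only [squarefree_iff]

end MoebiusSum

/-! ### The density of squarefree values -/

section Density

open Finset Polynomial ArithmeticFunction Filter Topology

theorem sum_rpow_neg_le_of_lt {s t z : ℝ} (hs : 1 < s) (ht : 0 ≤ t) (hz : 0 < z) {S : Finset ℕ}
    (hS : ∀ d ∈ S, z < (d : ℝ)) :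
    ∑ d ∈ S, (d : ℝ) ^ (-(s + t)) ≤ (∑' d : ℕ, (d : ℝ) ^ (-s)) * z ^ (-t) := by
  have hsum : Summable fun d : ℕ ↦ (d : ℝ) ^ (-s) :=
    Real.summable_nat_rpow.mpr (neg_lt_neg hs)
  calc ∑ d ∈ S, (d : ℝ) ^ (-(s + t)) ≤ ∑ d ∈ S, (d : ℝ) ^ (-s) * z ^ (-t) := by
        refine sum_le_sum fun d hd ↦ ?_
        rw [neg_add, Real.rpow_add (hz.trans (hS d hd))]
        exact mul_le_mul_of_nonneg_left
          (Real.rpow_le_rpow_of_nonpos hz (hS d hd).le (neg_nonpos.mpr ht)) (by positivity)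
    _ = (∑ d ∈ S, (d : ℝ) ^ (-s)) * z ^ (-t) := (sum_mul _ _ _).symm
    _ ≤ (∑' d : ℕ, (d : ℝ) ^ (-s)) * z ^ (-t) := by
        gcongr
        exact hsum.sum_le_tsum S fun d _ ↦ by positivity

theorem exists_dvd_mem_Ioc_sqrt {y : ℝ} (hy : 1 ≤ y) {d : ℕ} (hd : √y < d)
    (hp : ∀ p : ℕ, p.Prime → p ∣ d → (p : ℝ) ≤ y) : ∃ e : ℕ, e ∣ d ∧ √y < e ∧ (e : ℝ) ≤ y := by
  induction d using Nat.strong_induction_on with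
  | _ d ih =>
    rcases le_or_gt (d : ℝ) y with hdy | hdy
    · exact ⟨d, dvd_rfl, hd, hdy⟩
    have hd1 : d ≠ 1 := by
      rintro rfl
      exact absurd hdy (by simpa using hy)
    obtain ⟨q, hq, e, rfl⟩ := Nat.exists_prime_and_dvd hd1
    rcases lt_or_ge √y q with hyq | hqy
    · exact ⟨q, dvd_mul_right q e, hyq, hp q hq (dvd_mul_right q e)⟩
    have hye : √y < e := by
      by_contra! hey
      have : (q : ℝ) * e ≤ √y * √y := by gcongr
      rw [Real.mul_self_sqrt (zero_le_one.trans hy)] at this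
      push_cast at hdy
      linarith
    have he : 0 < e := by exact_mod_cast (Real.sqrt_nonneg y).trans_lt hye
    obtain ⟨e', he', hlt, hle⟩ := ih e (lt_mul_of_one_lt_left he hq.one_lt) hye
      fun p hpp hpe ↦ hp p hpp (hpe.mul_left q)
    exact ⟨e', he'.mul_left q, hlt, hle⟩

theorem exists_prime_or_exists_mem_Ioc_of_sq_dvd {y : ℝ} (hy : 1 ≤ y) {d m : ℕ}
    (hsq : Squarefree d) (hyd : y < d) (hdvd : d ^ 2 ∣ m) :
    (∃ p : ℕ, p.Prime ∧ y < p ∧ p ^ 2 ∣ m) ∨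
      ∃ e : ℕ, Squarefree e ∧ √y < e ∧ (e : ℝ) ≤ y ∧ e ^ 2 ∣ m := by
  refine or_iff_not_imp_left.mpr fun hp ↦ ?_
  push Not at hp
  have hlt : √y < d := (Real.sqrt_le_iff.mpr ⟨by linarith, by nlinarith⟩).trans_lt hyd
  obtain ⟨e, hed, hye, hey⟩ := exists_dvd_mem_Ioc_sqrt hy hlt fun p hpp hpd ↦
    not_lt.mp fun h ↦ hp p hpp h ((pow_dvd_pow_of_dvd hpd 2).trans hdvd)
  exact ⟨e, hsq.squarefree_of_dvd hed, hye, hey, (pow_dvd_pow_of_dvd hed 2).trans hdvd⟩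

variable {P : ℤ[X]}

theorem exists_rootCount_sq_div_sq_le (hsep : (P.map (Int.castRingHom ℚ)).Separable) {ε : ℝ}
    (hε : 0 < ε) : ∃ C : ℝ, 0 < C ∧ ∀ g : ℕ, Squarefree g →
      (rootCount P (g ^ 2) : ℝ) / (g : ℝ) ^ 2 ≤ C * (g : ℝ) ^ (ε - 2) := by
  obtain ⟨C, hC, hρ⟩ := exists_rootCount_le_rpow hsep hε
  refine ⟨C, hC, fun g hg ↦ ?_⟩
  have hg0 : (0 : ℝ) < g := by exact_mod_cast Nat.pos_of_ne_zero hg.ne_zero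
  rw [Real.rpow_sub hg0, Real.rpow_two, ← mul_div_assoc]
  gcongr
  exact (hρ g hg).2

/-- The `n`-th term `μ(n) ρ_P(n²) / n²` of the series for the density of squarefree values. -/
noncomputable def densityTerm (P : ℤ[X]) (n : ℕ) : ℝ :=
  moebius n * (rootCount P (n ^ 2) / (n : ℝ) ^ 2)

theorem densityTerm_zero (P : ℤ[X]) : densityTerm P 0 = 0 := by
  simp [densityTerm]

theorem densityTerm_one (P : ℤ[X]) : densityTerm P 1 = 1 := by
  simp [densityTerm, rootCount_one]

theorem densityTerm_prime (P : ℤ[X]) {p : ℕ} (hp : p.Prime) :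
    densityTerm P p = -(rootCount P (p ^ 2) / (p : ℝ) ^ 2) := by
  simp [densityTerm, moebius_apply_prime hp]

theorem densityTerm_of_not_squarefree (P : ℤ[X]) {n : ℕ} (hn : ¬ Squarefree n) :
    densityTerm P n = 0 := by
  simp [densityTerm, moebius_eq_zero_of_not_squarefree hn]

theorem densityTerm_mul_of_coprime (P : ℤ[X]) {m n : ℕ} (hmn : Nat.Coprime m n) :
    densityTerm P (m * n) = densityTerm P m * densityTerm P n := by
  rw [densityTerm, isMultiplicative_moebius.map_mul_of_coprime hmn, mul_pow,
    rootCount_mul_of_coprime P (hmn.pow 2 2)]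
  push_cast [densityTerm]
  rw [mul_pow, mul_div_mul_comm]
  ring

theorem exists_abs_densityTerm_le (hsep : (P.map (Int.castRingHom ℚ)).Separable) {ε : ℝ}
    (hε : 0 < ε) : ∃ C : ℝ, 0 < C ∧ ∀ n : ℕ, |densityTerm P n| ≤ C * (n : ℝ) ^ (ε - 2) := by
  obtain ⟨C, hC, hρ⟩ := exists_rootCount_sq_div_sq_le hsep hε
  refine ⟨C, hC, fun n ↦ ?_⟩
  by_cases hn : Squarefree n
  · have hμ : |(moebius n : ℝ)| = 1 := by exact_mod_cast abs_moebius_eq_one_of_squarefree hn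
    rw [densityTerm, abs_mul, hμ, one_mul, abs_of_nonneg (by positivity)]
    exact hρ n hn
  · rw [densityTerm_of_not_squarefree P hn, abs_zero]
    positivity

theorem summable_norm_densityTerm (hsep : (P.map (Int.castRingHom ℚ)).Separable) :
    Summable fun n ↦ ‖densityTerm P n‖ := by
  obtain ⟨C, -, hC⟩ := exists_abs_densityTerm_le hsep one_half_pos
  exact ((Real.summable_nat_rpow.mpr (by norm_num)).mul_left C).of_nonneg_of_le
    (fun _ ↦ norm_nonneg _) hC

/-- The density `κ_P = ∑ μ(n) ρ_P(n²) / n²` of the integers `n` with `P(n)` squarefree. -/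
noncomputable def squarefreeDensity (P : ℤ[X]) : ℝ := ∑' n, densityTerm P n

theorem hasProd_squarefreeDensity (hsep : (P.map (Int.castRingHom ℚ)).Separable) :
    HasProd (fun p : Nat.Primes ↦ 1 + densityTerm P p) (squarefreeDensity P) := by
  have euler_factor : ∀ p : Nat.Primes,
      ∑' e, densityTerm P ((p : ℕ) ^ e) = 1 + densityTerm P p := by
    intro p
    rw [tsum_eq_sum (s := range 2)]
    · simp [sum_range_succ, densityTerm_one]
    · intro e he
      refine densityTerm_of_not_squarefree P fun hsq ↦ ?_
      rw [mem_range] at he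
      rw [Nat.squarefree_pow_iff p.prop.ne_one (by lia)] at hsq
      lia
  have hprod := EulerProduct.eulerProduct_hasProd (densityTerm_one P)
    (densityTerm_mul_of_coprime P) (summable_norm_densityTerm hsep) (densityTerm_zero P)
  simp only [euler_factor] at hprod
  exact hprod

theorem squarefreeDensity_pos (hsep : (P.map (Int.castRingHom ℚ)).Separable)
    (hadm : ∀ p : ℕ, p.Prime → ∃ n : ℕ, ¬ p ^ 2 ∣ absEval P n) : 0 < squarefreeDensity P := by
  have factor_pos : ∀ p : Nat.Primes, 0 < 1 + densityTerm P p := by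
    intro p
    have hp : 0 < (p : ℕ) ^ 2 := pow_pos p.prop.pos 2
    have hlt : rootCount P ((p : ℕ) ^ 2) < (p : ℕ) ^ 2 := by
      refine (rootCount_le P _).lt_of_ne fun h ↦ ?_
      obtain ⟨n, hn⟩ := hadm p p.prop
      exact hn ((rootCount_eq_self_iff hp).mp h n)
    have : (rootCount P ((p : ℕ) ^ 2) : ℝ) / ((p : ℕ) : ℝ) ^ 2 < 1 := by
      rw [div_lt_one (by exact_mod_cast hp)]
      exact_mod_cast hlt
    rw [densityTerm_prime P p.prop]
    linarith
  have hprod := hasProd_squarefreeDensity hsep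
  refine lt_of_le_of_ne (ge_of_tendsto' hprod fun S ↦ prod_nonneg fun p _ ↦ (factor_pos p).le) ?_
  rw [← hprod.tprod_eq]
  exact (tprod_one_add_ne_zero_of_summable (fun p ↦ (factor_pos p).ne')
    ((summable_norm_densityTerm hsep).comp_injective Subtype.coe_injective)).symm

theorem exists_abs_squarefreeDensity_sub_sum_le
    (hsep : (P.map (Int.castRingHom ℚ)).Separable) : ∃ C : ℝ, 0 < C ∧ ∀ y : ℝ, 0 < y →
      |squarefreeDensity P - ∑ d ∈ Icc 1 ⌊y⌋₊, densityTerm P d| ≤ C * y ^ (-(9 / 10) : ℝ) := by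
  obtain ⟨C, hC, hterm⟩ := exists_abs_densityTerm_le hsep (ε := 1 / 100) (by norm_num)
  set Z : ℝ := ∑' d : ℕ, (d : ℝ) ^ (-(109 / 100) : ℝ)
  have : 0 ≤ Z := tsum_nonneg fun d ↦ by positivity
  refine ⟨C * (Z + 1), by positivity, fun y hy ↦ ?_⟩
  have hlim := ((summable_norm_densityTerm hsep).of_norm.hasSum.sub_const
    (∑ d ∈ Icc 1 ⌊y⌋₊, densityTerm P d)).abs
  refine le_of_tendsto hlim ?_
  filter_upwards [eventually_ge_atTop (Icc 1 ⌊y⌋₊)] with T hT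
  have large : ∀ d ∈ (T \ Icc 1 ⌊y⌋₊).erase 0, y < (d : ℝ) := by
    intro d hd
    simp only [mem_erase, Finset.mem_sdiff, mem_Icc] at hd
    exact Nat.lt_of_floor_lt (by lia)
  calc |∑ d ∈ T, densityTerm P d - ∑ d ∈ Icc 1 ⌊y⌋₊, densityTerm P d|
      = |∑ d ∈ (T \ Icc 1 ⌊y⌋₊).erase 0, densityTerm P d| := by
        rw [← sum_sdiff hT, add_sub_cancel_right, sum_erase _ (densityTerm_zero P)]
    _ ≤ ∑ d ∈ (T \ Icc 1 ⌊y⌋₊).erase 0, C * (d : ℝ) ^ (-(109 / 100 + 9 / 10) : ℝ) := by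
        rw [show (-(109 / 100 + 9 / 10) : ℝ) = 1 / 100 - 2 by norm_num]
        exact (abs_sum_le_sum_abs _ _).trans (sum_le_sum fun d _ ↦ hterm d)
    _ = C * ∑ d ∈ (T \ Icc 1 ⌊y⌋₊).erase 0, (d : ℝ) ^ (-(109 / 100 + 9 / 10) : ℝ) :=
        (mul_sum _ _ _).symm
    _ ≤ C * (Z * y ^ (-(9 / 10) : ℝ)) := by
        gcongr
        exact sum_rpow_neg_le_of_lt (by norm_num) (by norm_num) hy large
    _ ≤ C * (Z + 1) * y ^ (-(9 / 10) : ℝ) := by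
        rw [← mul_assoc]
        gcongr
        linarith

theorem exists_sum_rootCount_sq_le (hsep : (P.map (Int.castRingHom ℚ)).Separable) {ε : ℝ}
    (hε : 0 < ε) : ∃ C : ℝ, 0 < C ∧ ∀ y : ℝ, 0 < y →
      ∑ d ∈ Icc 1 ⌊y⌋₊ with Squarefree d, (rootCount P (d ^ 2) : ℝ) ≤ C * y ^ (1 + ε) := by
  obtain ⟨C, hC, hρ⟩ := exists_rootCount_le_rpow hsep hε
  refine ⟨C, hC, fun y hy ↦ ?_⟩
  calc ∑ d ∈ Icc 1 ⌊y⌋₊ with Squarefree d, (rootCount P (d ^ 2) : ℝ)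
      ≤ ∑ d ∈ Icc 1 ⌊y⌋₊ with Squarefree d, C * y ^ ε := by
        refine sum_le_sum fun d hd ↦ ?_
        simp only [mem_filter, mem_Icc] at hd
        have hdy : (d : ℝ) ≤ y := (Nat.le_floor_iff hy.le).mp hd.1.2
        exact (hρ d hd.2).2.trans (by gcongr)
    _ = #{d ∈ Icc 1 ⌊y⌋₊ | Squarefree d} * (C * y ^ ε) := by rw [sum_const, nsmul_eq_mul]
    _ ≤ y * (C * y ^ ε) := by
        gcongr
        refine le_trans ?_ (Nat.floor_le hy.le)
        exact_mod_cast (card_filter_le _ _).trans_eq (Nat.card_Icc 1 _)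
    _ = C * y ^ (1 + ε) := by
        rw [Real.rpow_add hy, Real.rpow_one]
        ring

open Classical in
/-- At most `O(N^{7/10})` of the integers `n ≤ N` have `P(n)` divisible by the square of a prime
larger than `N^{7/10}`. This is the arithmetic input that limits the degrees of the irreducible
factors of `P`. -/
def FewLargePrimeSquares (P : ℤ[X]) : Prop :=
  ∃ C : ℝ, 0 < C ∧ ∀ N : ℕ, 1 ≤ N →
    (#{n ∈ Icc 1 N | ∃ p : ℕ, p.Prime ∧ (N : ℝ) ^ (7 / 10 : ℝ) < p ∧ p ^ 2 ∣ absEval P n} : ℝ) ≤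
      C * (N : ℝ) ^ (7 / 10 : ℝ)

theorem exists_sum_card_sq_dvd_absEval_le (hsep : (P.map (Int.castRingHom ℚ)).Separable) :
    ∃ C : ℝ, 0 < C ∧ ∀ (N : ℕ) (y z : ℝ), 0 < y → 0 < z → ∀ D : Finset ℕ,
      (∀ d ∈ D, Squarefree d ∧ z < d ∧ (d : ℝ) ≤ y) →
      ∑ d ∈ D, (#{n ∈ Icc 1 N | d ^ 2 ∣ absEval P n} : ℝ) ≤
        C * (N * z ^ (-(9 / 10) : ℝ) + y ^ (1 + 1 / 100 : ℝ)) := by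
  obtain ⟨C₁, hC₁, hsum⟩ := exists_sum_rootCount_sq_le hsep (ε := 1 / 100) (by norm_num)
  obtain ⟨C₂, hC₂, hdiv⟩ := exists_rootCount_sq_div_sq_le hsep (ε := 1 / 100) (by norm_num)
  set Z : ℝ := ∑' d : ℕ, (d : ℝ) ^ (-(109 / 100) : ℝ)
  have : 0 ≤ Z := tsum_nonneg fun d ↦ by positivity
  refine ⟨C₂ * Z + C₁, by positivity, fun N y z hy hz D hD ↦ ?_⟩
  have hDsub : D ⊆ {d ∈ Icc 1 ⌊y⌋₊ | Squarefree d} := fun d hd ↦ by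
    obtain ⟨hsq, -, hdy⟩ := hD d hd
    exact mem_filter.mpr
      ⟨mem_Icc.mpr ⟨Nat.pos_of_ne_zero hsq.ne_zero, Nat.le_floor hdy⟩, hsq⟩
  calc ∑ d ∈ D, (#{n ∈ Icc 1 N | d ^ 2 ∣ absEval P n} : ℝ)
      ≤ ∑ d ∈ D, (N * (C₂ * (d : ℝ) ^ (-(109 / 100 + 9 / 10) : ℝ)) + rootCount P (d ^ 2)) := by
        refine sum_le_sum fun d hd ↦ ?_
        have hsq := (hD d hd).1
        have hρ := hdiv d hsq
        rw [show (1 / 100 : ℝ) - 2 = -(109 / 100 + 9 / 10) by norm_num] at hρ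
        calc (#{n ∈ Icc 1 N | d ^ 2 ∣ absEval P n} : ℝ)
            ≤ rootCount P (d ^ 2) * (N / (d ^ 2 : ℕ) + 1) :=
              card_dvd_absEval_le P N (pow_pos (Nat.pos_of_ne_zero hsq.ne_zero) 2)
          _ = N * (rootCount P (d ^ 2) / (d : ℝ) ^ 2) + rootCount P (d ^ 2) := by push_cast; ring
          _ ≤ _ := by gcongr
    _ = N * (C₂ * ∑ d ∈ D, (d : ℝ) ^ (-(109 / 100 + 9 / 10) : ℝ)) +
          ∑ d ∈ D, (rootCount P (d ^ 2) : ℝ) := by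
        rw [sum_add_distrib, ← mul_sum, ← mul_sum]
    _ ≤ N * (C₂ * (Z * z ^ (-(9 / 10) : ℝ))) + C₁ * y ^ (1 + 1 / 100 : ℝ) := by
        gcongr
        · exact sum_rpow_neg_le_of_lt (by norm_num) (by norm_num) hz fun d hd ↦ (hD d hd).2.1
        · exact (sum_le_sum_of_subset_of_nonneg hDsub fun _ _ _ ↦ by positivity).trans (hsum y hy)
    _ ≤ (C₂ * Z + C₁) * (N * z ^ (-(9 / 10) : ℝ) + y ^ (1 + 1 / 100 : ℝ)) := by
        have h₁ : 0 ≤ C₁ * (N * z ^ (-(9 / 10) : ℝ)) := by positivity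
        have h₂ : 0 ≤ C₂ * Z * y ^ (1 + 1 / 100 : ℝ) := by positivity
        linarith

open Classical in
theorem filter_large_sq_dvd_subset (f : ℕ → ℕ) (N : ℕ) {y : ℝ} (hy : 1 ≤ y) :
    {n ∈ Icc 1 N | ∃ d : ℕ, Squarefree d ∧ d ^ 2 ∣ f n ∧ ⌊y⌋₊ < d} ⊆
      {n ∈ Icc 1 N | ∃ p : ℕ, p.Prime ∧ y < p ∧ p ^ 2 ∣ f n} ∪
        ({d ∈ Icc 1 ⌊y⌋₊ | Squarefree d ∧ √y < (d : ℝ)} : Finset ℕ).biUnion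
          fun d ↦ {n ∈ Icc 1 N | d ^ 2 ∣ f n} := by
  intro n hn
  obtain ⟨hnN, d, hsq, hdvd, hyd⟩ := mem_filter.mp hn
  rcases exists_prime_or_exists_mem_Ioc_of_sq_dvd hy hsq (Nat.lt_of_floor_lt hyd) hdvd with
    hp | ⟨e, hesq, hye, hey, hedvd⟩
  · exact mem_union_left _ (mem_filter.mpr ⟨hnN, hp⟩)
  · exact mem_union_right _ (mem_biUnion.mpr ⟨e, mem_filter.mpr ⟨mem_Icc.mpr
      ⟨Nat.pos_of_ne_zero hesq.ne_zero, Nat.le_floor hey⟩, hesq, hye⟩,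
      mem_filter.mpr ⟨hnN, hedvd⟩⟩)

open Classical in
theorem FewLargePrimeSquares.exists_card_large_sq_dvd_le (hP : FewLargePrimeSquares P)
    (hsep : (P.map (Int.castRingHom ℚ)).Separable) : ∃ C : ℝ, 0 < C ∧ ∀ N : ℕ, 1 ≤ N →
      (#{n ∈ Icc 1 N | ∃ d : ℕ, Squarefree d ∧ d ^ 2 ∣ absEval P n ∧
        ⌊(N : ℝ) ^ (7 / 10 : ℝ)⌋₊ < d} : ℝ) ≤ C * (N : ℝ) ^ (71 / 100 : ℝ) := by
  obtain ⟨C₁, hC₁, hprime⟩ := hP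
  obtain ⟨C₂, hC₂, hmid⟩ := exists_sum_card_sq_dvd_absEval_le hsep
  refine ⟨C₁ + C₂ * 2, by positivity, fun N hN ↦ ?_⟩
  have one_le_N : (1 : ℝ) ≤ N := by exact_mod_cast hN
  have N_pos : (0 : ℝ) < N := one_pos.trans_le one_le_N
  specialize hprime N hN
  set y := (N : ℝ) ^ (7 / 10 : ℝ) with hy
  have one_le_y : 1 ≤ y := Real.one_le_rpow one_le_N (by norm_num)
  have y_pos : 0 < y := one_pos.trans_le one_le_y
  set D : Finset ℕ := {d ∈ Icc 1 ⌊y⌋₊ | Squarefree d ∧ √y < (d : ℝ)}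
  have hD : ∀ d ∈ D, Squarefree d ∧ √y < d ∧ (d : ℝ) ≤ y := fun d hd ↦ by
    obtain ⟨hd, hsq, hlt⟩ := mem_filter.mp hd
    exact ⟨hsq, hlt, (Nat.le_floor_iff y_pos.le).mp (mem_Icc.mp hd).2⟩
  have exponents : y ≤ (N : ℝ) ^ (71 / 100 : ℝ) ∧
      N * √y ^ (-(9 / 10) : ℝ) ≤ (N : ℝ) ^ (71 / 100 : ℝ) ∧
      y ^ (1 + 1 / 100 : ℝ) ≤ (N : ℝ) ^ (71 / 100 : ℝ) := by
    rw [Real.sqrt_eq_rpow, hy, ← Real.rpow_mul N_pos.le, ← Real.rpow_mul N_pos.le,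
      ← Real.rpow_mul N_pos.le, ← Real.rpow_one_add' N_pos.le (by norm_num)]
    refine ⟨?_, ?_, ?_⟩ <;> exact Real.rpow_le_rpow_of_exponent_le one_le_N (by norm_num)
  calc _ ≤ (#{n ∈ Icc 1 N | ∃ p : ℕ, p.Prime ∧ y < p ∧ p ^ 2 ∣ absEval P n} : ℝ) +
        ∑ d ∈ D, (#{n ∈ Icc 1 N | d ^ 2 ∣ absEval P n} : ℝ) := by
        exact_mod_cast (card_le_card (filter_large_sq_dvd_subset _ N one_le_y)).trans
          ((card_union_le _ _).trans (by gcongr; exact card_biUnion_le))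
    _ ≤ C₁ * y + C₂ * (N * √y ^ (-(9 / 10) : ℝ) + y ^ (1 + 1 / 100 : ℝ)) :=
        add_le_add hprime (hmid N y _ y_pos (Real.sqrt_pos.mpr y_pos) D hD)
    _ ≤ C₁ * (N : ℝ) ^ (71 / 100 : ℝ) +
          C₂ * ((N : ℝ) ^ (71 / 100 : ℝ) + (N : ℝ) ^ (71 / 100 : ℝ)) := by
        gcongr
        exacts [exponents.1, exponents.2.1, exponents.2.2]
    _ = (C₁ + C₂ * 2) * (N : ℝ) ^ (71 / 100 : ℝ) := by ring

theorem abs_sum_truncatedMoebiusSum_sub_le (P : ℤ[X]) (N Y : ℕ) :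
    |(∑ n ∈ Icc 1 N, (truncatedMoebiusSum Y (absEval P n) : ℝ)) -
        N * ∑ d ∈ Icc 1 Y, densityTerm P d| ≤
      ∑ d ∈ Icc 1 Y with Squarefree d, (rootCount P (d ^ 2) : ℝ) := by
  have swap : ∑ n ∈ Icc 1 N, (truncatedMoebiusSum Y (absEval P n) : ℝ) =
      ∑ d ∈ Icc 1 Y, (moebius d : ℝ) * #{n ∈ Icc 1 N | d ^ 2 ∣ absEval P n} := by
    simp only [truncatedMoebiusSum, Int.cast_sum, sum_filter]
    rw [sum_comm]
    refine sum_congr rfl fun d _ ↦ ?_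
    simp only [Int.cast_ite, Int.cast_zero]
    rw [← sum_filter, sum_const, nsmul_eq_mul, mul_comm]
  rw [swap, mul_sum, ← sum_sub_distrib, sum_filter]
  refine (abs_sum_le_sum_abs _ _).trans (sum_le_sum fun d hd ↦ ?_)
  split_ifs with hsq
  · have hμ : |(moebius d : ℝ)| = 1 := by exact_mod_cast abs_moebius_eq_one_of_squarefree hsq
    have hcount := abs_card_dvd_absEval_sub_le P N (pow_pos (mem_Icc.mp hd).1 2)
    rw [densityTerm, mul_left_comm, ← mul_sub, abs_mul, hμ, one_mul]
    exact_mod_cast hcount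
  · simp [densityTerm, moebius_eq_zero_of_not_squarefree hsq]

open Classical in
theorem abs_card_squarefree_sub_sum_truncatedMoebiusSum_le {f : ℕ → ℕ} {N Y : ℕ} {B : ℝ}
    (hB : ∀ n ∈ Icc 1 N, f n ≠ 0 ∧ (2 : ℝ) ^ #(f n).primeFactors ≤ B) :
    |(#{n ∈ Icc 1 N | Squarefree (f n)} : ℝ) -
        ∑ n ∈ Icc 1 N, (truncatedMoebiusSum Y (f n) : ℝ)| ≤
      #{n ∈ Icc 1 N | ∃ d : ℕ, Squarefree d ∧ d ^ 2 ∣ f n ∧ Y < d} * (1 + B) := by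
  rw [card_filter, Nat.cast_sum, ← sum_sub_distrib, ← nsmul_eq_mul, ← sum_const, sum_filter]
  refine (abs_sum_le_sum_abs _ _).trans (sum_le_sum fun n hn ↦ ?_)
  obtain ⟨hfn, hBn⟩ := hB n hn
  by_cases hlarge : ∃ d : ℕ, Squarefree d ∧ d ^ 2 ∣ f n ∧ Y < d
  · have hM : |(truncatedMoebiusSum Y (f n) : ℝ)| ≤ B :=
      le_trans (by exact_mod_cast abs_truncatedMoebiusSum_le Y hfn) hBn
    rw [if_pos hlarge]
    refine (abs_sub _ _).trans (add_le_add ?_ hM)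
    split_ifs <;> simp
  · rw [if_neg hlarge,
      truncatedMoebiusSum_eq_ite hfn fun d hsq hd ↦ not_lt.mp fun h ↦ hlarge ⟨d, hsq, hd, h⟩]
    split_ifs <;> simp

theorem exists_abs_sum_truncatedMoebiusSum_sub_le
    (hsep : (P.map (Int.castRingHom ℚ)).Separable) :
    ∃ C : ℝ, 0 < C ∧ ∀ (N : ℕ) (y : ℝ), 0 < y →
      |(∑ n ∈ Icc 1 N, (truncatedMoebiusSum ⌊y⌋₊ (absEval P n) : ℝ)) - squarefreeDensity P * N| ≤
        C * (y ^ (1 + 1 / 100 : ℝ) + N * y ^ (-(9 / 10) : ℝ)) := by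
  obtain ⟨C₁, hC₁, hroot⟩ := exists_sum_rootCount_sq_le hsep (ε := 1 / 100) (by norm_num)
  obtain ⟨C₂, hC₂, htail⟩ := exists_abs_squarefreeDensity_sub_sum_le hsep
  refine ⟨C₁ + C₂, by positivity, fun N y hy ↦ ?_⟩
  have hswap := (abs_sum_truncatedMoebiusSum_sub_le P N ⌊y⌋₊).trans (hroot y hy)
  have hseries : |N * (∑ d ∈ Icc 1 ⌊y⌋₊, densityTerm P d) - squarefreeDensity P * N| ≤
      N * (C₂ * y ^ (-(9 / 10) : ℝ)) := by
    rw [mul_comm _ (N : ℝ), ← mul_sub, abs_mul, Nat.abs_cast, abs_sub_comm]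
    gcongr
    exact htail y hy
  refine ((abs_sub_le _ _ _).trans (add_le_add hswap hseries)).trans ?_
  have h₁ : 0 ≤ C₁ * (N * y ^ (-(9 / 10) : ℝ)) := by positivity
  have h₂ : 0 ≤ C₂ * y ^ (1 + 1 / 100 : ℝ) := by positivity
  linarith

theorem FewLargePrimeSquares.exists_abs_card_squarefree_sub_le (hP : FewLargePrimeSquares P)
    (hsep : (P.map (Int.castRingHom ℚ)).Separable) (hne : ∀ n : ℕ, n ≠ 0 → absEval P n ≠ 0) :
    ∃ C : ℝ, 0 < C ∧ ∀ N : ℕ, 1 ≤ N →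
      |(#{n ∈ Icc 1 N | Squarefree (absEval P n)} : ℝ) - squarefreeDensity P * N| ≤
        C * (N : ℝ) ^ (3 / 4 : ℝ) := by
  obtain ⟨C₁, hC₁, hsum⟩ := exists_abs_sum_truncatedMoebiusSum_sub_le hsep
  obtain ⟨C₂, hC₂, hlarge⟩ := hP.exists_card_large_sq_dvd_le hsep
  obtain ⟨C₃, hC₃, hω⟩ := exists_pow_card_primeFactors_absEval_le P 2 (ε := 1 / 100) (by norm_num)
  refine ⟨C₂ * (1 + C₃) + C₁ * 2, by positivity, fun N hN ↦ ?_⟩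
  have one_le_N : (1 : ℝ) ≤ N := by exact_mod_cast hN
  have N_pos : (0 : ℝ) < N := one_pos.trans_le one_le_N
  have hsieve := abs_card_squarefree_sub_sum_truncatedMoebiusSum_le (f := absEval P) (N := N)
    (Y := ⌊(N : ℝ) ^ (7 / 10 : ℝ)⌋₊) (B := C₃ * (N : ℝ) ^ (1 / 100 : ℝ)) fun n hn ↦ by
      have hn' := mem_Icc.mp hn
      have hn0 := hne n (by lia)
      exact ⟨hn0, by exact_mod_cast hω n N (by lia) hn'.2 hn0⟩
  have hmain := hsum N ((N : ℝ) ^ (7 / 10 : ℝ)) (by positivity)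
  rw [← Real.rpow_mul N_pos.le, ← Real.rpow_mul N_pos.le,
    ← Real.rpow_one_add' N_pos.le (by norm_num)] at hmain
  have one_le : (1 : ℝ) ≤ (N : ℝ) ^ (1 / 100 : ℝ) := Real.one_le_rpow one_le_N (by norm_num)
  refine (abs_sub_le _ _ _).trans ((add_le_add hsieve hmain).trans ?_)
  rw [add_mul]
  refine add_le_add ?_ ?_
  · calc _ ≤ C₂ * (N : ℝ) ^ (71 / 100 : ℝ) * ((1 + C₃) * (N : ℝ) ^ (1 / 100 : ℝ)) := by
          gcongr
          · exact hlarge N hN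
          · linarith
      _ = C₂ * (1 + C₃) * (N : ℝ) ^ (71 / 100 + 1 / 100 : ℝ) := by
          rw [Real.rpow_add N_pos]
          ring
      _ ≤ C₂ * (1 + C₃) * (N : ℝ) ^ (3 / 4 : ℝ) := by
          gcongr
          norm_num
  · rw [mul_assoc, two_mul]
    gcongr <;> norm_num

end Density

/-! ### Pell equations -/

section Pell

open Finset

theorem lt_two_mul_of_log_floor_eq {x y : ℝ} (hy : 1 ≤ y)
    (hxy : Nat.log 2 ⌊x⌋₊ = Nat.log 2 ⌊y⌋₊) : x < 2 * y := by
  have hx : x < (2 : ℝ) ^ (Nat.log 2 ⌊x⌋₊ + 1) := by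
    exact_mod_cast Nat.lt_of_floor_lt (Nat.lt_pow_succ_log_self one_lt_two ⌊x⌋₊)
  have hy' : (2 : ℝ) ^ Nat.log 2 ⌊y⌋₊ ≤ y := by
    have hpow := Nat.pow_log_le_self 2 (Nat.floor_pos.mpr hy).ne'
    exact_mod_cast (Nat.le_floor_iff (by linarith)).mp hpow
  rw [hxy, pow_succ] at hx
  linarith

theorem exists_nat_log_mul_add_one_le (A : ℕ) {ε : ℝ} (hε : 0 < ε) :
    ∃ C : ℝ, 0 < C ∧ ∀ N : ℕ, 1 ≤ N → (Nat.log 2 (A * N) + 1 : ℝ) ≤ C * (N : ℝ) ^ ε := by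
  refine ⟨(A : ℝ) ^ ε / ε / Real.log 2 + 1, by positivity, fun N hN ↦ ?_⟩
  have one_le_N : (1 : ℝ) ≤ N := by exact_mod_cast hN
  have one_le_rpow : 1 ≤ (N : ℝ) ^ ε := Real.one_le_rpow one_le_N hε.le
  have hlog : (Nat.log 2 (A * N) : ℝ) ≤ (A : ℝ) ^ ε / ε / Real.log 2 * (N : ℝ) ^ ε :=
    calc (Nat.log 2 (A * N) : ℝ) ≤ Real.log (A * N) / Real.log 2 := by
          exact_mod_cast Real.natLog_le_logb (A * N) 2
      _ ≤ (A * N : ℝ) ^ ε / ε / Real.log 2 := by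
          gcongr
          exact Real.log_le_rpow_div (by positivity) hε
      _ = (A : ℝ) ^ ε / ε / Real.log 2 * (N : ℝ) ^ ε := by
          rw [Real.mul_rpow (by positivity) (by positivity)]
          ring
  linarith

variable {M : ℕ} {D : ℤ} {x₁ y₁ x₂ y₂ : ℕ}

/- The quotient of the two solutions in `ℤ[√M]` is integral by the congruences, and has norm `1`;
`u` is its rational part. -/
theorem exists_two_mul_mul_eq_add_sq_of_pell (hD : D ≠ 0)
    (h₁ : (x₁ : ℤ) ^ 2 - M * (y₁ : ℤ) ^ 2 = D) (h₂ : (x₂ : ℤ) ^ 2 - M * (y₂ : ℤ) ^ 2 = D)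
    (hx : x₁ ≡ x₂ [MOD D.natAbs]) (hy : y₁ ≡ y₂ [MOD D.natAbs]) :
    ∃ u : ℤ, 2 * (u : ℝ) * ((x₁ + y₁ * √M) * (x₂ + y₂ * √M)) =
      (x₁ + y₁ * √M) ^ 2 + (x₂ + y₂ * √M) ^ 2 := by
  obtain ⟨u, hu⟩ : D ∣ (x₁ : ℤ) * x₂ - M * y₁ * y₂ := by
    have hdvd := ((Int.natAbs_dvd.mp (Nat.modEq_iff_dvd.mp hx)).mul_left (x₁ : ℤ)).sub
      ((Int.natAbs_dvd.mp (Nat.modEq_iff_dvd.mp hy)).mul_left (M * y₁ : ℤ))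
    rw [show (x₁ : ℤ) * x₂ - M * y₁ * y₂ = x₁ * (x₂ - x₁) - M * y₁ * (y₂ - y₁) + D by
      rw [← h₁]; ring]
    exact hdvd.add dvd_rfl
  have hM : √(M : ℝ) ^ 2 = M := Real.sq_sqrt M.cast_nonneg
  have hu' : (x₁ : ℝ) * x₂ - M * y₁ * y₂ = D * u := by exact_mod_cast hu
  have h₁' : (x₁ : ℝ) ^ 2 - M * (y₁ : ℝ) ^ 2 = D := by exact_mod_cast h₁
  have h₂' : (x₂ : ℝ) ^ 2 - M * (y₂ : ℝ) ^ 2 = D := by exact_mod_cast h₂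
  refine ⟨u, mul_left_cancel₀ (Int.cast_ne_zero.mpr hD : (D : ℝ) ≠ 0) ?_⟩
  calc D * (2 * (u : ℝ) * ((x₁ + y₁ * √M) * (x₂ + y₂ * √M)))
      = 2 * (x₁ * x₂ - √M ^ 2 * y₁ * y₂) * ((x₁ + y₁ * √M) * (x₂ + y₂ * √M)) := by
        rw [hM, hu']; ring
    _ = (x₂ ^ 2 - √M ^ 2 * y₂ ^ 2) * (x₁ + y₁ * √M) ^ 2 +
          (x₁ ^ 2 - √M ^ 2 * y₁ ^ 2) * (x₂ + y₂ * √M) ^ 2 := by ring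
    _ = _ := by rw [hM, h₁', h₂']; ring

theorem eq_of_pell_of_modEq_of_lt_two_mul (hM : 0 < M) (hD : D ≠ 0) (hx₁ : 0 < x₁) (hx₂ : 0 < x₂)
    (h₁ : (x₁ : ℤ) ^ 2 - M * (y₁ : ℤ) ^ 2 = D) (h₂ : (x₂ : ℤ) ^ 2 - M * (y₂ : ℤ) ^ 2 = D)
    (hx : x₁ ≡ x₂ [MOD D.natAbs]) (hy : y₁ ≡ y₂ [MOD D.natAbs])
    (hlt₁ : (x₁ + y₁ * √M : ℝ) < 2 * (x₂ + y₂ * √M))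
    (hlt₂ : (x₂ + y₂ * √M : ℝ) < 2 * (x₁ + y₁ * √M)) : x₁ = x₂ ∧ y₁ = y₂ := by
  obtain ⟨u, hu⟩ := exists_two_mul_mul_eq_add_sq_of_pell hD h₁ h₂ hx hy
  set α₁ : ℝ := x₁ + y₁ * √M with hα₁
  set α₂ : ℝ := x₂ + y₂ * √M with hα₂
  have α₁_pos : 0 < α₁ := by positivity
  have α₂_pos : 0 < α₂ := by positivity
  have hprod := mul_pos α₁_pos α₂_pos
  have u_lt_two : u < 2 := by
    by_contra! h
    have two_le_u : (2 : ℝ) ≤ u := by exact_mod_cast h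
    nlinarith [mul_pos (sub_pos.mpr hlt₁) (sub_pos.mpr hlt₂)]
  have u_pos : 0 < u := by
    have hpos : 0 < (u : ℝ) * (α₁ * α₂) := by linarith [sq_pos_of_pos α₁_pos, sq_pos_of_pos α₂_pos]
    exact_mod_cast pos_of_mul_pos_left hpos hprod.le
  obtain rfl : u = 1 := by lia
  have hα : α₁ = α₂ := by
    have hsq : (α₁ - α₂) ^ 2 = 0 := by
      push_cast at hu
      linear_combination -hu
    exact sub_eq_zero.mp (pow_eq_zero_iff two_ne_zero |>.mp hsq)
  have hsqrt : √(M : ℝ) ^ 2 = M := Real.sq_sqrt M.cast_nonneg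
  have hconj : (x₁ : ℝ) - y₁ * √M = x₂ - y₂ * √M := by
    have h₁₂ : (x₁ : ℝ) ^ 2 - M * (y₁ : ℝ) ^ 2 = x₂ ^ 2 - M * (y₂ : ℝ) ^ 2 := by
      exact_mod_cast h₁.trans h₂.symm
    apply mul_left_cancel₀ α₁_pos.ne'
    rw [← hsqrt] at h₁₂
    linear_combination h₁₂ + (x₂ - y₂ * √M) * (hα₁ - hα₂ - hα) 
  have hxx : (x₁ : ℝ) = x₂ := by linarith
  have hyy : (y₁ : ℝ) = y₂ :=
    mul_right_cancel₀ (Real.sqrt_pos.mpr (Nat.cast_pos.mpr hM)).ne' (by linarith)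
  exact ⟨by exact_mod_cast hxx, by exact_mod_cast hyy⟩

theorem add_mul_sqrt_le_of_pell {Z x y : ℕ} (hD : D ≠ 0) (hxZ : x ≤ Z)
    (h : (x : ℤ) ^ 2 - M * (y : ℤ) ^ 2 = D) : (x + y * √M : ℝ) ≤ 2 * Z + D.natAbs := by
  have hxZ' : (x : ℝ) ≤ Z := by exact_mod_cast hxZ
  have hyM : (y * √M : ℝ) ≤ Z + D.natAbs := by
    refine abs_le_of_sq_le_sq' ?_ (by positivity) |>.2
    have hpell : (x : ℝ) ^ 2 - M * (y : ℝ) ^ 2 = D := by exact_mod_cast h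
    have neg_D_le : -(D : ℝ) ≤ D.natAbs := by
      rw [Nat.cast_natAbs, Int.cast_abs]
      exact neg_le_abs _
    have one_le_D : (1 : ℝ) ≤ D.natAbs := by exact_mod_cast Int.natAbs_pos.mpr hD
    rw [mul_pow, Real.sq_sqrt M.cast_nonneg]
    nlinarith [(Nat.cast_nonneg x : (0 : ℝ) ≤ x)]
  linarith

theorem card_pell_solutions_le (hM : 0 < M) (hD : D ≠ 0) {Z : ℕ} {S : Finset (ℕ × ℕ)}
    (hS : ∀ q ∈ S, 0 < q.1 ∧ q.1 ≤ Z ∧ (q.1 : ℤ) ^ 2 - M * (q.2 : ℤ) ^ 2 = D) :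
    #S ≤ D.natAbs ^ 2 * (Nat.log 2 (2 * Z + D.natAbs) + 1) := by
  set size : ℕ × ℕ → ℝ := fun q ↦ q.1 + q.2 * √M
  have one_le_size : ∀ q ∈ S, 1 ≤ size q := fun q hq ↦ by
    have one_le_fst : (1 : ℝ) ≤ q.1 := by exact_mod_cast (hS q hq).1
    exact le_add_of_le_of_nonneg one_le_fst (by positivity)
  have D_pos : 0 < D.natAbs := Int.natAbs_pos.mpr hD
  calc #S ≤ #(range D.natAbs ×ˢ range D.natAbs ×ˢ
        range (Nat.log 2 (2 * Z + D.natAbs) + 1)) := by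
        apply card_le_card_of_injOn fun q ↦
          (q.1 % D.natAbs, q.2 % D.natAbs, Nat.log 2 ⌊size q⌋₊)
        · intro q hq
          obtain ⟨-, hZ, hpell⟩ := hS q hq
          simp only [coe_product, coe_range, Set.mem_prod, Set.mem_Iio]
          refine ⟨Nat.mod_lt _ D_pos, Nat.mod_lt _ D_pos, Nat.lt_succ_of_le ?_⟩
          refine Nat.log_mono_right (Nat.floor_le_of_le ?_)
          exact_mod_cast add_mul_sqrt_le_of_pell hD hZ hpell
        · intro q hqS r hrS hqr
          obtain ⟨hmod₁, hmod₂, hlog⟩ : _ ∧ _ ∧ _ := by simpa only [Prod.mk.injEq] using hqr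
          obtain ⟨hq₀, -, hq⟩ := hS q hqS
          obtain ⟨hr₀, -, hr⟩ := hS r hrS
          exact Prod.ext_iff.mpr <| eq_of_pell_of_modEq_of_lt_two_mul hM hD hq₀ hr₀ hq hr
            hmod₁ hmod₂ (lt_two_mul_of_log_floor_eq (one_le_size r hrS) hlog)
            (lt_two_mul_of_log_floor_eq (one_le_size q hqS) hlog.symm)
    _ = D.natAbs ^ 2 * (Nat.log 2 (2 * Z + D.natAbs) + 1) := by
        simp only [card_product, card_range]
        ring

end Pell

/-! ### Values divisible by the square of a large prime -/

section LargePrimeSquares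

open Finset Polynomial

variable {P A B : ℤ[X]}

theorem card_quadratic_eq_mul_sq_le {a b c : ℤ} (ha : 0 < a) (hD : discrim a b c ≠ 0)
    {e N : ℕ} (he : 0 < e) {S : Finset ℕ} (hS : ∀ n ∈ S, b.natAbs < n ∧ n ≤ N ∧
      ∃ y : ℕ, a * (n : ℤ) ^ 2 + b * n + c = e * (y : ℤ) ^ 2) :
    #S ≤ (discrim a b c).natAbs ^ 2 *
      (Nat.log 2 (2 * ((2 * a.natAbs + b.natAbs) * N) + (discrim a b c).natAbs) + 1) := by
  choose! b_lt le_N y hy using hS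
  have linear_pos : ∀ n ∈ S, 0 < 2 * a * n + b := fun n hn ↦ by
    nlinarith [abs_lt.mp (Int.natCast_natAbs b ▸ Nat.cast_lt.mpr (b_lt n hn) : |b| < (n : ℤ))]
  rw [← card_image_of_injOn (f := fun n : ℕ ↦ ((2 * a * n + b).natAbs, y n))]
  · refine card_pell_solutions_le (M := 4 * a.natAbs * e) (by positivity) hD ?_
    simp only [mem_image]
    rintro _ ⟨n, hn, rfl⟩
    refine ⟨Int.natAbs_pos.mpr (linear_pos n hn).ne', ?_, ?_⟩
    · calc (2 * a * n + b).natAbs ≤ 2 * a.natAbs * n + b.natAbs * 1 := by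
            simpa [Int.natAbs_mul] using Int.natAbs_add_le (2 * a * n) b
        _ ≤ 2 * a.natAbs * N + b.natAbs * N := by
            gcongr
            · exact le_N n hn
            · have := b_lt n hn
              have := le_N n hn
              lia
        _ = (2 * a.natAbs + b.natAbs) * N := by ring
    · push_cast
      rw [sq_abs, abs_of_pos ha, discrim]
      linear_combination 4 * a * hy n hn
  · intro m hm n hn hmn
    have hlinear : 2 * a * m + b = 2 * a * n + b :=
      (Int.natAbs_inj_of_nonneg_of_nonneg (linear_pos m hm).le (linear_pos n hn).le).mp
        (congrArg Prod.fst hmn)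
    exact_mod_cast mul_left_cancel₀ (by positivity) (add_right_cancel hlinear)

theorem discrim_ne_zero_of_separable (hP : P.natDegree = 2)
    (hsep : (P.map (Int.castRingHom ℚ)).Separable) :
    discrim (P.coeff 2) (P.coeff 1) (P.coeff 0) ≠ 0 := by
  intro hD
  have ha : (P.coeff 2 : ℚ) ≠ 0 := by
    rw [← hP]
    exact_mod_cast leadingCoeff_ne_zero.mpr (ne_zero_of_natDegree_gt (hP ▸ two_pos))
  have hD' : (P.coeff 1 : ℚ) ^ 2 - 4 * P.coeff 2 * P.coeff 0 = 0 := by exact_mod_cast hD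
  set x : ℚ := -P.coeff 1 / (2 * P.coeff 2) with hx
  have hquad : P.map (Int.castRingHom ℚ) =
      C (P.coeff 2 : ℚ) * X ^ 2 + C (P.coeff 1 : ℚ) * X + C (P.coeff 0 : ℚ) := by
    conv_lhs => rw [eq_quadratic_of_degree_le_two (natDegree_le_iff_degree_le.mp hP.le)]
    simp
  apply hsep.aeval_derivative_ne_zero (x := x)
  · rw [hquad]
    simp only [hx, map_intCast, coe_aeval_eq_eval, eval_add, eval_mul, eval_intCast, eval_pow,
      eval_X]
    field_simp
    linear_combination -hD'
  · rw [hquad]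
    simp only [hx, map_intCast, derivative_mul, derivative_intCast, zero_mul,
      derivative_X_pow_succ, Nat.cast_one, map_add, map_one, pow_one, zero_add, derivative_X,
      mul_one, add_zero, coe_aeval_eq_eval, eval_add, eval_mul, eval_intCast, eval_one, eval_X]
    field_simp
    ring

theorem fewLargePrimeSquares_of_card_le_add {B C : ℝ} (hB : 0 ≤ B) (hC : 0 ≤ C)
    (h : ∀ N : ℕ, 1 ≤ N → ∀ S : Finset ℕ, (∀ n ∈ S, n ∈ Icc 1 N ∧
      ∃ p : ℕ, p.Prime ∧ (N : ℝ) ^ (7 / 10 : ℝ) < p ∧ p ^ 2 ∣ absEval P n) →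
      (#S : ℝ) ≤ B + C * (N : ℝ) ^ (7 / 10 : ℝ)) : FewLargePrimeSquares P := by
  classical
  refine ⟨B + C + 1, by positivity, fun N hN ↦ (h N hN _ fun n hn ↦ mem_filter.mp hn).trans ?_⟩
  have one_le_rpow : (1 : ℝ) ≤ (N : ℝ) ^ (7 / 10 : ℝ) :=
    Real.one_le_rpow (by exact_mod_cast hN) (by norm_num)
  nlinarith

theorem mem_Icc_floor_rpow_inv {n N : ℕ} (hn : n ∈ Icc 1 N) {a K : ℝ} (ha : 0 < a)
    (hNK : (N : ℝ) ^ a ≤ K) : n ∈ Icc 1 ⌊K ^ a⁻¹⌋₊ := by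
  have K_nonneg : 0 ≤ K := le_trans (by positivity) hNK
  obtain ⟨one_le_n, n_le_N⟩ := mem_Icc.mp hn
  refine mem_Icc.mpr ⟨one_le_n, n_le_N.trans (Nat.le_floor ?_)⟩
  exact (Real.le_rpow_inv_iff_of_pos N.cast_nonneg K_nonneg ha).mpr hNK

theorem fewLargePrimeSquares_of_natDegree_le_one (hP₀ : P ≠ 0) (hP : P.natDegree ≤ 1) :
    FewLargePrimeSquares P := by
  obtain ⟨K, hK, hle⟩ := exists_absEval_le P hP
  refine fewLargePrimeSquares_of_card_le_add (B := 1 + K ^ (2 / 5 : ℝ)⁻¹) (by positivity) le_rfl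
    fun N hN S hS ↦ ?_
  rw [zero_mul, add_zero, ← card_filter_add_card_filter_not (s := S) (absEval P · = 0)]
  push_cast
  gcongr
  · have hzero : #{n ∈ S | absEval P n = 0} ≤ P.natDegree :=
      card_le_natDegree_of_eval_eq_zero hP₀ fun n hn ↦
        Int.natAbs_eq_zero.mp (mem_filter.mp hn).2
    exact_mod_cast hzero.trans hP
  · refine (Nat.cast_le.mpr (card_le_card (t := Icc 1 ⌊K ^ (2 / 5 : ℝ)⁻¹⌋₊) fun n hn ↦ ?_)).trans
      (by simpa using Nat.floor_le (by positivity))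
    obtain ⟨hnS, hne⟩ := mem_filter.mp hn
    obtain ⟨hnN, p, -, hNp, hdvd⟩ := hS n hnS
    obtain ⟨one_le_n, n_le_N⟩ := mem_Icc.mp hnN
    have N_pos : (0 : ℝ) < N := by exact_mod_cast hN
    refine mem_Icc_floor_rpow_inv hnN (by norm_num) (le_of_mul_le_mul_right ?_ N_pos)
    calc (N : ℝ) ^ (2 / 5 : ℝ) * N = ((N : ℝ) ^ (7 / 10 : ℝ)) ^ 2 := by
          rw [← Real.rpow_add_one N_pos.ne', ← Real.rpow_natCast, ← Real.rpow_mul N_pos.le]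
          norm_num
      _ ≤ (p : ℝ) ^ 2 := by gcongr
      _ ≤ absEval P n := by exact_mod_cast Nat.le_of_dvd (Nat.pos_of_ne_zero hne) hdvd
      _ ≤ K * (n : ℝ) ^ 1 := hle n (by lia)
      _ ≤ K * N := by
          rw [pow_one]
          gcongr

theorem exists_card_eval_eq_mul_sq_le (hP : P.natDegree = 2)
    (hsep : (P.map (Int.castRingHom ℚ)).Separable) (ha : 0 < P.coeff 2) {ε : ℝ} (hε : 0 < ε) :
    ∃ C : ℝ, 0 < C ∧ ∀ N e : ℕ, 1 ≤ N → 0 < e → ∀ S : Finset ℕ,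
      (∀ n ∈ S, (P.coeff 1).natAbs < n ∧ n ≤ N ∧
        ∃ y : ℕ, P.eval (n : ℤ) = e * (y : ℤ) ^ 2) → (#S : ℝ) ≤ C * (N : ℝ) ^ ε := by
  have hD := discrim_ne_zero_of_separable hP hsep
  set D := discrim (P.coeff 2) (P.coeff 1) (P.coeff 0)
  set L := 2 * (P.coeff 2).natAbs + (P.coeff 1).natAbs
  have D_pos : 0 < D.natAbs := Int.natAbs_pos.mpr hD
  obtain ⟨C, hC, hlog⟩ := exists_nat_log_mul_add_one_le (2 * L + D.natAbs) hε
  refine ⟨(D.natAbs : ℝ) ^ 2 * C, by positivity, fun N e hN he S hS ↦ ?_⟩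
  have hcard := card_quadratic_eq_mul_sq_le ha hD he fun n hn ↦ by
    obtain ⟨hbn, hnN, y, hy⟩ := hS n hn
    refine ⟨hbn, hnN, y, ?_⟩
    rw [← hy, eval_eq_sum_range, hP]
    simp only [sum_range_succ, range_zero, sum_empty, pow_zero, pow_one]
    ring
  have hmono : Nat.log 2 (2 * (L * N) + D.natAbs) ≤ Nat.log 2 ((2 * L + D.natAbs) * N) :=
    Nat.log_mono_right (by nlinarith)
  calc (#S : ℝ) ≤ (D.natAbs : ℝ) ^ 2 * (Nat.log 2 ((2 * L + D.natAbs) * N) + 1) := by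
        exact_mod_cast hcard.trans (by gcongr)
    _ ≤ (D.natAbs : ℝ) ^ 2 * (C * (N : ℝ) ^ ε) := by
        gcongr
        exact_mod_cast hlog N hN
    _ = (D.natAbs : ℝ) ^ 2 * C * (N : ℝ) ^ ε := by ring

theorem eval_pos_of_natDegree_eq_two (hP : P.natDegree = 2) (ha : 0 < P.coeff 2) {n : ℕ}
    (hn : (P.coeff 1).natAbs + (P.coeff 0).natAbs < n) : 0 < P.eval (n : ℤ) := by
  rw [eval_eq_sum_range, hP]
  simp only [sum_range_succ, range_zero, sum_empty, pow_zero, pow_one]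
  have : |P.coeff 1| + |P.coeff 0| < (n : ℤ) := by
    rw [← Int.natCast_natAbs, ← Int.natCast_natAbs]
    exact_mod_cast hn
  nlinarith [neg_abs_le (P.coeff 1), neg_abs_le (P.coeff 0), abs_nonneg (P.coeff 0),
    abs_nonneg (P.coeff 1)]

theorem cofactor_le_of_rpow_lt {m e p N : ℕ} {K : ℝ} (hN : 1 ≤ N)
    (hNp : (N : ℝ) ^ (7 / 10 : ℝ) < p) (hm : m = p ^ 2 * e) (hmK : (m : ℝ) ≤ K * (N : ℝ) ^ 2) :
    (e : ℝ) ≤ K * (N : ℝ) ^ (3 / 5 : ℝ) := by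
  have N_pos : (0 : ℝ) < N := by exact_mod_cast hN
  refine le_of_mul_le_mul_left ?_ (show 0 < ((N : ℝ) ^ (7 / 10 : ℝ)) ^ 2 by positivity)
  calc ((N : ℝ) ^ (7 / 10 : ℝ)) ^ 2 * e ≤ (p : ℝ) ^ 2 * e := by gcongr
    _ = (m : ℝ) := by exact_mod_cast hm.symm
    _ ≤ K * (N : ℝ) ^ 2 := hmK
    _ = ((N : ℝ) ^ (7 / 10 : ℝ)) ^ 2 * (K * (N : ℝ) ^ (3 / 5 : ℝ)) := by
        rw [mul_left_comm, ← Real.rpow_natCast, ← Real.rpow_natCast, ← Real.rpow_mul N_pos.le,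
          ← Real.rpow_add N_pos]
        norm_num

theorem exists_eval_eq_mul_sq_of_rpow_lt {n p N : ℕ} {K : ℝ} (hN : 1 ≤ N)
    (heval : 0 < P.eval (n : ℤ)) (hNp : (N : ℝ) ^ (7 / 10 : ℝ) < p) (hdvd : p ^ 2 ∣ absEval P n)
    (hK : (absEval P n : ℝ) ≤ K * (N : ℝ) ^ 2) :
    ∃ e : ℕ, P.eval (n : ℤ) = e * (p : ℤ) ^ 2 ∧ 0 < e ∧ (e : ℝ) ≤ K * (N : ℝ) ^ (3 / 5 : ℝ) := by
  obtain ⟨e, he⟩ := hdvd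
  have he' : P.eval (n : ℤ) = e * (p : ℤ) ^ 2 := by
    rw [← abs_of_pos heval, ← Int.natCast_natAbs, mul_comm]
    exact_mod_cast he
  refine ⟨e, he', Nat.pos_of_ne_zero fun he₀ ↦ heval.ne' ?_, cofactor_le_of_rpow_lt hN hNp he hK⟩
  rw [he', he₀, Nat.cast_zero, zero_mul]

/- The cofactor of `p ^ 2` in `P(n)` is `O(N ^ (3 / 5))`, and for each cofactor a Pell equation
leaves only `O(N ^ (1 / 10))` values of `n`. -/
theorem fewLargePrimeSquares_of_natDegree_eq_two_of_pos (hP : P.natDegree = 2)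
    (hsep : (P.map (Int.castRingHom ℚ)).Separable) (ha : 0 < P.coeff 2) :
    FewLargePrimeSquares P := by
  obtain ⟨C, hC, hcard⟩ := exists_card_eval_eq_mul_sq_le hP hsep ha (ε := 1 / 10) (by norm_num)
  obtain ⟨K, hK, hle⟩ := exists_absEval_le P hP.le
  set n₀ := (P.coeff 1).natAbs + (P.coeff 0).natAbs
  refine fewLargePrimeSquares_of_card_le_add (B := n₀) (C := K * C) (by positivity) (by positivity)
    fun N hN S hS ↦ ?_
  have N_pos : (0 : ℝ) < N := by exact_mod_cast hN
  rw [← card_filter_add_card_filter_not (s := S) (· ≤ n₀)]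
  push_cast
  gcongr
  · refine (card_le_card fun n hn ↦ ?_).trans_eq (Nat.card_Icc 1 n₀)
    obtain ⟨hnS, hle⟩ := mem_filter.mp hn
    exact mem_Icc.mpr ⟨(mem_Icc.mp (hS n hnS).1).1, hle⟩
  set T := S.filter (¬ · ≤ n₀)
  have hcofactor : ∀ n ∈ T, n₀ < n ∧ n ≤ N ∧ ∃ p e : ℕ, P.eval (n : ℤ) = e * (p : ℤ) ^ 2 ∧
      0 < e ∧ (e : ℝ) ≤ K * (N : ℝ) ^ (3 / 5 : ℝ) := fun n hn ↦ by
    obtain ⟨hnS, hlt⟩ := mem_filter.mp hn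
    obtain ⟨hnN, p, -, hNp, hdvd⟩ := hS n hnS
    obtain ⟨one_le_n, n_le_N⟩ := mem_Icc.mp hnN
    exact ⟨not_le.mp hlt, n_le_N, p, exists_eval_eq_mul_sq_of_rpow_lt hN
      (eval_pos_of_natDegree_eq_two hP ha (not_le.mp hlt)) hNp hdvd
      ((hle n (by lia)).trans (by gcongr))⟩
  choose! n₀_lt le_N p e hep e_pos e_le using hcofactor
  calc (#T : ℝ) = ∑ k ∈ Icc 1 ⌊K * (N : ℝ) ^ (3 / 5 : ℝ)⌋₊, (#{n ∈ T | e n = k} : ℝ) := by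
        exact_mod_cast card_eq_sum_card_fiberwise fun n hn ↦
          mem_coe.mpr <| mem_Icc.mpr ⟨e_pos n hn, Nat.le_floor (e_le n hn)⟩
    _ ≤ ∑ _ ∈ Icc 1 ⌊K * (N : ℝ) ^ (3 / 5 : ℝ)⌋₊, C * (N : ℝ) ^ (1 / 10 : ℝ) := by
        gcongr with _ hk
        refine hcard N _ hN (mem_Icc.mp hk).1 _ fun n hn ↦ ?_
        obtain ⟨hnT, rfl⟩ := mem_filter.mp hn
        exact ⟨(Nat.le_add_right _ _).trans_lt (n₀_lt n hnT), le_N n hnT, p n, hep n hnT⟩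
    _ ≤ K * (N : ℝ) ^ (3 / 5 : ℝ) * (C * (N : ℝ) ^ (1 / 10 : ℝ)) := by
        rw [sum_const, Nat.card_Icc, Nat.add_sub_cancel, nsmul_eq_mul]
        gcongr
        exact Nat.floor_le (by positivity)
    _ = K * C * (N : ℝ) ^ (7 / 10 : ℝ) := by
        rw [show (7 / 10 : ℝ) = 3 / 5 + 1 / 10 by norm_num, Real.rpow_add N_pos]
        ring

theorem absEval_neg (P : ℤ[X]) : absEval (-P) = absEval P := by
  funext n
  rw [absEval, absEval, eval_neg, Int.natAbs_neg]

theorem fewLargePrimeSquares_of_natDegree_eq_two (hP : P.natDegree = 2)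
    (hsep : (P.map (Int.castRingHom ℚ)).Separable) : FewLargePrimeSquares P := by
  have ha : P.coeff 2 ≠ 0 := by
    rw [← hP]
    exact leadingCoeff_ne_zero.mpr (ne_zero_of_natDegree_gt (hP ▸ two_pos))
  rcases ha.lt_or_gt with hneg | hpos
  · have hsep_neg : ((-P).map (Int.castRingHom ℚ)).Separable := by
      rw [Polynomial.map_neg, separable_def, derivative_neg]
      exact IsCoprime.neg_neg hsep
    have hneg' := fewLargePrimeSquares_of_natDegree_eq_two_of_pos ((natDegree_neg P).trans hP)
      hsep_neg (by rwa [coeff_neg, neg_pos])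
    rwa [FewLargePrimeSquares, absEval_neg] at hneg'
  · exact fewLargePrimeSquares_of_natDegree_eq_two_of_pos hP hsep hpos

theorem exists_le_of_dvd_absEval_of_isCoprime
    (hAB : IsCoprime (A.map (Int.castRingHom ℚ)) (B.map (Int.castRingHom ℚ))) :
    ∃ R : ℕ, ∀ n p : ℕ, p ∣ absEval A n → p ∣ absEval B n → p ≤ R := by
  obtain ⟨U, V, R, hR, hUV⟩ := exists_bezout_of_isCoprime_map hAB
  refine ⟨R.natAbs, fun n p hA hB ↦ Nat.le_of_dvd (Int.natAbs_pos.mpr hR) (Int.natCast_dvd.mp ?_)⟩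
  have hUVn := congrArg (eval (n : ℤ)) hUV
  rw [eval_C, eval_add, eval_mul, eval_mul] at hUVn
  rw [← hUVn]
  exact ((dvd_absEval_iff.mp hA).mul_left _).add ((dvd_absEval_iff.mp hB).mul_left _)

theorem FewLargePrimeSquares.mul (hA : FewLargePrimeSquares A) (hB : FewLargePrimeSquares B)
    (hAB : IsCoprime (A.map (Int.castRingHom ℚ)) (B.map (Int.castRingHom ℚ))) :
    FewLargePrimeSquares (A * B) := by
  classical
  obtain ⟨C₁, hC₁, hA⟩ := hA
  obtain ⟨C₂, hC₂, hB⟩ := hB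
  obtain ⟨R, hR⟩ := exists_le_of_dvd_absEval_of_isCoprime hAB
  refine fewLargePrimeSquares_of_card_le_add (B := (R : ℝ) ^ (7 / 10 : ℝ)⁻¹) (C := C₁ + C₂)
    (by positivity) (by positivity) fun N hN S hS ↦ ?_
  set large : ℤ[X] → Finset ℕ := fun Q ↦
    {n ∈ Icc 1 N | ∃ p : ℕ, p.Prime ∧ (N : ℝ) ^ (7 / 10 : ℝ) < p ∧ p ^ 2 ∣ absEval Q n}
  have hcover : S ⊆ Icc 1 ⌊(R : ℝ) ^ (7 / 10 : ℝ)⁻¹⌋₊ ∪ (large A ∪ large B) := by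
    intro n hn
    obtain ⟨hnN, p, hp, hNp, hdvd⟩ := hS n hn
    rw [absEval, eval_mul, Int.natAbs_mul] at hdvd
    simp only [mem_union]
    by_cases hpA : p ∣ absEval A n
    · by_cases hpB : p ∣ absEval B n
      · exact Or.inl <| mem_Icc_floor_rpow_inv hnN (by norm_num) <|
          hNp.le.trans (Nat.cast_le.mpr (hR n p hpA hpB))
      · exact Or.inr <| Or.inl <| mem_filter.mpr ⟨hnN, p, hp, hNp,
          ((hp.coprime_iff_not_dvd.mpr hpB).pow_left 2).dvd_of_dvd_mul_right hdvd⟩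
    · exact Or.inr <| Or.inr <| mem_filter.mpr ⟨hnN, p, hp, hNp,
        ((hp.coprime_iff_not_dvd.mpr hpA).pow_left 2).dvd_of_dvd_mul_left hdvd⟩
  have hcard : #S ≤ ⌊(R : ℝ) ^ (7 / 10 : ℝ)⁻¹⌋₊ + (#(large A) + #(large B)) := by
    simpa only [Nat.card_Icc, Nat.add_sub_cancel] using (card_le_card hcover).trans <|
      (card_union_le _ _).trans (Nat.add_le_add_left (card_union_le _ _) _)
  calc (#S : ℝ) ≤ ⌊(R : ℝ) ^ (7 / 10 : ℝ)⁻¹⌋₊ + (#(large A) + #(large B)) := by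
        exact_mod_cast hcard
    _ ≤ (R : ℝ) ^ (7 / 10 : ℝ)⁻¹ + (C₁ * (N : ℝ) ^ (7 / 10 : ℝ) + C₂ * (N : ℝ) ^ (7 / 10 : ℝ)) :=
        add_le_add (Nat.floor_le (by positivity)) (add_le_add (hA N hN) (hB N hN))
    _ = (R : ℝ) ^ (7 / 10 : ℝ)⁻¹ + (C₁ + C₂) * (N : ℝ) ^ (7 / 10 : ℝ) := by rw [add_mul]

theorem fewLargePrimeSquares_of_separable (hsep : (P.map (Int.castRingHom ℚ)).Separable)
    (hfactor : ∀ Q : ℤ[X], Irreducible Q → Q ∣ P → Q.natDegree ≤ 2) : FewLargePrimeSquares P := by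
  induction P using UniqueFactorizationMonoid.induction_on_prime with
  | h₁ => simp [not_separable_zero] at hsep
  | h₂ U hU =>
    exact fewLargePrimeSquares_of_natDegree_le_one hU.ne_zero
      ((natDegree_eq_zero_of_isUnit hU).trans_le zero_le_one)
  | h₃ A Q _ hQ ih =>
    rw [Polynomial.map_mul] at hsep
    refine FewLargePrimeSquares.mul ?_ (ih hsep.of_mul_right fun F hF hFA ↦
      hfactor F hF (hFA.mul_left Q)) hsep.isCoprime
    rcases (hfactor Q hQ.irreducible (dvd_mul_right Q A)).lt_or_eq with hlt | htwo
    · exact fewLargePrimeSquares_of_natDegree_le_one hQ.ne_zero (Nat.le_of_lt_succ hlt)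
    · exact fewLargePrimeSquares_of_natDegree_eq_two htwo hsep.of_mul_left

end LargePrimeSquares

/-! ### Collinear solutions of the ratio equation -/

section Affine

open Finset Polynomial

theorem norm_eq_one_of_affine_mapsTo {S : Finset ℂ} (hS : 1 < #S) {μ β : ℂ} (hμ : μ ≠ 0)
    (hmaps : ∀ x ∈ S, μ * x + β ∈ S) : ‖μ‖ = 1 := by
  set σ : ℂ → ℂ := fun x ↦ μ * x + β
  have hinj : Function.Injective σ := fun x y hxy ↦ mul_left_cancel₀ hμ (add_right_cancel hxy)
  have himage : S.image σ = S :=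
    eq_of_subset_of_card_le (image_subset_iff.mpr hmaps) (card_image_of_injective S hinj).ge
  set D := ∑ x ∈ S, ∑ y ∈ S, ‖x - y‖
  have hscale : D = ‖μ‖ * D := by
    calc D = ∑ x ∈ S.image σ, ∑ y ∈ S.image σ, ‖x - y‖ := by rw [himage]
      _ = ∑ x ∈ S, ∑ y ∈ S, ‖μ‖ * ‖x - y‖ := by
          simp only [sum_image hinj.injOn]
          refine sum_congr rfl fun x _ ↦ sum_congr rfl fun y _ ↦ ?_
          rw [← norm_mul]
          congr 1
          ring
      _ = ‖μ‖ * D := by simp only [← mul_sum, D]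
  have hpos : 0 < D := by
    obtain ⟨x, hx, y, hy, hxy⟩ := one_lt_card.mp hS
    refine sum_pos' (fun _ _ ↦ sum_nonneg fun _ _ ↦ norm_nonneg _) ⟨x, hx, ?_⟩
    exact sum_pos' (fun _ _ ↦ norm_nonneg _) ⟨y, hy, norm_pos_iff.mpr (sub_ne_zero.mpr hxy)⟩
  exact mul_right_cancel₀ hpos.ne' (hscale.symm.trans (one_mul D).symm)

theorem C_mul_sub_C_mul_comp_linear_ne_zero {Q : ℂ[X]} (hQ : Q.Separable) (hdeg : 2 ≤ Q.natDegree)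
    {s t : ℝ} (hs : 0 < s) (ht : 0 < t) (hst : s ≠ t) (μ β : ℂ) :
    C (t : ℂ) * Q - C (s : ℂ) * Q.comp (C μ * X + C β) ≠ 0 := by
  intro h
  have heq := sub_eq_zero.mp h
  have hsC : (s : ℂ) ≠ 0 := by exact_mod_cast hs.ne'
  have htC : (t : ℂ) ≠ 0 := by exact_mod_cast ht.ne'
  have hQ0 : Q ≠ 0 := hQ.ne_zero
  have hμ : μ ≠ 0 := by
    rintro rfl
    have hcompare := congrArg natDegree heq
    rw [natDegree_C_mul htC, natDegree_C_mul hsC, natDegree_comp] at hcompare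
    simp only [C_0, zero_mul, zero_add, natDegree_C, mul_zero] at hcompare
    omega
  have hcard : 1 < #Q.roots.toFinset := by
    rw [Multiset.toFinset_card_of_nodup (nodup_roots hQ),
      ← (IsAlgClosed.splits Q).natDegree_eq_card_roots]
    exact hdeg
  have hroots : ∀ x ∈ Q.roots.toFinset, μ * x + β ∈ Q.roots.toFinset := by
    intro x hx
    rw [Multiset.mem_toFinset, mem_roots hQ0, IsRoot] at hx ⊢
    have hval := congrArg (eval x) heq
    simp only [eval_mul, eval_C, eval_comp, eval_add, eval_X, hx, mul_zero] at hval
    exact (mul_eq_zero.mp hval.symm).resolve_left hsC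
  have hlead := congrArg (fun R : ℂ[X] ↦ ‖R.leadingCoeff‖) heq
  simp only [leadingCoeff_mul, leadingCoeff_C, norm_mul, norm_pow, leadingCoeff_linear hμ,
    leadingCoeff_comp ((natDegree_linear hμ).trans_ne one_ne_zero), Complex.norm_real,
    Real.norm_of_nonneg hs.le, Real.norm_of_nonneg ht.le,
    norm_eq_one_of_affine_mapsTo hcard hμ hroots, one_pow, mul_one] at hlead
  exact hst (mul_right_cancel₀ (norm_ne_zero_iff.mpr (leadingCoeff_ne_zero.mpr hQ0)) hlead).symm

end Affine

section Fibres

open Finset Polynomial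

/-- The pair `q = (x, y)` of positive integers solves `t * P(x) = s * P(y)`. -/
structure IsRatioSolution (P : ℤ[X]) (s t : ℕ) (q : ℕ × ℕ) : Prop where
  fst_ne_zero : q.1 ≠ 0
  snd_ne_zero : q.2 ≠ 0
  mul_eq_mul : t * absEval P q.1 = s * absEval P q.2

variable {P : ℤ[X]} {s t : ℕ} {T : Finset (ℕ × ℕ)}

theorem IsRatioSolution.swap {q : ℕ × ℕ} (h : IsRatioSolution P s t q) :
    IsRatioSolution P t s q.swap :=
  ⟨h.snd_ne_zero, h.fst_ne_zero, h.mul_eq_mul.symm⟩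

namespace PositiveSeparable

theorem card_ratioSolution_of_fst_eq (h : PositiveSeparable P) (hs : s ≠ 0) {x : ℕ}
    (hT : ∀ q ∈ T, IsRatioSolution P s t q) (hx : ∀ q ∈ T, q.1 = x) : #T ≤ P.natDegree := by
  have hinj : Set.InjOn Prod.snd (T : Set (ℕ × ℕ)) := fun q hq r hr hqr ↦
    Prod.ext ((hx q hq).trans (hx r hr).symm) hqr
  rw [← card_image_of_injOn hinj]
  refine h.card_le_natDegree_of_absEval_eq (v := t * absEval P x / s) fun y hy ↦ ?_
  obtain ⟨q, hq, rfl⟩ := mem_image.mp hy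
  refine ⟨(hT q hq).snd_ne_zero, ?_⟩
  rw [← hx q hq, (hT q hq).mul_eq_mul, Nat.mul_div_cancel_left _ (Nat.pos_of_ne_zero hs)]

theorem card_ratioSolution_of_fst_lt (h : PositiveSeparable P) (hs : s ≠ 0) {Y : ℕ}
    (hT : ∀ q ∈ T, IsRatioSolution P s t q) (hY : ∀ q ∈ T, q.1 < Y) : #T ≤ P.natDegree * Y := by
  calc #T ≤ P.natDegree * #(T.image Prod.fst) := by
        refine card_le_mul_card_image T P.natDegree fun x _ ↦ ?_
        exact h.card_ratioSolution_of_fst_eq hs (fun q hq ↦ hT q (mem_filter.mp hq).1)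
          fun q hq ↦ (mem_filter.mp hq).2
    _ ≤ P.natDegree * #(range Y) := by
        gcongr
        exact image_subset_iff.mpr fun q hq ↦ mem_range.mpr (hY q hq)
    _ = P.natDegree * Y := by rw [card_range]

theorem card_ratioSolution_of_snd_lt (h : PositiveSeparable P) (ht : t ≠ 0) {Y : ℕ}
    (hT : ∀ q ∈ T, IsRatioSolution P s t q) (hY : ∀ q ∈ T, q.2 < Y) : #T ≤ P.natDegree * Y := by
  rw [← card_image_of_injective T Prod.swap_injective]
  apply h.card_ratioSolution_of_fst_lt ht (t := s) <;>
    simp only [forall_mem_image]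
  exacts [fun q hq ↦ (hT q hq).swap, hY]

theorem eval_map_complex (h : PositiveSeparable P) {n : ℕ} (hn : n ≠ 0) :
    (P.map (Int.castRingHom ℂ)).eval (n : ℂ) = absEval P n := by
  rw [← Int.cast_natCast (absEval P n), h.natCast_absEval hn, eval_map, eval₂_at_natCast]
  simp

theorem separable_map_complex (h : PositiveSeparable P) :
    (P.map (Int.castRingHom ℂ)).Separable := by
  have hmap := h.separable.map (f := algebraMap ℚ ℂ)
  rwa [Polynomial.map_map, RingHom.ext_int ((algebraMap ℚ ℂ).comp _) (Int.castRingHom ℂ)] at hmap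

theorem card_ratioSolution_of_line (h : PositiveSeparable P) (hs : s ≠ 0) (ht : t ≠ 0)
    (hst : s ≠ t) (hT : ∀ q ∈ T, IsRatioSolution P s t q) {μ β : ℂ}
    (hline : ∀ q ∈ T, (q.2 : ℂ) = μ * q.1 + β) : #T ≤ P.natDegree := by
  set Q := P.map (Int.castRingHom ℂ)
  have hQdeg : Q.natDegree = P.natDegree := natDegree_map_eq_of_injective Int.cast_injective _
  set W := C ((t : ℝ) : ℂ) * Q - C ((s : ℝ) : ℂ) * Q.comp (C μ * X + C β) with hW
  have hW0 : W ≠ 0 := C_mul_sub_C_mul_comp_linear_ne_zero h.separable_map_complex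
    (h.two_le_natDegree.trans_eq hQdeg.symm) (by positivity) (by positivity)
    (by exact_mod_cast hst) μ β
  have hWdeg : W.natDegree ≤ P.natDegree := by
    refine natDegree_sub_le_of_le ((natDegree_C_mul_le _ _).trans hQdeg.le)
      ((natDegree_C_mul_le _ _).trans ?_) |>.trans (max_self _).le
    rw [natDegree_comp, hQdeg]
    exact mul_le_of_le_one_right' natDegree_linear_le
  have hinj : Set.InjOn (fun q : ℕ × ℕ ↦ (q.1 : ℂ)) (T : Set (ℕ × ℕ)) := by
    intro q hq r hr (hqr : (q.1 : ℂ) = r.1)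
    have hsnd : (q.2 : ℂ) = r.2 := by rw [hline q hq, hline r hr, hqr]
    exact Prod.ext (Nat.cast_injective hqr) (Nat.cast_injective hsnd)
  have hroot : ∀ q ∈ T, (q.1 : ℂ) ∈ W.roots.toFinset := by
    intro q hq
    rw [Multiset.mem_toFinset, mem_roots hW0, IsRoot, hW]
    simp only [eval_sub, eval_mul, eval_C, eval_comp, eval_add, eval_X]
    rw [← hline q hq, h.eval_map_complex (hT q hq).fst_ne_zero,
      h.eval_map_complex (hT q hq).snd_ne_zero, sub_eq_zero]
    exact_mod_cast (hT q hq).mul_eq_mul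
  calc #T ≤ #W.roots.toFinset := card_le_card_of_injOn _ hroot hinj
    _ ≤ W.natDegree := (Multiset.toFinset_card_le _).trans (card_roots' _)
    _ ≤ P.natDegree := hWdeg

theorem card_ratioSolution_of_collinear (h : PositiveSeparable P) (hs : s ≠ 0) (ht : t ≠ 0)
    (hst : s ≠ t) (hT : ∀ q ∈ T, IsRatioSolution P s t q)
    (hcol : ∀ q ∈ T, ∀ r ∈ T, ∀ w ∈ T,
      ((r.1 : ℤ) - q.1) * (w.2 - q.2) = (w.1 - q.1) * (r.2 - q.2)) : #T ≤ P.natDegree := by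
  by_cases hvert : ∀ q ∈ T, ∀ r ∈ T, q.1 = r.1
  · rcases T.eq_empty_or_nonempty with rfl | ⟨q, hq⟩
    · simp
    · exact h.card_ratioSolution_of_fst_eq hs hT fun r hr ↦ hvert r hr q hq
  push Not at hvert
  obtain ⟨q, hq, r, hr, hqr⟩ := hvert
  have hne : (r.1 : ℂ) - q.1 ≠ 0 := sub_ne_zero.mpr (by exact_mod_cast hqr.symm)
  set μ : ℂ := (r.2 - q.2) / (r.1 - q.1) with hμ
  refine h.card_ratioSolution_of_line hs ht hst hT (μ := μ) (β := q.2 - μ * q.1) fun w hw ↦ ?_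
  have hdet : ((r.1 : ℂ) - q.1) * (w.2 - q.2) = (w.1 - q.1) * (r.2 - q.2) := by
    exact_mod_cast hcol q hq r hr w hw
  rw [hμ]
  field_simp
  linear_combination hdet

end PositiveSeparable

end Fibres

/-! ### Counting solutions of the ratio equation -/

section Approximation

open Finset Polynomial

theorem exists_abs_eval_sub_mul_pow_le {Q : ℝ[X]} (hdeg : 2 ≤ Q.natDegree) :
    ∃ c C : ℝ, 0 < C ∧ ∀ x : ℝ, 1 ≤ x →
      |Q.eval x - Q.leadingCoeff * (x + c) ^ Q.natDegree| ≤ C * x ^ (Q.natDegree - 2) := by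
  set k := Q.natDegree with hk
  set a := Q.leadingCoeff with ha
  have ha0 : a ≠ 0 := leadingCoeff_ne_zero.mpr (ne_zero_of_natDegree_gt hdeg)
  have hk0 : (k : ℝ) ≠ 0 := by positivity
  set c := Q.coeff (k - 1) / (k * a) with hc
  have hrem : (Q - Polynomial.C a * (X + Polynomial.C c) ^ k).natDegree ≤ k - 2 := by
    refine natDegree_le_iff_coeff_eq_zero.mpr fun i hi ↦ ?_
    rw [coeff_sub, coeff_C_mul, coeff_X_add_C_pow]
    obtain rfl | rfl | hik : i = k - 1 ∨ i = k ∨ k < i := by omega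
    · rw [Nat.sub_sub_self (by omega), Nat.choose_symm (by omega : 1 ≤ k), Nat.choose_one_right, hc]
      field_simp
      ring
    · simp [ha, hk]
    · rw [coeff_eq_zero_of_natDegree_lt (hk ▸ hik), Nat.choose_eq_zero_of_lt hik]
      simp
  obtain ⟨C, hC, hbound⟩ := exists_abs_eval_le _ hrem
  exact ⟨c, C, hC, fun x hx ↦ by simpa using hbound x hx⟩

theorem abs_sub_mul_max_pow_le (k : ℕ) {w v : ℝ} (hw : 0 ≤ w) (hv : 0 ≤ v) :
    |w - v| * max w v ^ k ≤ |w ^ (k + 1) - v ^ (k + 1)| := by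
  wlog hwv : v ≤ w generalizing w v
  · rw [abs_sub_comm, max_comm, abs_sub_comm (w ^ _)]
    exact this hv hw (le_of_not_ge hwv)
  have hpow : v ^ k ≤ w ^ k := pow_le_pow_left₀ hv hwv k
  rw [max_eq_left hwv, abs_of_nonneg (sub_nonneg.mpr hwv),
    abs_of_nonneg (sub_nonneg.mpr (pow_le_pow_left₀ hv hwv (k + 1))), pow_succ, pow_succ]
  nlinarith

section NearPowers

variable {k : ℕ} {a b F G u v s t l : ℝ}

theorem abs_pow_sub_pow_le_of_near_powers (hk : 2 ≤ k) (ha : 1 ≤ a) (hs : 0 < s) (ht : 0 ≤ t)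
    (hF : |F - a * u ^ k| ≤ b * u ^ (k - 2)) (hG : |G - a * v ^ k| ≤ b * v ^ (k - 2))
    (hFG : t * F = s * G) (hl : l ^ k = t / s) :
    |(l * u) ^ k - v ^ k| ≤ b * (l ^ 2 * (l * u) ^ (k - 2) + v ^ (k - 2)) := by
  have hts : t = s * l ^ k := by rw [hl]; field_simp
  have hlk : l ^ k = l ^ 2 * l ^ (k - 2) := by rw [← pow_add, Nat.add_sub_cancel' hk]
  refine le_of_mul_le_mul_left ?_ hs
  calc s * |(l * u) ^ k - v ^ k| ≤ s * (a * |(l * u) ^ k - v ^ k|) := by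
        gcongr
        exact le_mul_of_one_le_left (abs_nonneg _) ha
    _ = |s * a * ((l * u) ^ k - v ^ k)| := by
        rw [abs_mul, abs_of_pos (by positivity : 0 < s * a), mul_assoc]
    _ = |s * (G - a * v ^ k) - t * (F - a * u ^ k)| := by
        congr 1
        rw [mul_pow]
        linear_combination hFG + a * u ^ k * hts.symm
    _ ≤ s * |G - a * v ^ k| + t * |F - a * u ^ k| := by
        refine (abs_sub _ _).trans_eq ?_
        rw [abs_mul, abs_mul, abs_of_pos hs, abs_of_nonneg ht]
    _ ≤ s * (b * v ^ (k - 2)) + t * (b * u ^ (k - 2)) := by gcongr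
    _ = s * (b * (l ^ 2 * (l * u) ^ (k - 2) + v ^ (k - 2))) := by
        rw [hts, hlk, mul_pow]
        ring

theorem abs_sub_mul_max_le_of_near_powers (hk : 2 ≤ k) (ha : 1 ≤ a) (hs : 0 < s) (ht : 0 ≤ t)
    (hu : 0 < u) (hv : 0 < v) (hb : 0 ≤ b) (hl0 : 0 < l)
    (hF : |F - a * u ^ k| ≤ b * u ^ (k - 2)) (hG : |G - a * v ^ k| ≤ b * v ^ (k - 2))
    (hFG : t * F = s * G) (hl : l ^ k = t / s) :
    |l * u - v| * max (l * u) v ≤ b * (l ^ 2 + 1) := by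
  have hpow := abs_pow_sub_pow_le_of_near_powers hk ha hs ht hF hG hFG hl
  obtain ⟨m, rfl⟩ := Nat.exists_eq_add_of_le' hk
  rw [Nat.add_sub_cancel] at hpow
  set W := max (l * u) v
  have hluW : l * u ≤ W := le_max_left _ _
  have hvW : v ≤ W := le_max_right _ _
  have hW : 0 < W := hv.trans_le hvW
  refine le_of_mul_le_mul_right ?_ (pow_pos hW m)
  calc |l * u - v| * W * W ^ m = |l * u - v| * W ^ (m + 1) := by ring
    _ ≤ |(l * u) ^ (m + 2) - v ^ (m + 2)| :=
        abs_sub_mul_max_pow_le (m + 1) (by positivity) hv.le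
    _ ≤ b * (l ^ 2 * (l * u) ^ m + v ^ m) := hpow
    _ ≤ b * (l ^ 2 * W ^ m + W ^ m) := by gcongr
    _ = b * (l ^ 2 + 1) * W ^ m := by ring

end NearPowers

namespace PositiveSeparable

variable {P : ℤ[X]}

theorem exists_abs_absEval_sub_mul_pow_le (h : PositiveSeparable P) :
    ∃ c C : ℝ, 0 < C ∧ ∀ n : ℕ, n ≠ 0 →
      |(absEval P n : ℝ) - P.leadingCoeff * (n + c) ^ P.natDegree| ≤
        C * (n : ℝ) ^ (P.natDegree - 2) := by
  have hinj : Function.Injective (Int.castRingHom ℝ) := Int.cast_injective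
  have hdeg : (P.map (Int.castRingHom ℝ)).natDegree = P.natDegree :=
    natDegree_map_eq_of_injective hinj P
  obtain ⟨c, C, hC, hbound⟩ :=
    exists_abs_eval_sub_mul_pow_le (h.two_le_natDegree.trans_eq hdeg.symm)
  refine ⟨c, C, hC, fun n hn ↦ ?_⟩
  simpa [hdeg, leadingCoeff_map_of_injective hinj, h.cast_absEval_eq_eval hn] using
    hbound n (by exact_mod_cast Nat.one_le_iff_ne_zero.mpr hn)

theorem exists_near_line_of_ratioSolution (h : PositiveSeparable P) :
    ∃ c C : ℝ, 1 ≤ C ∧ ∀ (s t : ℕ) (q : ℕ × ℕ) (l : ℝ), s ≠ 0 → IsRatioSolution P s t q →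
      C ≤ q.1 → C ≤ q.2 → 0 < l → l ^ P.natDegree = t / s →
        |l * (q.1 + c) - (q.2 + c)| * q.2 ≤ C * (l ^ 2 + 1) := by
  obtain ⟨c, C, hC, happrox⟩ := h.exists_abs_absEval_sub_mul_pow_le
  set k := P.natDegree
  set b := C * 2 ^ (k - 2)
  have hb : 0 < b := by positivity
  refine ⟨c, 2 * |c| + 1 + 2 * b, by linarith [abs_nonneg c], fun s t q l hs hq hx hy hl hlk ↦ ?_⟩
  have hlc : (1 : ℝ) ≤ P.leadingCoeff := by exact_mod_cast h.leadingCoeff_pos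
  have hshift : ∀ n : ℕ, 2 * |c| + 1 + 2 * b ≤ n → (n : ℝ) ≤ 2 * (n + c) ∧ 0 < n + c := by
    intro n hn
    have := neg_abs_le c
    constructor <;> linarith [abs_nonneg c]
  have hnear : ∀ n : ℕ, n ≠ 0 → 2 * |c| + 1 + 2 * b ≤ n →
      |(absEval P n : ℝ) - P.leadingCoeff * (n + c) ^ k| ≤ b * (n + c) ^ (k - 2) := by
    intro n hn hle
    refine (happrox n hn).trans ?_
    rw [mul_assoc, ← mul_pow]
    gcongr
    exact (hshift n hle).1
  have hmax := abs_sub_mul_max_le_of_near_powers h.two_le_natDegree hlc (by positivity)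
    (Nat.cast_nonneg t) (hshift q.1 hx).2 (hshift q.2 hy).2 hb.le hl
    (hnear q.1 hq.fst_ne_zero hx) (hnear q.2 hq.snd_ne_zero hy)
    (by exact_mod_cast hq.mul_eq_mul) hlk
  set W := max (l * (q.1 + c)) (q.2 + c)
  have hyW : (q.2 : ℝ) ≤ 2 * W := (hshift q.2 hy).1.trans (by gcongr; exact le_max_right _ _)
  calc |l * (q.1 + c) - (q.2 + c)| * q.2 ≤ |l * (q.1 + c) - (q.2 + c)| * (2 * W) := by gcongr
    _ = 2 * (|l * (q.1 + c) - (q.2 + c)| * W) := by ring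
    _ ≤ 2 * (b * (l ^ 2 + 1)) := by gcongr
    _ ≤ (2 * |c| + 1 + 2 * b) * (l ^ 2 + 1) := by
        rw [← mul_assoc]
        gcongr
        linarith [abs_nonneg c]

theorem exists_bound_of_absEval_eq (h : PositiveSeparable P) :
    ∃ B : ℕ, ∀ x y : ℕ, x ≠ 0 → y ≠ 0 → absEval P x = absEval P y → x ≠ y → y ≤ B := by
  obtain ⟨c, C, hC, hline⟩ := h.exists_near_line_of_ratioSolution
  obtain ⟨A, hA, hgrowth⟩ := exists_pow_natDegree_le_absEval fun n ↦ h.absEval_ne_zero (n := n)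
  set V := ∑ n ∈ range (⌈C⌉₊ + 1), absEval P n
  refine ⟨⌈2 * C + A * V⌉₊, fun x y hx hy hxy hne ↦ ?_⟩
  suffices hbound : (y : ℝ) ≤ 2 * C + A * V by exact_mod_cast hbound.trans (Nat.le_ceil _)
  have hAV : 0 ≤ A * V := by positivity
  rcases lt_or_ge (x : ℝ) C with hxC | hxC
  · have hle : absEval P x ≤ V := single_le_sum (f := absEval P) (fun _ _ ↦ Nat.zero_le _)
      (mem_range.mpr (Nat.lt_succ_of_le (Nat.cast_le.mp (hxC.le.trans (Nat.le_ceil C)))))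
    calc (y : ℝ) ≤ (y : ℝ) ^ P.natDegree :=
          le_self_pow₀ (by exact_mod_cast Nat.one_le_iff_ne_zero.mpr hy) h.natDegree_ne_zero
      _ ≤ A * absEval P y := hgrowth y hy
      _ ≤ A * V := by rw [← hxy]; gcongr
      _ ≤ 2 * C + A * V := by linarith
  rcases lt_or_ge (y : ℝ) C with hyC | hyC
  · linarith
  have hnear := hline 1 1 (x, y) 1 one_ne_zero ⟨hx, hy, by simp [hxy]⟩ hxC hyC one_pos (by simp)
  have hgap : (1 : ℝ) ≤ |1 * ((x : ℝ) + c) - (y + c)| := by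
    have : (1 : ℤ) ≤ |(x : ℤ) - y| := Int.one_le_abs (sub_ne_zero.mpr (by exact_mod_cast hne))
    rw [one_mul, add_sub_add_right_eq_sub]
    exact_mod_cast this
  calc (y : ℝ) ≤ |1 * ((x : ℝ) + c) - (y + c)| * y :=
        le_mul_of_one_le_left (Nat.cast_nonneg y) hgap
    _ ≤ C * (1 ^ 2 + 1) := hnear
    _ ≤ 2 * C + A * V := by linarith

end PositiveSeparable

end Approximation

section Bins

open Finset Polynomial

theorem abs_sub_le_of_floor_div_eq {x y H : ℝ} (hx : 0 ≤ x) (hy : 0 ≤ y) (hH : 0 < H)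
    (h : ⌊x / H⌋₊ = ⌊y / H⌋₊) : |x - y| ≤ H := by
  have hxlo := Nat.floor_le (div_nonneg hx hH.le)
  have hxhi := Nat.lt_floor_add_one (x / H)
  have hylo := Nat.floor_le (div_nonneg hy hH.le)
  have hyhi := Nat.lt_floor_add_one (y / H)
  rw [h] at hxlo hxhi
  rw [le_div_iff₀ hH] at hxlo hylo
  rw [div_lt_iff₀ hH] at hxhi hyhi
  rw [abs_le]
  constructor <;> linarith

theorem collinear_of_near_line {q r w : ℕ × ℕ} {l c H η : ℝ} (hHη : 4 * (H * η) < 1)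
    (hr : |(r.1 : ℝ) - q.1| ≤ H) (hw : |(w.1 : ℝ) - q.1| ≤ H)
    (hqη : |l * (q.1 + c) - (q.2 + c)| ≤ η) (hrη : |l * (r.1 + c) - (r.2 + c)| ≤ η)
    (hwη : |l * (w.1 + c) - (w.2 + c)| ≤ η) :
    ((r.1 : ℤ) - q.1) * (w.2 - q.2) = (w.1 - q.1) * (r.2 - q.2) := by
  set θq := l * (q.1 + c) - (q.2 + c) with hθq
  set θr := l * (r.1 + c) - (r.2 + c) with hθr
  set θw := l * (w.1 + c) - (w.2 + c) with hθw
  have hH : 0 ≤ H := (abs_nonneg _).trans hr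
  have hlt : |((r.1 : ℝ) - q.1) * (w.2 - q.2) - (w.1 - q.1) * (r.2 - q.2)| < 1 := by
    calc _ = |((w.1 : ℝ) - q.1) * (θr - θq) - (r.1 - q.1) * (θw - θq)| := by
          rw [hθq, hθr, hθw]
          ring_nf
      _ ≤ |(w.1 : ℝ) - q.1| * |θr - θq| + |(r.1 : ℝ) - q.1| * |θw - θq| := by
          rw [← abs_mul, ← abs_mul]
          exact abs_sub _ _
      _ ≤ H * (η + η) + H * (η + η) := by
          gcongr
          · exact (abs_sub _ _).trans (add_le_add hrη hqη)
          · exact (abs_sub _ _).trans (add_le_add hwη hqη)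
      _ < 1 := by linarith
  exact sub_eq_zero.mp (Int.abs_lt_one_iff.mp (by exact_mod_cast hlt))

theorem sq_add_one_le_of_pow_eq_div {k s t : ℕ} {l m : ℝ} (hk : 2 ≤ k) (hs : s ≠ 0) (hl : 0 ≤ l)
    (hlk : l ^ k = t / s) (hm : 1 ≤ m) (htm : t ≤ m) : l ^ 2 + 1 ≤ 2 * m := by
  rcases le_total l 1 with hl1 | hl1
  · nlinarith
  · have hle : l ^ 2 ≤ l ^ k := pow_le_pow_right₀ hl1 hk
    have : (t : ℝ) / s ≤ t :=
      div_le_self (Nat.cast_nonneg t) (by exact_mod_cast Nat.one_le_iff_ne_zero.mpr hs)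
    linarith

namespace PositiveSeparable

variable {P : ℤ[X]} {s t : ℕ} {T : Finset (ℕ × ℕ)}

theorem card_ratioSolution_near_line (h : PositiveSeparable P) (hs : s ≠ 0) (ht : t ≠ 0)
    (hst : s ≠ t) (hT : ∀ q ∈ T, IsRatioSolution P s t q) {M : ℕ} (hM : ∀ q ∈ T, q.1 ≤ M)
    {l c H η : ℝ} (hH : 0 < H) (hHη : 4 * (H * η) < 1)
    (hnear : ∀ q ∈ T, |l * (q.1 + c) - (q.2 + c)| ≤ η) :
    #T ≤ P.natDegree * (⌊M / H⌋₊ + 1) := by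
  set bin : ℕ × ℕ → ℕ := fun q ↦ ⌊(q.1 : ℝ) / H⌋₊
  have hclose : ∀ q r : ℕ × ℕ, bin q = bin r → |(q.1 : ℝ) - r.1| ≤ H := fun q r hqr ↦
    abs_sub_le_of_floor_div_eq (Nat.cast_nonneg _) (Nat.cast_nonneg _) hH hqr
  calc #T ≤ P.natDegree * #(T.image bin) := by
        refine card_le_mul_card_image T P.natDegree fun j _ ↦ ?_
        refine h.card_ratioSolution_of_collinear hs ht hst
          (fun q hq ↦ hT q (mem_filter.mp hq).1) fun q hq r hr w hw ↦ ?_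
        rw [mem_filter] at hq hr hw
        exact collinear_of_near_line hHη (hclose r q (hr.2.trans hq.2.symm))
          (hclose w q (hw.2.trans hq.2.symm)) (hnear q hq.1) (hnear r hr.1) (hnear w hw.1)
    _ ≤ P.natDegree * #(range (⌊M / H⌋₊ + 1)) := by
        gcongr
        refine image_subset_iff.mpr fun q hq ↦ mem_range.mpr (Nat.lt_succ_of_le ?_)
        have : (q.1 : ℝ) ≤ M := by exact_mod_cast hM q hq
        exact Nat.floor_le_floor (by gcongr)
    _ = P.natDegree * (⌊M / H⌋₊ + 1) := by rw [card_range]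

theorem exists_card_ratioSolution_of_large_le (h : PositiveSeparable P) :
    ∃ C : ℝ, 1 ≤ C ∧ ∀ (M s t : ℕ) (T : Finset (ℕ × ℕ)), M ≠ 0 → s ≠ 0 → t ≠ 0 → s ≠ t →
      (t : ℝ) ≤ (M : ℝ) ^ (1 / 12 : ℝ) → (∀ q ∈ T, IsRatioSolution P s t q) →
      (∀ q ∈ T, q.1 ≤ M) →
      (∀ q ∈ T, C + (M : ℝ) ^ (1 / 2 : ℝ) ≤ q.1 ∧ C + (M : ℝ) ^ (1 / 2 : ℝ) ≤ q.2) →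
      (#T : ℝ) ≤ P.natDegree * (16 * C * (M : ℝ) ^ (7 / 12 : ℝ) + 1) := by
  obtain ⟨c, C, hC, hline⟩ := h.exists_near_line_of_ratioSolution
  set k := P.natDegree
  refine ⟨C, hC, fun M s t T hM hs ht hst htM hT hTM hlarge ↦ ?_⟩
  have hM0 : (0 : ℝ) < M := by positivity
  have hM1 : (1 : ℝ) ≤ M := by exact_mod_cast Nat.one_le_iff_ne_zero.mpr hM
  set m := (M : ℝ) ^ (1 / 12 : ℝ)
  set L := (M : ℝ) ^ (5 / 12 : ℝ)
  have hm : 1 ≤ m := Real.one_le_rpow hM1 (by norm_num)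
  have hL : 0 < L := by positivity
  have hsplit : (M : ℝ) ^ (1 / 2 : ℝ) = L * m := by rw [← Real.rpow_add hM0]; norm_num
  set l : ℝ := ((t : ℝ) / s) ^ (k : ℝ)⁻¹
  have hl : 0 < l := by positivity
  have hlk : l ^ k = (t : ℝ) / s := Real.rpow_inv_natCast_pow (by positivity) h.natDegree_ne_zero
  have hl2 : l ^ 2 + 1 ≤ 2 * m := sq_add_one_le_of_pow_eq_div h.two_le_natDegree hs hl.le hlk hm htM
  have hnear : ∀ q ∈ T, |l * (q.1 + c) - (q.2 + c)| ≤ 2 * C / L := by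
    intro q hq
    rw [le_div_iff₀ hL]
    refine le_of_mul_le_mul_right ?_ (zero_lt_one.trans_le hm)
    calc |l * (q.1 + c) - (q.2 + c)| * L * m = |l * (q.1 + c) - (q.2 + c)| * (L * m) := by ring
      _ ≤ |l * (q.1 + c) - (q.2 + c)| * q.2 := by gcongr; linarith [(hlarge q hq).2]
      _ ≤ C * (l ^ 2 + 1) := hline s t q l hs (hT q hq)
          ((le_add_of_nonneg_right (by positivity)).trans (hlarge q hq).1)
          ((le_add_of_nonneg_right (by positivity)).trans (hlarge q hq).2) hl hlk
      _ ≤ C * (2 * m) := by gcongr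
      _ = 2 * C * m := by ring
  have hMH : (M : ℝ) / (L / (16 * C)) = 16 * C * (M : ℝ) ^ (7 / 12 : ℝ) := by
    have hML : (M : ℝ) = (M : ℝ) ^ (7 / 12 : ℝ) * L := by rw [← Real.rpow_add hM0]; norm_num
    rw [div_div_eq_mul_div, div_eq_iff hL.ne']
    linear_combination 16 * C * hML
  have hcard := h.card_ratioSolution_near_line hs ht hst hT hTM (H := L / (16 * C))
    (by positivity) (by field_simp; norm_num) hnear
  rw [hMH] at hcard
  calc (#T : ℝ) ≤ k * (⌊16 * C * (M : ℝ) ^ (7 / 12 : ℝ)⌋₊ + 1) := by exact_mod_cast hcard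
    _ ≤ k * (16 * C * (M : ℝ) ^ (7 / 12 : ℝ) + 1) := by
        gcongr
        exact Nat.floor_le (by positivity)

theorem exists_card_ratioSolution_le (h : PositiveSeparable P) :
    ∃ C : ℝ, 0 < C ∧ ∀ (M s t : ℕ) (T : Finset (ℕ × ℕ)), M ≠ 0 → s ≠ 0 → t ≠ 0 → s ≠ t →
      (t : ℝ) ≤ (M : ℝ) ^ (1 / 12 : ℝ) → (∀ q ∈ T, IsRatioSolution P s t q) →
      (∀ q ∈ T, q.1 ≤ M) → (#T : ℝ) ≤ C * (M : ℝ) ^ (3 / 4 : ℝ) := by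
  obtain ⟨C, hC, hlarge⟩ := h.exists_card_ratioSolution_of_large_le
  set k := P.natDegree
  have hk : 0 < k := Nat.pos_of_ne_zero h.natDegree_ne_zero
  refine ⟨k * (16 * C + 1) + 2 * (k * (C + 2)), by positivity,
    fun M s t T hM hs ht hst htM hT hTM ↦ ?_⟩
  have hM1 : (1 : ℝ) ≤ M := by exact_mod_cast Nat.one_le_iff_ne_zero.mpr hM
  set Y := C + (M : ℝ) ^ (1 / 2 : ℝ)
  set R := (M : ℝ) ^ (3 / 4 : ℝ)
  have hR : 1 ≤ R := Real.one_le_rpow hM1 (by norm_num)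
  have hceil : (⌈Y⌉₊ : ℝ) ≤ (C + 2) * R := by
    have : (M : ℝ) ^ (1 / 2 : ℝ) ≤ R := Real.rpow_le_rpow_of_exponent_le hM1 (by norm_num)
    have := Nat.ceil_lt_add_one (show 0 ≤ Y by positivity)
    nlinarith
  have hcover : T ⊆ {q ∈ T | Y ≤ q.1 ∧ Y ≤ q.2} ∪ ({q ∈ T | q.1 < ⌈Y⌉₊} ∪
      {q ∈ T | q.2 < ⌈Y⌉₊}) := by
    intro q hq
    simp only [mem_union, mem_filter, Nat.lt_ceil, hq, true_and]
    grind
  have hbig := hlarge M s t {q ∈ T | Y ≤ q.1 ∧ Y ≤ q.2} hM hs ht hst htM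
    (fun q hq ↦ hT q (mem_filter.mp hq).1) (fun q hq ↦ hTM q (mem_filter.mp hq).1)
    fun q hq ↦ (mem_filter.mp hq).2
  have hfst : #{q ∈ T | q.1 < ⌈Y⌉₊} ≤ k * ⌈Y⌉₊ := h.card_ratioSolution_of_fst_lt hs
    (fun q hq ↦ hT q (mem_filter.mp hq).1) fun q hq ↦ (mem_filter.mp hq).2
  have hsnd : #{q ∈ T | q.2 < ⌈Y⌉₊} ≤ k * ⌈Y⌉₊ := h.card_ratioSolution_of_snd_lt ht
    (fun q hq ↦ hT q (mem_filter.mp hq).1) fun q hq ↦ (mem_filter.mp hq).2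
  calc (#T : ℝ) ≤ #{q ∈ T | Y ≤ q.1 ∧ Y ≤ q.2} +
        ((#{q ∈ T | q.1 < ⌈Y⌉₊} : ℝ) + #{q ∈ T | q.2 < ⌈Y⌉₊}) := by
        exact_mod_cast (card_le_card hcover).trans ((card_union_le _ _).trans
          (Nat.add_le_add_left (card_union_le _ _) _))
    _ ≤ k * (16 * C * (M : ℝ) ^ (7 / 12 : ℝ) + 1) + (k * ⌈Y⌉₊ + k * ⌈Y⌉₊) := by
        gcongr <;> exact_mod_cast ‹_›
    _ ≤ k * (16 * C * R + R) + (k * ((C + 2) * R) + k * ((C + 2) * R)) := by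
        gcongr
        exact Real.rpow_le_rpow_of_exponent_le hM1 (by norm_num)
    _ = (k * (16 * C + 1) + 2 * (k * (C + 2))) * R := by ring

end PositiveSeparable

end Bins

/-! ### Normalised solutions of the square equation -/

section CofactorProduct

theorem dvd_of_isSquare_mul {m x : ℕ} (hm : Squarefree m) (h : IsSquare (m * x)) : m ∣ x := by
  obtain ⟨r, hr⟩ := h
  obtain ⟨c, rfl⟩ : m ∣ r :=
    (hm.dvd_pow_iff_dvd two_ne_zero).mp ⟨x, by rw [pow_two, hr]⟩
  exact ⟨c * c, Nat.eq_of_mul_eq_mul_left (Nat.pos_of_ne_zero hm.ne_zero) (by rw [hr]; ring)⟩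

theorem isSquare_of_isSquare_sq_mul {a x : ℕ} (ha : a ≠ 0) (h : IsSquare (a ^ 2 * x)) :
    IsSquare x := by
  obtain ⟨r, hr⟩ := h
  obtain ⟨c, rfl⟩ : a ∣ r :=
    (Nat.pow_dvd_pow_iff two_ne_zero).mp ⟨x, by rw [pow_two r, hr]⟩
  exact ⟨c, Nat.eq_of_mul_eq_mul_left (show 0 < a ^ 2 by positivity) (by rw [hr]; ring)⟩

theorem eq_of_isSquare_mul {m n : ℕ} (hm : Squarefree m) (hn : Squarefree n)
    (h : IsSquare (m * n)) : m = n :=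
  Nat.dvd_antisymm (dvd_of_isSquare_mul hm h) (dvd_of_isSquare_mul hn (by rwa [mul_comm]))

theorem eq_of_isSquare_mul_of_isSquare_mul {a m n : ℕ} (ha : a ≠ 0) (hm : Squarefree m)
    (hn : Squarefree n) (ham : IsSquare (a * m)) (han : IsSquare (a * n)) : m = n := by
  refine eq_of_isSquare_mul hm hn (isSquare_of_isSquare_sq_mul ha ?_)
  rw [show a ^ 2 * (m * n) = a * m * (a * n) by ring]
  exact ham.mul han

theorem le_gcd_mul_gcd_of_dvd_mul {m x y : ℕ} (hm : m ≠ 0) (h : m ∣ x * y) :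
    m ≤ m.gcd x * m.gcd y := by
  have hpos : 0 < m := Nat.pos_of_ne_zero hm
  refine Nat.le_of_dvd (Nat.mul_pos (Nat.gcd_pos_of_pos_left _ hpos)
    (Nat.gcd_pos_of_pos_left _ hpos)) ?_
  calc m = m.gcd (x * y) := (Nat.gcd_eq_left h).symm
    _ ∣ m.gcd x * m.gcd y := Nat.gcd_mul_right_dvd_mul_gcd _ _ _

/-- The product of the cofactors of `gcd a b` in `a` and `b`. For squarefree `a` and `b` it is the
squarefree part of `a * b`. -/
def cofactorProduct (a b : ℕ) : ℕ := a / a.gcd b * (b / a.gcd b)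

variable {a b x : ℕ}

theorem mul_eq_gcd_sq_mul_cofactorProduct (a b : ℕ) :
    a * b = a.gcd b ^ 2 * cofactorProduct a b := by
  calc a * b = (a.gcd b * (a / a.gcd b)) * (a.gcd b * (b / a.gcd b)) := by
        rw [Nat.mul_div_cancel' (Nat.gcd_dvd_left a b), Nat.mul_div_cancel' (Nat.gcd_dvd_right a b)]
    _ = a.gcd b ^ 2 * cofactorProduct a b := by rw [cofactorProduct]; ring

theorem squarefree_cofactorProduct (ha : Squarefree a) (hb : Squarefree b) :
    Squarefree (cofactorProduct a b) := by
  have hg : 0 < a.gcd b := Nat.gcd_pos_of_pos_left _ (Nat.pos_of_ne_zero ha.ne_zero)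
  exact (Nat.squarefree_mul (Nat.coprime_div_gcd_div_gcd hg)).mpr
    ⟨ha.squarefree_of_dvd (Nat.div_dvd_of_dvd (Nat.gcd_dvd_left _ _)),
      hb.squarefree_of_dvd (Nat.div_dvd_of_dvd (Nat.gcd_dvd_right _ _))⟩

theorem le_gcd_mul_cofactorProduct (a : ℕ) (hb : b ≠ 0) :
    a ≤ a.gcd b * cofactorProduct a b := by
  have hbg : 0 < b / a.gcd b := Nat.div_gcd_pos_of_pos_right _ (Nat.pos_of_ne_zero hb)
  calc a = a.gcd b * (a / a.gcd b) := (Nat.mul_div_cancel' (Nat.gcd_dvd_left a b)).symm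
    _ ≤ a.gcd b * (a / a.gcd b) * (b / a.gcd b) := Nat.le_mul_of_pos_right _ hbg
    _ = a.gcd b * cofactorProduct a b := mul_assoc _ _ _

theorem isSquare_cofactorProduct_mul (ha : a ≠ 0) (h : IsSquare (a * b * x)) :
    IsSquare (cofactorProduct a b * x) := by
  rw [mul_eq_gcd_sq_mul_cofactorProduct a b, mul_assoc] at h
  exact isSquare_of_isSquare_sq_mul (Nat.gcd_ne_zero_left ha) h

open Finset in
theorem card_divisors_cofactorProduct_le (ha : Squarefree a) (hb : Squarefree b) :
    #(cofactorProduct a b).divisors ≤ 2 ^ #a.primeFactors * 2 ^ #b.primeFactors := by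
  have hab : a * b ≠ 0 := mul_ne_zero ha.ne_zero hb.ne_zero
  have hdvd : cofactorProduct a b ∣ a * b :=
    mul_eq_gcd_sq_mul_cofactorProduct a b ▸ dvd_mul_left _ _
  rw [card_divisors_of_squarefree (squarefree_cofactorProduct ha hb), ← pow_add]
  refine Nat.pow_le_pow_right two_pos ((card_le_card (Nat.primeFactors_mono hdvd hab)).trans ?_)
  rw [Nat.primeFactors_mul ha.ne_zero hb.ne_zero]
  exact card_union_le _ _

end CofactorProduct

section NormalizedSolution

/-- A solution `(a, b, c, d)` of "`f a * f b * f c * f d` is a square" in squarefree values of `f`,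
arranged by symmetry: `b, c ≤ a`, the value at `b` shares the most with the value at `a`, and the
value at `c` shares at least as much as the value at `d` with the squarefree part of `f a * f b`. -/
structure IsNormalizedSolution (f : ℕ → ℕ) (a b c d : ℕ) : Prop where
  snd_ne_zero : b ≠ 0
  third_ne_zero : c ≠ 0
  fourth_ne_zero : d ≠ 0
  snd_le : b ≤ a
  third_le : c ≤ a
  squarefree_fst : Squarefree (f a)
  squarefree_snd : Squarefree (f b)
  squarefree_third : Squarefree (f c)
  squarefree_fourth : Squarefree (f d)
  isSquare : IsSquare (f a * f b * f c * f d)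
  third_ne_fourth : f c ≠ f d
  gcd_third_le : (f a).gcd (f c) ≤ (f a).gcd (f b)
  gcd_fourth_le : (f a).gcd (f d) ≤ (f a).gcd (f b)
  gcd_cofactorProduct_le :
    (f d).gcd (cofactorProduct (f a) (f b)) ≤ (f c).gcd (cofactorProduct (f a) (f b))

namespace IsNormalizedSolution

variable {f : ℕ → ℕ} {a b c d : ℕ}

theorem squarefree_cofactorProduct (w : IsNormalizedSolution f a b c d) :
    Squarefree (cofactorProduct (f a) (f b)) :=
  _root_.squarefree_cofactorProduct w.squarefree_fst w.squarefree_snd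

theorem isSquare_cofactorProduct_mul (w : IsNormalizedSolution f a b c d) :
    IsSquare (cofactorProduct (f a) (f b) * (f c * f d)) :=
  _root_.isSquare_cofactorProduct_mul w.squarefree_fst.ne_zero (by
    simpa only [mul_assoc] using w.isSquare)

theorem fst_le_gcd_pow_three (w : IsNormalizedSolution f a b c d) :
    f a ≤ (f a).gcd (f b) ^ 3 := by
  have ha := w.squarefree_fst.ne_zero
  have hdvd : f a ∣ f b * f c * f d := dvd_of_isSquare_mul w.squarefree_fst (by
    simpa only [mul_assoc] using w.isSquare)
  have hbc : (f a).gcd (f b * f c) ≤ (f a).gcd (f b) * (f a).gcd (f c) :=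
    Nat.le_of_dvd (Nat.pos_of_ne_zero
      (mul_ne_zero (Nat.gcd_ne_zero_left ha) (Nat.gcd_ne_zero_left ha)))
      (Nat.gcd_mul_right_dvd_mul_gcd _ _ _)
  calc f a ≤ (f a).gcd (f b * f c) * (f a).gcd (f d) := le_gcd_mul_gcd_of_dvd_mul ha hdvd
    _ ≤ (f a).gcd (f b) * (f a).gcd (f b) * (f a).gcd (f b) := by
        gcongr
        · exact hbc.trans (Nat.mul_le_mul_left _ w.gcd_third_le)
        · exact w.gcd_fourth_le
    _ = (f a).gcd (f b) ^ 3 := by ring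

theorem cofactorProduct_le_gcd_sq (w : IsNormalizedSolution f a b c d) :
    cofactorProduct (f a) (f b) ≤ (f c).gcd (cofactorProduct (f a) (f b)) ^ 2 := by
  set R := cofactorProduct (f a) (f b)
  have hdvd : R ∣ f c * f d :=
    dvd_of_isSquare_mul w.squarefree_cofactorProduct w.isSquare_cofactorProduct_mul
  calc R ≤ R.gcd (f c) * R.gcd (f d) :=
        le_gcd_mul_gcd_of_dvd_mul w.squarefree_cofactorProduct.ne_zero hdvd
    _ = (f c).gcd R * (f d).gcd R := by rw [Nat.gcd_comm R, Nat.gcd_comm R]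
    _ ≤ (f c).gcd R * (f c).gcd R := Nat.mul_le_mul_left _ w.gcd_cofactorProduct_le
    _ = (f c).gcd R ^ 2 := (pow_two _).symm

theorem exists_ratio (w : IsNormalizedSolution f a b c d) :
    ∃ s t : ℕ, s * t = cofactorProduct (f a) (f b) ∧ s ≠ t ∧ t * f c = s * f d := by
  set g := (f c).gcd (f d)
  have hc : g * (f c / g) = f c := Nat.mul_div_cancel' (Nat.gcd_dvd_left _ _)
  have hd : g * (f d / g) = f d := Nat.mul_div_cancel' (Nat.gcd_dvd_right _ _)
  refine ⟨f c / g, f d / g, ?_, fun h ↦ w.third_ne_fourth (by rw [← hc, ← hd, h]), ?_⟩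
  · refine eq_of_isSquare_mul
      (_root_.squarefree_cofactorProduct w.squarefree_third w.squarefree_fourth)
      w.squarefree_cofactorProduct
      (_root_.isSquare_cofactorProduct_mul w.squarefree_third.ne_zero ?_)
    rw [mul_comm]
    exact w.isSquare_cofactorProduct_mul
  · calc f d / g * f c = f d / g * (g * (f c / g)) := by rw [hc]
      _ = f c / g * (g * (f d / g)) := by ring
      _ = f c / g * f d := by rw [hd]

theorem fourth_eq {d' : ℕ} (w : IsNormalizedSolution f a b c d)
    (w' : IsNormalizedSolution f a b c d') : f d = f d' :=
  eq_of_isSquare_mul_of_isSquare_mul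
    (mul_ne_zero (mul_ne_zero w.squarefree_fst.ne_zero w.squarefree_snd.ne_zero)
      w.squarefree_third.ne_zero)
    w.squarefree_fourth w'.squarefree_fourth w.isSquare w'.isSquare

end IsNormalizedSolution

end NormalizedSolution

/-! ### Counting normalised solutions -/

section RealBounds

variable {C x g R : ℝ}

theorem div_le_mul_rpow_of_sq_le_cube (hC : 1 ≤ C) (hx : 0 ≤ x) (hg : 0 < g)
    (hcube : x ^ 2 ≤ C * g ^ 3) : x / g ≤ C * x ^ (1 / 3 : ℝ) := by
  have hroot : (x ^ (1 / 3 : ℝ)) ^ 3 = x := by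
    rw [← Real.rpow_natCast, ← Real.rpow_mul hx]; norm_num
  refine le_of_pow_le_pow_left₀ three_ne_zero (by positivity) ?_
  calc (x / g) ^ 3 = x ^ 2 * x / g ^ 3 := by rw [div_pow]; ring
    _ ≤ C * g ^ 3 * x / g ^ 3 := by gcongr
    _ = C * x := by field_simp
    _ ≤ C ^ 3 * x := by gcongr; exact le_self_pow₀ hC three_ne_zero
    _ = (C * x ^ (1 / 3 : ℝ)) ^ 3 := by rw [mul_pow, hroot]

theorem div_mul_div_sqrt_le (hC : 1 ≤ C) (hx : 0 ≤ x) (hg : 0 < g) (hR : 0 < R)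
    (hcube : x ^ 2 ≤ C * g ^ 3) (hgR : x ^ 2 ≤ C * (g * R)) :
    x / g * (x / √R) ≤ C * x ^ (2 / 3 : ℝ) := by
  refine le_of_pow_le_pow_left₀ two_ne_zero (by positivity) ?_
  have hroot : x ^ (1 / 3 : ℝ) * x = (x ^ (2 / 3 : ℝ)) ^ 2 := by
    rw [← Real.rpow_natCast, ← Real.rpow_mul hx, ← Real.rpow_add_one' hx (by norm_num)]
    norm_num
  calc (x / g * (x / √R)) ^ 2 = x / g * (x ^ 2 * x / (g * R)) := by
        rw [mul_pow, div_pow x √R, Real.sq_sqrt hR.le]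
        field_simp
    _ ≤ C * x ^ (1 / 3 : ℝ) * (C * (g * R) * x / (g * R)) := by
        gcongr
        exact div_le_mul_rpow_of_sq_le_cube hC hx hg hcube
    _ = C ^ 2 * (x ^ (1 / 3 : ℝ) * x) := by field_simp
    _ = (C * x ^ (2 / 3 : ℝ)) ^ 2 := by rw [hroot, mul_pow]

theorem div_sqrt_le_rpow (hx : 0 < x) (hRx : x ^ (1 / 12 : ℝ) ≤ R) :
    x / √R ≤ x ^ (23 / 24 : ℝ) := by
  have hsqrt : x ^ (1 / 24 : ℝ) ≤ √R := by
    refine Real.le_sqrt_of_sq_le (le_trans (le_of_eq ?_) hRx)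
    rw [← Real.rpow_natCast, ← Real.rpow_mul hx.le]
    norm_num
  calc x / √R ≤ x / x ^ (1 / 24 : ℝ) := by gcongr
    _ = x ^ (23 / 24 : ℝ) := by rw [← Real.rpow_one_sub' hx.le (by norm_num)]; norm_num

theorem div_sqrt_add_one_mul_div_add_one_le (hC : 1 ≤ C) (hx : 1 ≤ x) (hg : 0 < g)
    (hcube : x ^ 2 ≤ C * g ^ 3) (hgR : x ^ 2 ≤ C * (g * R)) (hRx : x ^ (1 / 12 : ℝ) ≤ R) :
    (x / √R + 1) * (x / g + 1) ≤ 4 * C * x ^ (23 / 24 : ℝ) := by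
  have hx0 : 0 < x := by linarith
  have hR : 0 < R := lt_of_lt_of_le (by positivity) hRx
  have hB := div_sqrt_le_rpow hx0 hRx
  set z := x ^ (23 / 24 : ℝ)
  have hz : 1 ≤ z := Real.one_le_rpow hx (by norm_num)
  have hCz : z ≤ C * z := le_mul_of_one_le_left (by positivity) hC
  have hA : x / g ≤ C * z := (div_le_mul_rpow_of_sq_le_cube hC hx0.le hg hcube).trans (by
    gcongr
    exact Real.rpow_le_rpow_of_exponent_le hx (by norm_num))
  have hAB : x / g * (x / √R) ≤ C * z := (div_mul_div_sqrt_le hC hx0.le hg hR hcube hgR).trans (by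
    gcongr
    exact Real.rpow_le_rpow_of_exponent_le hx (by norm_num))
  linarith [show (x / √R + 1) * (x / g + 1) = x / g * (x / √R) + x / √R + x / g + 1 by ring]

theorem div_le_of_sq_le_mul_of_le_rpow (hC : 0 ≤ C) (hx : 1 ≤ x) (hg : 0 < g)
    (hgR : x ^ 2 ≤ C * (g * R)) (hRx : R ≤ x ^ (1 / 12 : ℝ)) : x / g ≤ C := by
  have hRx' : R ≤ x := hRx.trans (Real.rpow_le_self_of_one_le hx (by norm_num))
  rw [div_le_iff₀ hg]
  refine le_of_mul_le_mul_right (?_ : x * x ≤ C * g * x) (by linarith)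
  calc x * x = x ^ 2 := by ring
    _ ≤ C * (g * x) := hgR.trans (by gcongr)
    _ = C * g * x := by ring

end RealBounds

section CountNormalized

open Finset Polynomial

theorem card_image_snd_filter_fst_eq {α β : Type*} [DecidableEq α] [DecidableEq β]
    (T : Finset (α × β)) (x : α) :
    #({q ∈ T | q.1 = x}.image Prod.snd) = #{q ∈ T | q.1 = x} := by
  refine card_image_of_injOn fun q hq r hr hqr ↦ Prod.ext ?_ hqr
  exact (mem_filter.mp hq).2.trans (mem_filter.mp hr).2.symm

theorem exists_card_dvd_absEval_le_rpow {P : ℤ[X]}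
    (hsep : (P.map (Int.castRingHom ℚ)).Separable) (hP : ∀ n : ℕ, n ≠ 0 → absEval P n ≠ 0)
    {ε : ℝ} (hε : 0 < ε) : ∃ C : ℝ, 0 < C ∧ ∀ M q : ℕ, Squarefree q →
      (#{n ∈ Icc 1 M | q ∣ absEval P n} : ℝ) ≤ C * (M : ℝ) ^ ε * (M / q + 1) := by
  set m := P.natDegree + 1
  have hm : (0 : ℝ) < m := by positivity
  obtain ⟨C₁, hC₁, hroot⟩ := exists_rootCount_le_rpow hsep (div_pos hε hm)
  obtain ⟨C₂, hC₂, hgrowth⟩ := exists_absEval_le P (Nat.le_succ P.natDegree)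
  refine ⟨C₁ * C₂ ^ (ε / m), by positivity, fun M q hq ↦ ?_⟩
  rcases eq_empty_or_nonempty {n ∈ Icc 1 M | q ∣ absEval P n} with hempty | ⟨n, hn⟩
  · rw [hempty, card_empty, Nat.cast_zero]
    positivity
  obtain ⟨hnM, hqn⟩ := mem_filter.mp hn
  obtain ⟨hn1, hnM⟩ := mem_Icc.mp hnM
  have hn0 : n ≠ 0 := Nat.one_le_iff_ne_zero.mp hn1
  have hqM : (q : ℝ) ≤ C₂ * (M : ℝ) ^ m :=
    calc (q : ℝ) ≤ absEval P n := by
          exact_mod_cast Nat.le_of_dvd (Nat.pos_of_ne_zero (hP n hn0)) hqn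
      _ ≤ C₂ * (n : ℝ) ^ m := hgrowth n hn0
      _ ≤ C₂ * (M : ℝ) ^ m := by gcongr
  refine (card_dvd_absEval_le P M (Nat.pos_of_ne_zero hq.ne_zero)).trans ?_
  gcongr
  calc (rootCount P q : ℝ) ≤ C₁ * (q : ℝ) ^ (ε / m) := (hroot q hq).1
    _ ≤ C₁ * (C₂ * (M : ℝ) ^ m) ^ (ε / m) := by gcongr
    _ = C₁ * C₂ ^ (ε / m) * (M : ℝ) ^ ε := by
        rw [Real.mul_rpow hC₂.le (by positivity), ← Real.rpow_natCast,
          ← Real.rpow_mul (by positivity), mul_div_cancel₀ _ hm.ne', mul_assoc]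

theorem card_image_fst_normalizedSolution_le {f : ℕ → ℕ} {a b : ℕ} {T : Finset (ℕ × ℕ)}
    (hT : ∀ q ∈ T, IsNormalizedSolution f a b q.1 q.2) :
    #(T.image Prod.fst) ≤ ∑ d ∈ (cofactorProduct (f a) (f b)).divisors with
      cofactorProduct (f a) (f b) ≤ d ^ 2, #{x ∈ Icc 1 a | d ∣ f x} := by
  refine (card_le_card (image_subset_iff.mpr fun q hq ↦ ?_)).trans card_biUnion_le
  have w := hT q hq
  simp only [mem_biUnion, mem_filter, mem_Icc, Nat.mem_divisors]
  exact ⟨_, ⟨⟨Nat.gcd_dvd_right _ _, w.squarefree_cofactorProduct.ne_zero⟩,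
    w.cofactorProduct_le_gcd_sq⟩, ⟨Nat.one_le_iff_ne_zero.mpr w.third_ne_zero, w.third_le⟩,
    Nat.gcd_dvd_left _ _⟩

theorem exists_card_divisors_cofactorProduct_le (P : ℤ[X]) {ε : ℝ} (hε : 0 < ε) :
    ∃ C : ℝ, 0 < C ∧ ∀ a b c d : ℕ, IsNormalizedSolution (absEval P) a b c d →
      (#(cofactorProduct (absEval P a) (absEval P b)).divisors : ℝ) ≤ C * (a : ℝ) ^ ε := by
  obtain ⟨C, hC, homega⟩ := exists_pow_card_primeFactors_absEval_le P 2 (half_pos hε)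
  refine ⟨C ^ 2, by positivity, fun a b c d w ↦ ?_⟩
  have ha : a ≠ 0 := (Nat.pos_of_ne_zero w.snd_ne_zero).trans_le w.snd_le |>.ne'
  calc (#(cofactorProduct (absEval P a) (absEval P b)).divisors : ℝ)
      ≤ (2 : ℕ) ^ #(absEval P a).primeFactors * (2 : ℕ) ^ #(absEval P b).primeFactors := by
        exact_mod_cast card_divisors_cofactorProduct_le w.squarefree_fst w.squarefree_snd
    _ ≤ (C * (a : ℝ) ^ (ε / 2)) * (C * (a : ℝ) ^ (ε / 2)) := by
        gcongr
        · exact homega a a ha le_rfl w.squarefree_fst.ne_zero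
        · exact homega b a w.snd_ne_zero w.snd_le w.squarefree_snd.ne_zero
    _ = C ^ 2 * (a : ℝ) ^ ε := by
        rw [mul_mul_mul_comm, ← Real.rpow_add (by positivity), add_halves, pow_two]

namespace PositiveSeparable

variable {P : ℤ[X]}

theorem card_normalizedSolution_le (h : PositiveSeparable P) {a b : ℕ} {T : Finset (ℕ × ℕ)}
    (hT : ∀ q ∈ T, IsNormalizedSolution (absEval P) a b q.1 q.2) :
    #T ≤ P.natDegree * #(T.image Prod.fst) := by
  refine card_le_mul_card_image T _ fun x _ ↦ ?_
  rw [← card_image_snd_filter_fst_eq]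
  rcases eq_empty_or_nonempty {q ∈ T | q.1 = x} with hempty | ⟨r, hr⟩
  · rw [hempty, image_empty, card_empty]
    exact Nat.zero_le _
  have hx : ∀ q ∈ T.filter (fun q ↦ q.1 = x), IsNormalizedSolution (absEval P) a b x q.2 := by
    intro q hq
    obtain ⟨hqT, rfl⟩ := mem_filter.mp hq
    exact hT q hqT
  refine h.card_le_natDegree_of_absEval_eq (v := absEval P r.2) fun y hy ↦ ?_
  obtain ⟨q, hq, rfl⟩ := mem_image.mp hy
  exact ⟨(hx q hq).fourth_ne_zero, (hx q hq).fourth_eq (hx r hr)⟩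

theorem exists_card_normalizedSolution_le_sqrt (h : PositiveSeparable P) {ε : ℝ} (hε : 0 < ε) :
    ∃ C : ℝ, 0 < C ∧ ∀ (a b : ℕ) (T : Finset (ℕ × ℕ)), a ≠ 0 →
      (∀ q ∈ T, IsNormalizedSolution (absEval P) a b q.1 q.2) →
      (#T : ℝ) ≤ C * (a : ℝ) ^ ε *
        (a / √(cofactorProduct (absEval P a) (absEval P b)) + 1) := by
  obtain ⟨C₁, hC₁, hcount⟩ := exists_card_dvd_absEval_le_rpow h.separable
    (fun _ ↦ h.absEval_ne_zero) (half_pos hε)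
  obtain ⟨C₂, hC₂, hdivisors⟩ := exists_card_divisors_cofactorProduct_le P (half_pos hε)
  have hdeg : 0 < P.natDegree := Nat.pos_of_ne_zero h.natDegree_ne_zero
  refine ⟨P.natDegree * (C₂ * C₁), by positivity, fun a b T ha hT ↦ ?_⟩
  rcases T.eq_empty_or_nonempty with rfl | ⟨q, hq⟩
  · rw [card_empty, Nat.cast_zero]
    positivity
  have hRdiv := hdivisors _ _ _ _ (hT q hq)
  have hR := (hT q hq).squarefree_cofactorProduct
  set R := cofactorProduct (absEval P a) (absEval P b)
  set D := {d ∈ R.divisors | R ≤ d ^ 2}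
  have hRpos : (0 : ℝ) < R := by exact_mod_cast Nat.pos_of_ne_zero hR.ne_zero
  have hterm : ∀ d ∈ D, (#{x ∈ Icc 1 a | d ∣ absEval P x} : ℝ) ≤
      C₁ * (a : ℝ) ^ (ε / 2) * (a / √R + 1) := by
    intro d hd
    obtain ⟨hdR, hRd⟩ := mem_filter.mp hd
    have hsqrt : √R ≤ d := Real.sqrt_le_iff.mpr ⟨by positivity, by exact_mod_cast hRd⟩
    refine (hcount a d (hR.squarefree_of_dvd (Nat.dvd_of_mem_divisors hdR))).trans ?_
    gcongr
  calc (#T : ℝ) ≤ P.natDegree * ∑ d ∈ D, (#{x ∈ Icc 1 a | d ∣ absEval P x} : ℝ) := by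
        exact_mod_cast (h.card_normalizedSolution_le hT).trans
          (Nat.mul_le_mul_left _ (card_image_fst_normalizedSolution_le hT))
    _ ≤ P.natDegree * (#D * (C₁ * (a : ℝ) ^ (ε / 2) * (a / √R + 1))) := by
        gcongr
        exact (sum_le_card_nsmul _ _ _ hterm).trans_eq (nsmul_eq_mul _ _)
    _ ≤ P.natDegree * (C₂ * (a : ℝ) ^ (ε / 2) * (C₁ * (a : ℝ) ^ (ε / 2) * (a / √R + 1))) := by
        gcongr
        exact le_trans (by exact_mod_cast card_filter_le _ _) hRdiv
    _ = P.natDegree * (C₂ * C₁) * ((a : ℝ) ^ (ε / 2) * (a : ℝ) ^ (ε / 2)) * (a / √R + 1) := by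
        ring
    _ = P.natDegree * (C₂ * C₁) * (a : ℝ) ^ ε * (a / √R + 1) := by
        rw [← Real.rpow_add (by positivity), add_halves]

theorem exists_card_normalizedSolution_le_of_cofactorProduct_le (h : PositiveSeparable P) :
    ∃ C : ℝ, 0 < C ∧ ∀ (a b : ℕ) (T : Finset (ℕ × ℕ)), a ≠ 0 →
      (cofactorProduct (absEval P a) (absEval P b) : ℝ) ≤ (a : ℝ) ^ (1 / 12 : ℝ) →
      (∀ q ∈ T, IsNormalizedSolution (absEval P) a b q.1 q.2) →
      (#T : ℝ) ≤ C * (a : ℝ) ^ (5 / 6 : ℝ) := by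
  obtain ⟨C, hC, hratio⟩ := h.exists_card_ratioSolution_le
  refine ⟨C, hC, fun a b T ha hRa hT ↦ ?_⟩
  classical
  set R := cofactorProduct (absEval P a) (absEval P b)
  let r (q p : ℕ × ℕ) : Prop := p.1 ≠ p.2 ∧ IsRatioSolution P p.1 p.2 q
  have hexists : ∀ q ∈ T, 1 ≤ (#(R.divisorsAntidiagonal.bipartiteAbove r q) : ℝ) := by
    intro q hq
    have w := hT q hq
    obtain ⟨s, t, hst, hne, heq⟩ := w.exists_ratio
    have hmem : (s, t) ∈ R.divisorsAntidiagonal.bipartiteAbove r q :=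
      mem_filter.mpr ⟨Nat.mem_divisorsAntidiagonal.mpr ⟨hst, w.squarefree_cofactorProduct.ne_zero⟩,
        hne, w.third_ne_zero, w.fourth_ne_zero, heq⟩
    exact_mod_cast card_pos.mpr ⟨_, hmem⟩
  have hfew : ∀ p ∈ R.divisorsAntidiagonal,
      (#(T.bipartiteBelow r p) : ℝ) ≤ C * (a : ℝ) ^ (3 / 4 : ℝ) := by
    rintro ⟨s, t⟩ hp
    obtain ⟨hst, hR⟩ := Nat.mem_divisorsAntidiagonal.mp hp
    obtain ⟨hs, ht⟩ : s ≠ 0 ∧ t ≠ 0 := mul_ne_zero_iff.mp (hst.trans_ne hR)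
    by_cases hne : s = t
    · rw [bipartiteBelow, filter_false_of_mem fun q _ hq ↦ hq.1 hne, card_empty, Nat.cast_zero]
      positivity
    have htR : t ≤ R := Nat.le_of_dvd (Nat.pos_of_ne_zero hR) (hst ▸ dvd_mul_left t s)
    exact hratio a s t _ ha hs ht hne (le_trans (by exact_mod_cast htR) hRa)
      (fun q hq ↦ (mem_filter.mp hq).2.2) fun q hq ↦ (hT q (mem_filter.mp hq).1).third_le
  have hcard : (#R.divisorsAntidiagonal : ℝ) ≤ (a : ℝ) ^ (1 / 12 : ℝ) := by
    rw [← Nat.map_div_right_divisors, card_map]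
    exact le_trans (by exact_mod_cast Nat.card_divisors_le_self R) hRa
  calc (#T : ℝ) ≤ #R.divisorsAntidiagonal * (C * (a : ℝ) ^ (3 / 4 : ℝ)) := by
        simpa only [nsmul_eq_mul, mul_one] using card_nsmul_le_card_nsmul r hexists hfew
    _ ≤ (a : ℝ) ^ (1 / 12 : ℝ) * (C * (a : ℝ) ^ (3 / 4 : ℝ)) := by gcongr
    _ = C * ((a : ℝ) ^ (1 / 12 : ℝ) * (a : ℝ) ^ (3 / 4 : ℝ)) := by ring
    _ = C * (a : ℝ) ^ (5 / 6 : ℝ) := by rw [← Real.rpow_add (by positivity)]; norm_num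

theorem exists_sq_le_gcd_of_normalizedSolution (h : PositiveSeparable P) :
    ∃ C : ℝ, 1 ≤ C ∧ ∀ a b c d : ℕ, IsNormalizedSolution (absEval P) a b c d →
      (a : ℝ) ^ 2 ≤ C * ((absEval P a).gcd (absEval P b) : ℝ) ^ 3 ∧
      (a : ℝ) ^ 2 ≤ C * ((absEval P a).gcd (absEval P b) *
        cofactorProduct (absEval P a) (absEval P b)) := by
  obtain ⟨C, hC, hgrowth⟩ := exists_pow_natDegree_le_absEval fun n ↦ h.absEval_ne_zero (n := n)
  refine ⟨max C 1, le_max_right _ _, fun a b c d w ↦ ?_⟩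
  have ha : 0 < a := (Nat.pos_of_ne_zero w.snd_ne_zero).trans_le w.snd_le
  have ha1 : (1 : ℝ) ≤ a := by exact_mod_cast ha
  have hsq : (a : ℝ) ^ 2 ≤ max C 1 * absEval P a :=
    calc (a : ℝ) ^ 2 ≤ (a : ℝ) ^ P.natDegree := pow_le_pow_right₀ ha1 h.two_le_natDegree
      _ ≤ C * absEval P a := hgrowth a ha.ne'
      _ ≤ max C 1 * absEval P a := by gcongr; exact le_max_left _ _
  refine ⟨hsq.trans ?_, hsq.trans ?_⟩ <;> gcongr
  · exact_mod_cast w.fst_le_gcd_pow_three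
  · exact_mod_cast le_gcd_mul_cofactorProduct _ w.squarefree_snd.ne_zero

theorem exists_card_normalizedSolution_mul_le (h : PositiveSeparable P) :
    ∃ C : ℝ, 0 < C ∧ ∀ (a b : ℕ) (T : Finset (ℕ × ℕ)), a ≠ 0 →
      (∀ q ∈ T, IsNormalizedSolution (absEval P) a b q.1 q.2) →
      (#T : ℝ) * (a / (absEval P a).gcd (absEval P b) + 1) ≤ C * (a : ℝ) ^ (97 / 100 : ℝ) := by
  obtain ⟨C₀, hC₀, hgcd⟩ := h.exists_sq_le_gcd_of_normalizedSolution
  obtain ⟨C₁, hC₁, hsqrt⟩ := h.exists_card_normalizedSolution_le_sqrt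
    (show (0 : ℝ) < 1 / 100 by norm_num)
  obtain ⟨C₂, hC₂, hratio⟩ := h.exists_card_normalizedSolution_le_of_cofactorProduct_le
  refine ⟨max (C₁ * (4 * C₀)) (C₂ * (C₀ + 1)), by positivity, fun a b T ha hT ↦ ?_⟩
  rcases T.eq_empty_or_nonempty with rfl | ⟨q, hq⟩
  · rw [card_empty, Nat.cast_zero, zero_mul]
    positivity
  obtain ⟨hcube, hgR⟩ := hgcd _ _ _ _ (hT q hq)
  have ha1 : (1 : ℝ) ≤ a := by exact_mod_cast Nat.one_le_iff_ne_zero.mpr ha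
  have hg : (0 : ℝ) < (absEval P a).gcd (absEval P b) := by
    exact_mod_cast Nat.gcd_pos_of_pos_left _ (Nat.pos_of_ne_zero (h.absEval_ne_zero ha))
  set g : ℝ := Nat.cast ((absEval P a).gcd (absEval P b))
  rcases le_total ((a : ℝ) ^ (1 / 12 : ℝ)) (cofactorProduct (absEval P a) (absEval P b))
    with hR | hR
  · calc (#T : ℝ) * (a / g + 1) ≤ C₁ * (a : ℝ) ^ (1 / 100 : ℝ) *
          ((a / √(cofactorProduct (absEval P a) (absEval P b)) + 1) * (a / g + 1)) := by
          rw [← mul_assoc]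
          gcongr
          exact hsqrt a b T ha hT
      _ ≤ C₁ * (a : ℝ) ^ (1 / 100 : ℝ) * (4 * C₀ * (a : ℝ) ^ (23 / 24 : ℝ)) := by
          gcongr _ * ?_
          exact div_sqrt_add_one_mul_div_add_one_le hC₀ ha1 hg hcube hgR hR
      _ = C₁ * (4 * C₀) * (a : ℝ) ^ (1 / 100 + 23 / 24 : ℝ) := by
          rw [Real.rpow_add (by positivity)]; ring
      _ ≤ max (C₁ * (4 * C₀)) (C₂ * (C₀ + 1)) * (a : ℝ) ^ (97 / 100 : ℝ) := by
          gcongr ?_ * ?_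
          exacts [le_max_left _ _, Real.rpow_le_rpow_of_exponent_le ha1 (by norm_num)]
  · calc (#T : ℝ) * (a / g + 1) ≤ C₂ * (a : ℝ) ^ (5 / 6 : ℝ) * (C₀ + 1) := by
          gcongr
          exacts [hratio a b T ha hR hT,
            div_le_of_sq_le_mul_of_le_rpow (by positivity) ha1 hg hgR hR]
      _ = C₂ * (C₀ + 1) * (a : ℝ) ^ (5 / 6 : ℝ) := by ring
      _ ≤ max (C₁ * (4 * C₀)) (C₂ * (C₀ + 1)) * (a : ℝ) ^ (97 / 100 : ℝ) := by
          gcongr ?_ * ?_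
          exacts [le_max_right _ _, Real.rpow_le_rpow_of_exponent_le ha1 (by norm_num)]

theorem exists_sum_le_of_mul_div_gcd_add_one_le (h : PositiveSeparable P) {ε : ℝ} (hε : 0 < ε) :
    ∃ C : ℝ, 0 < C ∧ ∀ (a : ℕ) (I : Finset ℕ) (F : ℕ → ℝ) (K : ℝ), a ≠ 0 →
      Squarefree (absEval P a) → I ⊆ Icc 1 a → 0 ≤ K →
      (∀ n ∈ I, F n * (a / (absEval P a).gcd (absEval P n) + 1) ≤ K) →
      ∑ n ∈ I, F n ≤ C * (a : ℝ) ^ ε * K := by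
  obtain ⟨C₁, hC₁, hcount⟩ := exists_card_dvd_absEval_le_rpow h.separable
    (fun _ ↦ h.absEval_ne_zero) (half_pos hε)
  obtain ⟨C₂, hC₂, homega⟩ := exists_pow_card_primeFactors_absEval_le P 2 (half_pos hε)
  refine ⟨C₂ * C₁, by positivity, fun a I F K ha hsq hI hK hFK ↦ ?_⟩
  have hmaps : ∀ n ∈ I, (absEval P a).gcd (absEval P n) ∈ (absEval P a).divisors := fun n _ ↦
    Nat.mem_divisors.mpr ⟨Nat.gcd_dvd_left _ _, hsq.ne_zero⟩
  have hfiber : ∀ g ∈ (absEval P a).divisors,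
      ∑ n ∈ I with (absEval P a).gcd (absEval P n) = g, F n ≤ C₁ * (a : ℝ) ^ (ε / 2) * K := by
    intro g hg
    have hcard : (#{n ∈ I | (absEval P a).gcd (absEval P n) = g} : ℝ) ≤
        C₁ * (a : ℝ) ^ (ε / 2) * (a / g + 1) := by
      refine le_trans (Nat.cast_le.mpr (card_le_card fun n hn ↦ ?_))
        (hcount a g (hsq.squarefree_of_dvd (Nat.dvd_of_mem_divisors hg)))
      obtain ⟨hnI, rfl⟩ := mem_filter.mp hn
      exact mem_filter.mpr ⟨hI hnI, Nat.gcd_dvd_right _ _⟩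
    calc ∑ n ∈ I with (absEval P a).gcd (absEval P n) = g, F n
        ≤ #{n ∈ I | (absEval P a).gcd (absEval P n) = g} * (K / (a / g + 1)) := by
          refine (sum_le_card_nsmul _ _ _ fun n hn ↦ ?_).trans_eq (nsmul_eq_mul _ _)
          obtain ⟨hnI, rfl⟩ := mem_filter.mp hn
          exact (le_div_iff₀ (by positivity)).mpr (hFK n hnI)
      _ ≤ C₁ * (a : ℝ) ^ (ε / 2) * (a / g + 1) * (K / (a / g + 1)) := by gcongr
      _ = C₁ * (a : ℝ) ^ (ε / 2) * K := by field_simp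
  have hdivisors : (#(absEval P a).divisors : ℝ) ≤ C₂ * (a : ℝ) ^ (ε / 2) := by
    rw [card_divisors_of_squarefree hsq, Nat.cast_pow]
    exact homega a a ha le_rfl hsq.ne_zero
  rw [← sum_fiberwise_of_maps_to hmaps]
  calc ∑ g ∈ (absEval P a).divisors, ∑ n ∈ I with (absEval P a).gcd (absEval P n) = g, F n
      ≤ #(absEval P a).divisors * (C₁ * (a : ℝ) ^ (ε / 2) * K) :=
        (sum_le_card_nsmul _ _ _ hfiber).trans_eq (nsmul_eq_mul _ _)
    _ ≤ C₂ * (a : ℝ) ^ (ε / 2) * (C₁ * (a : ℝ) ^ (ε / 2) * K) := by gcongr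
    _ = C₂ * C₁ * ((a : ℝ) ^ (ε / 2) * (a : ℝ) ^ (ε / 2)) * K := by ring
    _ = C₂ * C₁ * (a : ℝ) ^ ε * K := by rw [← Real.rpow_add (by positivity), add_halves]

theorem exists_card_normalizedSolution_of_fst_le (h : PositiveSeparable P) :
    ∃ C : ℝ, 0 < C ∧ ∀ (a : ℕ) (T : Finset (ℕ × ℕ × ℕ)), a ≠ 0 →
      (∀ q ∈ T, IsNormalizedSolution (absEval P) a q.1 q.2.1 q.2.2) →
      (#T : ℝ) ≤ C * (a : ℝ) ^ (49 / 50 : ℝ) := by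
  obtain ⟨C₁, hC₁, hpair⟩ := h.exists_card_normalizedSolution_mul_le
  obtain ⟨C₂, hC₂, hsum⟩ := h.exists_sum_le_of_mul_div_gcd_add_one_le
    (show (0 : ℝ) < 1 / 100 by norm_num)
  refine ⟨C₂ * C₁, by positivity, fun a T ha hT ↦ ?_⟩
  rcases T.eq_empty_or_nonempty with rfl | ⟨q₀, hq₀⟩
  · rw [card_empty, Nat.cast_zero]
    positivity
  have hI : T.image Prod.fst ⊆ Icc 1 a := image_subset_iff.mpr fun q hq ↦
    mem_Icc.mpr ⟨Nat.one_le_iff_ne_zero.mpr (hT q hq).snd_ne_zero, (hT q hq).snd_le⟩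
  have hfiber : ∀ n ∈ T.image Prod.fst, (#{q ∈ T | q.1 = n} : ℝ) *
      (a / (absEval P a).gcd (absEval P n) + 1) ≤ C₁ * (a : ℝ) ^ (97 / 100 : ℝ) := by
    intro n _
    rw [← card_image_snd_filter_fst_eq]
    refine hpair a n _ ha fun r hr ↦ ?_
    obtain ⟨q, hq, rfl⟩ := mem_image.mp hr
    obtain ⟨hqT, rfl⟩ := mem_filter.mp hq
    exact hT q hqT
  calc (#T : ℝ) = ∑ n ∈ T.image Prod.fst, (#{q ∈ T | q.1 = n} : ℝ) := by
        exact_mod_cast card_eq_sum_card_image Prod.fst T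
    _ ≤ C₂ * (a : ℝ) ^ (1 / 100 : ℝ) * (C₁ * (a : ℝ) ^ (97 / 100 : ℝ)) :=
        hsum a _ _ _ ha (hT q₀ hq₀).squarefree_fst hI (by positivity) hfiber
    _ = C₂ * C₁ * ((a : ℝ) ^ (1 / 100 : ℝ) * (a : ℝ) ^ (97 / 100 : ℝ)) := by ring
    _ = C₂ * C₁ * (a : ℝ) ^ (49 / 50 : ℝ) := by rw [← Real.rpow_add (by positivity)]; norm_num

end PositiveSeparable

end CountNormalized

/-! ### Symmetrisation -/

section Symmetrisation

open Finset Polynomial Equiv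

theorem card_le_factorial_mul_card_of_exists_perm {ι α : Type*} [Fintype ι]
    {T W : Finset (ι → α)} (hT : ∀ x ∈ T, ∃ σ : Perm ι, x ∘ σ ∈ W) :
    #T ≤ (Fintype.card ι).factorial * #W := by
  classical
  have hfew : ∀ σ ∈ (univ : Finset (Perm ι)),
      #(bipartiteBelow (fun x (σ : Perm ι) ↦ x ∘ σ ∈ W) T σ) ≤ #W := fun σ _ ↦
    card_le_card_of_injOn (· ∘ σ) (fun x hx ↦ (mem_filter.mp hx).2)
      (σ.surjective.injective_comp_right.injOn)
  have hexists : ∀ x ∈ T,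
      1 ≤ #(bipartiteAbove (fun x (σ : Perm ι) ↦ x ∘ σ ∈ W) univ x) := fun x hx ↦ by
    obtain ⟨σ, hσ⟩ := hT x hx
    exact card_pos.mpr ⟨σ, mem_filter.mpr ⟨mem_univ σ, hσ⟩⟩
  simpa only [mul_one, card_univ, Fintype.card_perm] using card_mul_le_card_mul _ hexists hfew

section FourTuples

variable {f : ℕ → ℕ} {x : Fin 4 → ℕ}

theorem prod_perm_fin_four {M : Type*} [CommMonoid M] (g : Fin 4 → M) (σ : Perm (Fin 4)) :
    g (σ 0) * g (σ 1) * g (σ 2) * g (σ 3) = ∏ i, g i := by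
  rw [← Equiv.prod_comp σ g, Fin.prod_univ_four]

theorem exists_perm_apply_zero_one :
    ∀ i j : Fin 4, i ≠ j → ∃ σ : Perm (Fin 4), σ 0 = i ∧ σ 1 = j := by
  decide

theorem exists_perm_forall_le_and_gcd_le (f : ℕ → ℕ) (x : Fin 4 → ℕ) :
    ∃ σ : Perm (Fin 4), (∀ i, x i ≤ x (σ 0)) ∧ ∀ i, i ≠ σ 0 →
      (f (x (σ 0))).gcd (f (x i)) ≤ (f (x (σ 0))).gcd (f (x (σ 1))) := by
  obtain ⟨i, hi⟩ := Finite.exists_max x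
  obtain ⟨j, hj, hmax⟩ := exists_max_image (univ.erase i) (fun j ↦ (f (x i)).gcd (f (x j)))
    (by rw [← card_pos, card_erase_of_mem (mem_univ i), card_fin]; norm_num)
  obtain ⟨σ, rfl, rfl⟩ := exists_perm_apply_zero_one i j (ne_of_mem_erase hj).symm
  exact ⟨σ, hi, fun k hk ↦ hmax k (mem_erase.mpr ⟨hk, mem_univ k⟩)⟩

theorem exists_perm_isNormalizedSolution (hne : ∀ i, x i ≠ 0) (hsq : ∀ i, Squarefree (f (x i)))
    (hprod : IsSquare (∏ i, f (x i))) (hinj : Function.Injective fun i ↦ f (x i)) :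
    ∃ σ : Perm (Fin 4),
      IsNormalizedSolution f (x (σ 0)) (x (σ 1)) (x (σ 2)) (x (σ 3)) := by
  obtain ⟨σ, hmax, hgcd⟩ := exists_perm_forall_le_and_gcd_le f x
  have normalized_of_le (τ : Perm (Fin 4)) (h0 : τ 0 = σ 0) (h1 : τ 1 = σ 1)
      (hle : (f (x (τ 3))).gcd (cofactorProduct (f (x (σ 0))) (f (x (σ 1)))) ≤
        (f (x (τ 2))).gcd (cofactorProduct (f (x (σ 0))) (f (x (σ 1))))) :
      IsNormalizedSolution f (x (τ 0)) (x (τ 1)) (x (τ 2)) (x (τ 3)) := by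
    rw [← h0, ← h1] at hle hgcd
    rw [← h0] at hmax
    exact ⟨hne _, hne _, hne _, hmax _, hmax _, hsq _, hsq _, hsq _, hsq _,
      (prod_perm_fin_four (fun i ↦ f (x i)) τ).symm ▸ hprod,
      fun h ↦ absurd (τ.injective (hinj h)) (by decide),
      hgcd _ (τ.injective.ne (by decide)), hgcd _ (τ.injective.ne (by decide)), hle⟩
  rcases le_total ((f (x (σ 3))).gcd (cofactorProduct (f (x (σ 0))) (f (x (σ 1)))))
    ((f (x (σ 2))).gcd (cofactorProduct (f (x (σ 0))) (f (x (σ 1))))) with hle | hle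
  · exact ⟨σ, normalized_of_le σ rfl rfl hle⟩
  · exact ⟨σ * swap 2 3, normalized_of_le _ rfl rfl hle⟩

end FourTuples

theorem PositiveSeparable.exists_card_normalizedSolution_le {P : ℤ[X]} (h : PositiveSeparable P) :
    ∃ C : ℝ, 0 < C ∧ ∀ (N : ℕ) (W : Finset (Fin 4 → ℕ)), (∀ x ∈ W, x 0 ≤ N ∧
      IsNormalizedSolution (absEval P) (x 0) (x 1) (x 2) (x 3)) →
      (#W : ℝ) ≤ C * (N : ℝ) ^ (99 / 50 : ℝ) := by
  obtain ⟨C, hC, hfst⟩ := h.exists_card_normalizedSolution_of_fst_le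
  refine ⟨C, hC, fun N W hW ↦ ?_⟩
  have hmaps : ∀ x ∈ W, x 0 ∈ Icc 1 N := fun x hx ↦
    mem_Icc.mpr ⟨(Nat.pos_of_ne_zero (hW x hx).2.snd_ne_zero).trans_le (hW x hx).2.snd_le,
      (hW x hx).1⟩
  have hfiber : ∀ a ∈ Icc 1 N, (#{x ∈ W | x 0 = a} : ℝ) ≤ C * (N : ℝ) ^ (49 / 50 : ℝ) := by
    intro a ha
    obtain ⟨ha0, haN⟩ := mem_Icc.mp ha
    have htail : #({x ∈ W | x 0 = a}.image fun x ↦ (x 1, x 2, x 3)) = #{x ∈ W | x 0 = a} := by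
      refine card_image_of_injOn fun x hx y hy hxy ↦ ?_
      have hx0 := (mem_filter.mp hx).2
      have hy0 := (mem_filter.mp hy).2
      simp only [Prod.mk.injEq] at hxy
      ext i
      fin_cases i
      exacts [hx0.trans hy0.symm, hxy.1, hxy.2.1, hxy.2.2]
    calc (#{x ∈ W | x 0 = a} : ℝ) ≤ C * (a : ℝ) ^ (49 / 50 : ℝ) := by
          rw [← htail]
          refine hfst a _ (by omega) fun q hq ↦ ?_
          obtain ⟨x, hx, rfl⟩ := mem_image.mp hq
          obtain ⟨hxW, rfl⟩ := mem_filter.mp hx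
          exact (hW x hxW).2
      _ ≤ C * (N : ℝ) ^ (49 / 50 : ℝ) := by gcongr
  calc (#W : ℝ) = ∑ a ∈ Icc 1 N, (#{x ∈ W | x 0 = a} : ℝ) := by
        exact_mod_cast card_eq_sum_card_fiberwise hmaps
    _ ≤ N * (C * (N : ℝ) ^ (49 / 50 : ℝ)) := by
        simpa only [nsmul_eq_mul, Nat.card_Icc, Nat.add_sub_cancel] using
          sum_le_card_nsmul _ _ _ hfiber
    _ = C * ((N : ℝ) ^ (49 / 50 : ℝ) * (N : ℝ) ^ (1 : ℝ)) := by rw [Real.rpow_one]; ring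
    _ = C * (N : ℝ) ^ (99 / 50 : ℝ) := by
        rw [← Real.rpow_add' (by positivity) (by norm_num)]; norm_num

end Symmetrisation

/-! ### The fourth moment -/

section Paired

open Finset Equiv

variable {α : Type*}

/-- A quadruple whose entries match up in two pairs: the trivial solutions of
"`∏ i, f (x i)` is a square". -/
def IsPaired (x : Fin 4 → α) : Prop :=
  ∃ σ : Perm (Fin 4), x (σ 0) = x (σ 1) ∧ x (σ 2) = x (σ 3)

instance [DecidableEq α] : DecidablePred (IsPaired (α := α)) := fun x ↦
  inferInstanceAs (Decidable (∃ σ : Perm (Fin 4), x (σ 0) = x (σ 1) ∧ x (σ 2) = x (σ 3)))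

theorem isPaired_iff {x : Fin 4 → α} : IsPaired x ↔
    (x 0 = x 1 ∧ x 2 = x 3) ∨ (x 0 = x 2 ∧ x 1 = x 3) ∨ (x 0 = x 3 ∧ x 1 = x 2) := by
  constructor
  · rintro ⟨σ, h01, h23⟩
    have hinj : ∀ i j, i ≠ j → σ i ≠ σ j := fun i j ↦ σ.injective.ne
    have h02 := hinj 0 2 (by decide)
    have h03 := hinj 0 3 (by decide)
    have h12 := hinj 1 2 (by decide)
    have h13 := hinj 1 3 (by decide)
    have h01' := hinj 0 1 (by decide)
    have h23' := hinj 2 3 (by decide)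
    clear hinj
    generalize σ 0 = i, σ 1 = j, σ 2 = k, σ 3 = l at *
    fin_cases i <;> fin_cases j <;> fin_cases k <;> fin_cases l <;> simp_all
  · rintro (⟨h, h'⟩ | ⟨h, h'⟩ | ⟨h, h'⟩)
    exacts [⟨1, h, h'⟩, ⟨swap 1 2, h, h'⟩, ⟨swap 1 3, h, h'.symm⟩]

theorem IsPaired.isSquare_prod {M : Type*} [CommMonoid M] {x : Fin 4 → α} (hx : IsPaired x)
    (f : α → M) : IsSquare (∏ i, f (x i)) := by
  obtain ⟨σ, h01, h23⟩ := hx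
  refine ⟨f (x (σ 0)) * f (x (σ 2)), ?_⟩
  rw [← prod_perm_fin_four _ σ, ← h01, ← h23, mul_assoc, mul_mul_mul_comm]

theorem card_le_of_forall_eq_const (S : Finset α) {T : Finset (Fin 4 → α)}
    (hT : ∀ x ∈ T, x 0 ∈ S ∧ ∀ i, x i = x 0) : #T ≤ #S := by
  refine card_le_card_of_injOn (· 0) (fun x hx ↦ (hT x hx).1) fun x hx y hy hxy ↦ ?_
  ext i
  rw [(hT x hx).2 i, (hT y hy).2 i]
  exact hxy

variable [DecidableEq α] (S : Finset α)

theorem card_filter_apply_eq_apply_eq (σ : Perm (Fin 4)) :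
    #{x ∈ Fintype.piFinset fun _ ↦ S | x (σ 0) = x (σ 1) ∧ x (σ 2) = x (σ 3)} = #S ^ 2 := by
  rw [sq, ← card_product]
  refine card_nbij' (fun x ↦ (x (σ 0), x (σ 2))) (fun q ↦ ![q.1, q.1, q.2, q.2] ∘ σ.symm)
    ?_ ?_ ?_ ?_
  · intro x hx
    have hxS := Fintype.mem_piFinset.mp (mem_filter.mp hx).1
    exact mem_product.mpr ⟨hxS _, hxS _⟩
  · rintro ⟨a, b⟩ hq
    obtain ⟨ha, hb⟩ := mem_product.mp hq
    refine mem_filter.mpr ⟨Fintype.mem_piFinset.mpr fun i ↦ ?_, by simp, by simp⟩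
    obtain ⟨j, rfl⟩ := σ.surjective i
    simp only [Function.comp_apply, symm_apply_apply]
    fin_cases j
    exacts [ha, ha, hb, hb]
  · intro x hx
    obtain ⟨-, h01, h23⟩ := mem_filter.mp hx
    ext i
    obtain ⟨j, rfl⟩ := σ.surjective i
    simp only [Function.comp_apply, symm_apply_apply]
    fin_cases j
    exacts [rfl, h01, rfl, h23]
  · rintro ⟨a, b⟩ -
    simp

theorem card_filter_isPaired_bounds :
    #{x ∈ Fintype.piFinset fun _ ↦ S | IsPaired x} ≤ 3 * #S ^ 2 ∧
      3 * #S ^ 2 ≤ #{x ∈ Fintype.piFinset fun _ ↦ S | IsPaired x} + 2 * #S := by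
  set T := Fintype.piFinset fun _ : Fin 4 ↦ S
  set D₁ := {x ∈ T | x 0 = x 1 ∧ x 2 = x 3}
  set D₂ := {x ∈ T | x 0 = x 2 ∧ x 1 = x 3}
  set D₃ := {x ∈ T | x 0 = x 3 ∧ x 2 = x 1}
  have hunion : {x ∈ T | IsPaired x} = D₁ ∪ D₂ ∪ D₃ := by
    ext x
    grind [isPaired_iff]
  have hcard₁ : #D₁ = #S ^ 2 := card_filter_apply_eq_apply_eq S 1
  have hcard₂ : #D₂ = #S ^ 2 := card_filter_apply_eq_apply_eq S (swap 1 2)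
  have hcard₃ : #D₃ = #S ^ 2 := card_filter_apply_eq_apply_eq S (swap 1 3)
  have hT : ∀ x ∈ T, x 0 ∈ S := fun x hx ↦ Fintype.mem_piFinset.mp hx 0
  have hinter : #(D₁ ∩ D₂) ≤ #S := card_le_of_forall_eq_const S fun x hx ↦ by
    simp only [D₁, D₂, mem_inter, mem_filter] at hx
    exact ⟨hT x hx.1.1, fun i ↦ by fin_cases i <;> grind⟩
  have hinter' : #((D₁ ∪ D₂) ∩ D₃) ≤ #S := card_le_of_forall_eq_const S fun x hx ↦ by
    simp only [D₁, D₂, D₃, mem_inter, mem_union, mem_filter] at hx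
    exact ⟨hT x hx.2.1, fun i ↦ by fin_cases i <;> grind⟩
  have hcard := card_union_add_card_inter D₁ D₂
  have hcard' := card_union_add_card_inter (D₁ ∪ D₂) D₃
  rw [hunion]
  omega

end Paired

section FourthMoment

open Finset Polynomial Equiv

/-- The `n ∈ [1, N]` at which `f` takes a squarefree value. -/
def squarefreeIndices (f : ℕ → ℕ) (N : ℕ) : Finset ℕ := {n ∈ Icc 1 N | Squarefree (f n)}

/-- The quadruples counted by the fourth moment: entries in `[1, N]`, squarefree values of `f`, and
a square as the product of these values. -/
def squareTuples (f : ℕ → ℕ) (N : ℕ) : Finset (Fin 4 → ℕ) :=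
  {x ∈ Fintype.piFinset fun _ ↦ squarefreeIndices f N | IsSquare (∏ i, f (x i))}

variable {f : ℕ → ℕ} {N : ℕ} {x : Fin 4 → ℕ}

theorem card_squarefreeIndices_le (f : ℕ → ℕ) (N : ℕ) : #(squarefreeIndices f N) ≤ N :=
  (card_filter_le _ _).trans_eq (by rw [Nat.card_Icc, Nat.add_sub_cancel])

theorem mem_squarefreeIndices {n : ℕ} :
    n ∈ squarefreeIndices f N ↔ (1 ≤ n ∧ n ≤ N) ∧ Squarefree (f n) := by
  rw [squarefreeIndices, mem_filter, mem_Icc]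

theorem mem_squareTuples : x ∈ squareTuples f N ↔
    (∀ i, (1 ≤ x i ∧ x i ≤ N) ∧ Squarefree (f (x i))) ∧ IsSquare (∏ i, f (x i)) := by
  simp only [squareTuples, mem_filter, Fintype.mem_piFinset, mem_squarefreeIndices]

theorem filter_isPaired_squareTuples (f : ℕ → ℕ) (N : ℕ) : {x ∈ squareTuples f N | IsPaired x} =
    {x ∈ Fintype.piFinset fun _ : Fin 4 ↦ squarefreeIndices f N | IsPaired x} := by
  ext x
  simp only [squareTuples, mem_filter, and_congr_left_iff, and_iff_left_iff_imp]
  exact fun hx _ ↦ hx.isSquare_prod f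

theorem abs_card_squareTuples_sub_le (f : ℕ → ℕ) (N : ℕ) :
    |(#(squareTuples f N) : ℝ) - 3 * #(squarefreeIndices f N) ^ 2| ≤
      2 * (#(squarefreeIndices f N) : ℝ) + #{x ∈ squareTuples f N | ¬ IsPaired x} := by
  obtain ⟨hle, hge⟩ := card_filter_isPaired_bounds (squarefreeIndices f N)
  rw [← filter_isPaired_squareTuples] at hle hge
  rw [← card_filter_add_card_filter_not (s := squareTuples f N) IsPaired, abs_le]
  rify at hle hge ⊢
  constructor <;> linarith

theorem exists_perm_eq_of_not_isPaired (hsq : ∀ i, Squarefree (f (x i)))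
    (hprod : IsSquare (∏ i, f (x i))) (hpair : ¬ IsPaired x)
    (hinj : ¬ Function.Injective fun i ↦ f (x i)) : ∃ σ : Perm (Fin 4),
      f (x (σ 0)) = f (x (σ 1)) ∧ f (x (σ 2)) = f (x (σ 3)) ∧ x (σ 0) ≠ x (σ 1) := by
  obtain ⟨i, j, hij, hne⟩ := Function.not_injective_iff.mp hinj
  obtain ⟨σ, rfl, rfl⟩ := exists_perm_apply_zero_one i j hne
  have hrest : f (x (σ 2)) = f (x (σ 3)) := by
    refine eq_of_isSquare_mul (hsq _) (hsq _) (isSquare_of_isSquare_sq_mul (hsq (σ 0)).ne_zero ?_)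
    rw [← prod_perm_fin_four (fun i ↦ f (x i)) σ] at hprod
    rwa [← hij, mul_assoc, ← sq] at hprod
  by_cases h01 : x (σ 0) = x (σ 1)
  · exact ⟨σ * (swap 0 2 * swap 1 3), hrest, hij, fun h23 ↦ hpair ⟨σ, h01, h23⟩⟩
  · exact ⟨σ, hij, hrest, h01⟩

theorem card_not_isPaired_not_injective_le {B : ℕ} (hB : ∀ m n : ℕ, m ≠ 0 → n ≠ 0 →
      f m = f n → m ≠ n → n ≤ B) (N : ℕ) :
    #{x ∈ squareTuples f N | ¬ IsPaired x ∧ ¬ Function.Injective fun i ↦ f (x i)} ≤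
      24 * (B ^ 2 * (N + B ^ 2)) := by
  set E : Finset (ℕ × ℕ) := Icc 1 B ×ˢ Icc 1 B
  set W : Finset (Fin 4 → ℕ) :=
    (E ×ˢ ((Icc 1 N).diag ∪ E)).image fun q ↦ ![q.1.1, q.1.2, q.2.1, q.2.2]
  have hE : #E = B ^ 2 := by rw [card_product, Nat.card_Icc, Nat.add_sub_cancel, sq]
  have hW : #W ≤ B ^ 2 * (N + B ^ 2) := by
    refine card_image_le.trans ?_
    rw [card_product, hE]
    gcongr
    exact (card_union_le _ _).trans_eq (by rw [diag_card, hE, Nat.card_Icc, Nat.add_sub_cancel])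
  refine (card_le_factorial_mul_card_of_exists_perm fun x hx ↦ ?_).trans
    (Nat.mul_le_mul_left 24 hW)
  obtain ⟨hxU, hpair, hinj⟩ := mem_filter.mp hx
  obtain ⟨hxN, hprod⟩ := mem_squareTuples.mp hxU
  obtain ⟨σ, h01, h23, hne⟩ :=
    exists_perm_eq_of_not_isPaired (fun i ↦ (hxN i).2) hprod hpair hinj
  have hpos : ∀ i, 1 ≤ x i := fun i ↦ (hxN i).1.1
  have mem_E : ∀ i j, f (x i) = f (x j) → x i ≠ x j → (x i, x j) ∈ E := fun i j hf hij ↦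
    mem_product.mpr ⟨mem_Icc.mpr ⟨hpos i, hB _ _ (by grind) (by grind) hf.symm hij.symm⟩,
      mem_Icc.mpr ⟨hpos j, hB _ _ (by grind) (by grind) hf hij⟩⟩
  refine ⟨σ, mem_image.mpr ⟨((x (σ 0), x (σ 1)), (x (σ 2), x (σ 3))),
    mem_product.mpr ⟨mem_E _ _ h01 hne, mem_union.mpr ?_⟩, ?_⟩⟩
  · by_cases h : x (σ 2) = x (σ 3)
    · exact Or.inl (mem_diag.mpr ⟨mem_Icc.mpr (hxN (σ 2)).1, h⟩)
    · exact Or.inr (mem_E _ _ h23 h)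
  · ext i
    fin_cases i <;> rfl

theorem PositiveSeparable.exists_card_injective_squareTuples_le {P : ℤ[X]}
    (h : PositiveSeparable P) : ∃ C : ℝ, 0 < C ∧ ∀ N : ℕ,
      (#{x ∈ squareTuples (absEval P) N | Function.Injective fun i ↦ absEval P (x i)} : ℝ) ≤
        C * (N : ℝ) ^ (99 / 50 : ℝ) := by
  classical
  obtain ⟨C, hC, hnormalized⟩ := h.exists_card_normalizedSolution_le
  refine ⟨24 * C, by positivity, fun N ↦ ?_⟩
  set W : Finset (Fin 4 → ℕ) := {x ∈ Fintype.piFinset fun _ ↦ Icc 1 N |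
    IsNormalizedSolution (absEval P) (x 0) (x 1) (x 2) (x 3)}
  have hperm : #{x ∈ squareTuples (absEval P) N | Function.Injective fun i ↦ absEval P (x i)} ≤
      24 * #W := by
    refine card_le_factorial_mul_card_of_exists_perm fun x hx ↦ ?_
    obtain ⟨hxU, hinj⟩ := mem_filter.mp hx
    obtain ⟨hxN, hprod⟩ := mem_squareTuples.mp hxU
    obtain ⟨σ, hσ⟩ := exists_perm_isNormalizedSolution
      (fun i ↦ Nat.one_le_iff_ne_zero.mp (hxN i).1.1) (fun i ↦ (hxN i).2) hprod hinj
    exact ⟨σ, mem_filter.mpr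
      ⟨Fintype.mem_piFinset.mpr fun i ↦ mem_Icc.mpr (hxN (σ i)).1, hσ⟩⟩
  have hW : (#W : ℝ) ≤ C * (N : ℝ) ^ (99 / 50 : ℝ) := hnormalized N W fun x hx ↦
    ⟨(mem_Icc.mp (Fintype.mem_piFinset.mp (mem_filter.mp hx).1 0)).2, (mem_filter.mp hx).2⟩
  calc (#{x ∈ squareTuples (absEval P) N | Function.Injective fun i ↦ absEval P (x i)} : ℝ)
      ≤ 24 * #W := by exact_mod_cast hperm
    _ ≤ 24 * C * (N : ℝ) ^ (99 / 50 : ℝ) := by rw [mul_assoc]; gcongr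

theorem PositiveSeparable.exists_card_not_isPaired_le {P : ℤ[X]} (h : PositiveSeparable P) :
    ∃ C : ℝ, 0 < C ∧ ∀ N : ℕ, 1 ≤ N →
      (#{x ∈ squareTuples (absEval P) N | ¬ IsPaired x} : ℝ) ≤ C * (N : ℝ) ^ (99 / 50 : ℝ) := by
  obtain ⟨C, hC, hinjective⟩ := h.exists_card_injective_squareTuples_le
  obtain ⟨B, hB⟩ := h.exists_bound_of_absEval_eq
  refine ⟨C + 24 * (B ^ 2 * (1 + B ^ 2)), by positivity, fun N hN ↦ ?_⟩
  have hN1 : (1 : ℝ) ≤ N := by exact_mod_cast hN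
  have hNpow : (N : ℝ) ≤ (N : ℝ) ^ (99 / 50 : ℝ) :=
    Real.self_le_rpow_of_one_le hN1 (by norm_num)
  have hsplit : #{x ∈ squareTuples (absEval P) N | ¬ IsPaired x} ≤
      #{x ∈ squareTuples (absEval P) N | Function.Injective fun i ↦ absEval P (x i)} +
        24 * (B ^ 2 * (N + B ^ 2)) := by
    refine le_trans (le_trans (card_le_card fun x hx ↦ ?_) (card_union_le _ _))
      (Nat.add_le_add_left (card_not_isPaired_not_injective_le hB N) _)
    rw [mem_union, mem_filter, mem_filter]
    rw [mem_filter] at hx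
    tauto
  calc (#{x ∈ squareTuples (absEval P) N | ¬ IsPaired x} : ℝ)
      ≤ #{x ∈ squareTuples (absEval P) N | Function.Injective fun i ↦ absEval P (x i)} +
          24 * (B ^ 2 * (N + B ^ 2)) := by exact_mod_cast hsplit
    _ ≤ C * (N : ℝ) ^ (99 / 50 : ℝ) + 24 * (B ^ 2 * (N * (1 + B ^ 2))) := by
        gcongr
        · exact hinjective N
        · nlinarith
    _ ≤ C * (N : ℝ) ^ (99 / 50 : ℝ) +
          24 * (B ^ 2 * ((N : ℝ) ^ (99 / 50 : ℝ) * (1 + B ^ 2))) := by gcongr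
    _ = (C + 24 * (B ^ 2 * (1 + B ^ 2))) * (N : ℝ) ^ (99 / 50 : ℝ) := by ring

theorem abs_sq_sub_sq_le {κ C S N : ℝ} (hκ : 0 ≤ κ) (hS : 0 ≤ S) (hSN : S ≤ N) (hN : 1 ≤ N)
    (hSκ : |S - κ * N| ≤ C * N ^ (3 / 4 : ℝ)) :
    |S ^ 2 - κ ^ 2 * N ^ 2| ≤ C * (1 + κ) * N ^ (7 / 4 : ℝ) := by
  calc |S ^ 2 - κ ^ 2 * N ^ 2| = |S - κ * N| * (S + κ * N) := by
        rw [← abs_of_nonneg (show 0 ≤ S + κ * N by positivity), ← abs_mul]; ring_nf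
    _ ≤ C * N ^ (3 / 4 : ℝ) * (N + κ * N) := by
        gcongr
        exact (abs_nonneg _).trans hSκ
    _ = C * (1 + κ) * (N ^ (3 / 4 : ℝ) * N ^ (1 : ℝ)) := by rw [Real.rpow_one]; ring
    _ = C * (1 + κ) * N ^ (7 / 4 : ℝ) := by rw [← Real.rpow_add (by positivity)]; norm_num

theorem PositiveSeparable.exists_abs_card_squareTuples_sub_le {P : ℤ[X]}
    (h : PositiveSeparable P) {κ C₀ : ℝ} (hκ : 0 ≤ κ) (hC₀ : 0 ≤ C₀) (hdensity : ∀ N : ℕ, 1 ≤ N →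
      |#(squarefreeIndices (absEval P) N) - κ * N| ≤ C₀ * (N : ℝ) ^ (3 / 4 : ℝ)) :
    ∃ C : ℝ, ∀ N : ℕ, 1 ≤ N → |#(squareTuples (absEval P) N) - 3 * κ ^ 2 * (N : ℝ) ^ 2| ≤
      C * (N : ℝ) ^ (99 / 50 : ℝ) := by
  obtain ⟨C, -, hunpaired⟩ := h.exists_card_not_isPaired_le
  refine ⟨2 + C + 3 * (C₀ * (1 + κ)), fun N hN ↦ ?_⟩
  have hN1 : (1 : ℝ) ≤ N := by exact_mod_cast hN
  set S : ℝ := Nat.cast #(squarefreeIndices (absEval P) N)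
  set U : ℝ := Nat.cast #(squareTuples (absEval P) N)
  have hSN : S ≤ N := Nat.cast_le.mpr (card_squarefreeIndices_le (absEval P) N)
  have hpaired : |U - 3 * S ^ 2| ≤ (2 + C) * (N : ℝ) ^ (99 / 50 : ℝ) := by
    calc |U - 3 * S ^ 2| ≤ 2 * S + #{x ∈ squareTuples (absEval P) N | ¬ IsPaired x} :=
          abs_card_squareTuples_sub_le _ N
      _ ≤ 2 * (N : ℝ) ^ (99 / 50 : ℝ) + C * (N : ℝ) ^ (99 / 50 : ℝ) := by
          gcongr
          exacts [hSN.trans (Real.self_le_rpow_of_one_le hN1 (by norm_num)), hunpaired N hN]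
      _ = (2 + C) * (N : ℝ) ^ (99 / 50 : ℝ) := by ring
  have hsquare : |S ^ 2 - κ ^ 2 * (N : ℝ) ^ 2| ≤ C₀ * (1 + κ) * (N : ℝ) ^ (99 / 50 : ℝ) := by
    refine (abs_sq_sub_sq_le hκ (Nat.cast_nonneg _) hSN hN1 (hdensity N hN)).trans ?_
    gcongr ?_ * ?_
    exact Real.rpow_le_rpow_of_exponent_le hN1 (by norm_num)
  calc |U - 3 * κ ^ 2 * (N : ℝ) ^ 2|
      ≤ |U - 3 * S ^ 2| + 3 * |S ^ 2 - κ ^ 2 * (N : ℝ) ^ 2| := by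
        grind
    _ ≤ (2 + C) * (N : ℝ) ^ (99 / 50 : ℝ) + 3 * (C₀ * (1 + κ) * (N : ℝ) ^ (99 / 50 : ℝ)) := by
        gcongr
    _ = (2 + C + 3 * (C₀ * (1 + κ))) * (N : ℝ) ^ (99 / 50 : ℝ) := by ring

end FourthMoment

/-! ### Products of linear polynomials and irreducible quadratics -/

section Shapes

open Polynomial

theorem isCoprime_linear {K : Type*} [Field K] {a b c d : K} (h : a * d - c * b ≠ 0) :
    IsCoprime (C a * X + C b) (C c * X + C d) := by
  have hdet : C a * (C c * X + C d) - C c * (C a * X + C b) = C (a * d - c * b) := by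
    simp only [C_sub, C_mul]; ring
  refine ⟨-C ((a * d - c * b)⁻¹ * c), C ((a * d - c * b)⁻¹ * a), ?_⟩
  calc -C ((a * d - c * b)⁻¹ * c) * (C a * X + C b) + C ((a * d - c * b)⁻¹ * a) * (C c * X + C d)
      = C (a * d - c * b)⁻¹ * (C a * (C c * X + C d) - C c * (C a * X + C b)) := by
        simp only [C_mul]; ring
    _ = 1 := by rw [hdet, ← C_mul, inv_mul_cancel₀ h, C_1]

theorem separable_linear {K : Type*} [Field K] {a : K} (ha : a ≠ 0) (b : K) :
    (C a * X + C b).Separable := by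
  have hderiv : IsUnit (derivative (C a * X + C b)) := by simp [ha]
  exact (isCoprime_one_right (x := C a * X + C b)).of_isCoprime_of_dvd_right hderiv.dvd

variable {ι : Type*} [Fintype ι] {a : ι → ℤ}

theorem separable_map_prod_linear {b : ι → ℤ} (ha : ∀ i, a i ≠ 0)
    (hab : ∀ i j, i ≠ j → a i * b j - a j * b i ≠ 0) :
    ((∏ i, (C (a i) * X + C (b i))).map (Int.castRingHom ℚ)).Separable := by
  simp only [Polynomial.map_prod, Polynomial.map_add, Polynomial.map_mul, map_C, map_X,
    eq_intCast (Int.castRingHom ℚ)]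
  exact separable_prod (fun i j hij ↦ isCoprime_linear (mod_cast hab i j hij))
    fun i ↦ separable_linear (mod_cast ha i) _

theorem natDegree_prod_linear (ha : ∀ i, a i ≠ 0) (b : ι → ℤ) :
    (∏ i, (C (a i) * X + C (b i))).natDegree = Fintype.card ι := by
  rw [natDegree_prod _ _ fun i _ ↦ ne_zero_of_natDegree_gt (n := 0)
    (by rw [natDegree_linear (ha i)]; exact one_pos)]
  simp only [natDegree_linear (ha _), Finset.sum_const, Finset.card_univ, smul_eq_mul, mul_one]

theorem natDegree_le_one_of_irreducible_of_dvd_prod_linear {Q : ℤ[X]} {b : ι → ℤ}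
    (ha : ∀ i, a i ≠ 0) (hQ : Irreducible Q) (hdvd : Q ∣ ∏ i, (C (a i) * X + C (b i))) :
    Q.natDegree ≤ 1 := by
  obtain ⟨i, -, hi⟩ := hQ.prime.exists_mem_finset_dvd hdvd
  have hdeg : (C (a i) * X + C (b i)).natDegree = 1 := natDegree_linear (ha i)
  exact (natDegree_le_of_dvd hi (ne_zero_of_natDegree_gt (n := 0) (by omega))).trans_eq hdeg

theorem separable_map_of_irreducible {P : ℤ[X]} (hdeg : P.natDegree ≠ 0) (hP : Irreducible P) :
    (P.map (Int.castRingHom ℚ)).Separable :=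
  ((IsPrimitive.Int.irreducible_iff_irreducible_map_cast (hP.isPrimitive hdeg)).mp hP).separable

end Shapes

section Main

open Finset Polynomial

variable {P : ℤ[X]}

theorem ncard_squarefree_eval (P : ℤ[X]) (N : ℕ) :
    {n : ℕ | 1 ≤ n ∧ n ≤ N ∧ Squarefree (P.eval (n : ℤ))}.ncard =
      #(squarefreeIndices (absEval P) N) := by
  rw [← Set.ncard_coe_finset]
  congr 1
  ext n
  rw [mem_coe, mem_squarefreeIndices, absEval, Int.squarefree_natAbs, and_assoc, Set.mem_ofPred_eq]

theorem PositiveSeparable.isSquare_prod_absEval_iff (h : PositiveSeparable P) {ι : Type*}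
    [Fintype ι] {x : ι → ℕ} (hx : ∀ i, x i ≠ 0) :
    IsSquare (∏ i, absEval P (x i)) ↔ IsSquare (∏ i, P.eval (x i : ℤ)) := by
  rw [← Int.isSquare_natCast_iff, Nat.cast_prod]
  simp only [h.natCast_absEval (hx _)]

theorem PositiveSeparable.ncard_isSquare_eval (h : PositiveSeparable P) (N : ℕ) :
    {q : ℕ × ℕ × ℕ × ℕ |
        (1 ≤ q.1 ∧ q.1 ≤ N) ∧ (1 ≤ q.2.1 ∧ q.2.1 ≤ N) ∧
        (1 ≤ q.2.2.1 ∧ q.2.2.1 ≤ N) ∧ (1 ≤ q.2.2.2 ∧ q.2.2.2 ≤ N) ∧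
        Squarefree (P.eval (q.1 : ℤ)) ∧ Squarefree (P.eval (q.2.1 : ℤ)) ∧
        Squarefree (P.eval (q.2.2.1 : ℤ)) ∧ Squarefree (P.eval (q.2.2.2 : ℤ)) ∧
        IsSquare (P.eval (q.1 : ℤ) * P.eval (q.2.1 : ℤ) *
          P.eval (q.2.2.1 : ℤ) * P.eval (q.2.2.2 : ℤ))}.ncard =
      #(squareTuples (absEval P) N) := by
  rw [← Set.ncard_coe_finset]
  refine Set.ncard_congr (fun q _ ↦ ![q.1, q.2.1, q.2.2.1, q.2.2.2]) ?_ ?_ ?_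
  · rintro ⟨a, b, c, d⟩ ⟨ha, hb, hc, hd, hsa, hsb, hsc, hsd, hsq⟩
    have hx : ∀ i, 1 ≤ ![a, b, c, d] i := by
      intro i; fin_cases i
      exacts [ha.1, hb.1, hc.1, hd.1]
    refine mem_squareTuples.mpr ⟨fun i ↦ ?_, ?_⟩
    · fin_cases i
      exacts [⟨ha, Int.squarefree_natAbs.mpr hsa⟩, ⟨hb, Int.squarefree_natAbs.mpr hsb⟩,
        ⟨hc, Int.squarefree_natAbs.mpr hsc⟩, ⟨hd, Int.squarefree_natAbs.mpr hsd⟩]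
    · rw [h.isSquare_prod_absEval_iff fun i ↦ Nat.one_le_iff_ne_zero.mp (hx i), Fin.prod_univ_four]
      exact hsq
  · rintro ⟨a, b, c, d⟩ ⟨a', b', c', d'⟩ - - heq
    simpa using heq
  · intro x hx
    obtain ⟨hxN, hsq⟩ := mem_squareTuples.mp hx
    rw [h.isSquare_prod_absEval_iff fun i ↦ Nat.one_le_iff_ne_zero.mp (hxN i).1.1,
      Fin.prod_univ_four] at hsq
    have hsf : ∀ i, Squarefree (P.eval (x i : ℤ)) := fun i ↦ Int.squarefree_natAbs.mp (hxN i).2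
    refine ⟨(x 0, x 1, x 2, x 3), ⟨(hxN 0).1, (hxN 1).1, (hxN 2).1, (hxN 3).1,
      hsf 0, hsf 1, hsf 2, hsf 3, hsq⟩, ?_⟩
    ext i
    fin_cases i <;> rfl

theorem squarefree_density_and_fourth_moment_count_general (hdeg : 2 ≤ P.natDegree)
    (hsep : (P.map (Int.castRingHom ℚ)).Separable)
    (hfactor : ∀ Q : ℤ[X], Irreducible Q → Q ∣ P → Q.natDegree ≤ 2)
    (hadm : ¬ ∃ p : ℕ, p.Prime ∧ ∀ n : ℕ, 0 < n → (p : ℤ) ^ 2 ∣ P.eval (n : ℤ))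
    (hpos : ∀ n : ℕ, 0 < n → 1 ≤ P.eval (n : ℤ)) :
    ∃ κ : ℝ, 0 < κ ∧ ∃ δ : ℝ, 0 < δ ∧
      (∃ C : ℝ, ∀ N : ℕ, 1 ≤ N →
        |({n : ℕ | 1 ≤ n ∧ n ≤ N ∧ Squarefree (P.eval (n : ℤ))}.ncard : ℝ) - κ * N| ≤
          C * (N : ℝ) ^ ((3 : ℝ) / 4)) ∧
      (∀ ε : ℝ, 0 < ε → ∃ C : ℝ, ∀ N : ℕ, 1 ≤ N →
        |({q : ℕ × ℕ × ℕ × ℕ |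
            (1 ≤ q.1 ∧ q.1 ≤ N) ∧ (1 ≤ q.2.1 ∧ q.2.1 ≤ N) ∧
            (1 ≤ q.2.2.1 ∧ q.2.2.1 ≤ N) ∧ (1 ≤ q.2.2.2 ∧ q.2.2.2 ≤ N) ∧
            Squarefree (P.eval (q.1 : ℤ)) ∧ Squarefree (P.eval (q.2.1 : ℤ)) ∧
            Squarefree (P.eval (q.2.2.1 : ℤ)) ∧ Squarefree (P.eval (q.2.2.2 : ℤ)) ∧
            IsSquare (P.eval (q.1 : ℤ) * P.eval (q.2.1 : ℤ) *
              P.eval (q.2.2.1 : ℤ) * P.eval (q.2.2.2 : ℤ))}.ncard : ℝ) -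
          3 * κ ^ 2 * (N : ℝ) ^ 2| ≤ C * (N : ℝ) ^ ((2 : ℝ) - δ + ε)) := by
  have h : PositiveSeparable P := ⟨hdeg, hsep, hpos⟩
  have hκ : 0 < squarefreeDensity P := squarefreeDensity_pos hsep fun p hp ↦ by
    by_contra! hdvd
    exact hadm ⟨p, hp, fun n _ ↦ by
      rw [← Int.natCast_pow, Int.natCast_dvd]
      exact hdvd n⟩
  obtain ⟨C₁, hC₁, hdensity⟩ := (fewLargePrimeSquares_of_separable hsep
    hfactor).exists_abs_card_squarefree_sub_le hsep fun _ ↦ h.absEval_ne_zero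
  obtain ⟨C₂, hfourth⟩ := h.exists_abs_card_squareTuples_sub_le hκ.le hC₁.le hdensity
  refine ⟨squarefreeDensity P, hκ, 1 / 50, by norm_num, ⟨C₁, fun N hN ↦ ?_⟩,
    fun ε hε ↦ ⟨|C₂|, fun N hN ↦ ?_⟩⟩
  · rw [ncard_squarefree_eval]
    exact hdensity N hN
  · rw [h.ncard_isSquare_eval]
    have hN1 : (1 : ℝ) ≤ N := by exact_mod_cast hN
    calc |#(squareTuples (absEval P) N) - 3 * squarefreeDensity P ^ 2 * (N : ℝ) ^ 2|
        ≤ C₂ * (N : ℝ) ^ (99 / 50 : ℝ) := hfourth N hN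
      _ ≤ |C₂| * (N : ℝ) ^ ((2 : ℝ) - 1 / 50 + ε) := by
          gcongr ?_ * ?_
          exacts [le_abs_self C₂, Real.rpow_le_rpow_of_exponent_le hN1 (by linarith)]

end Main

/-- Second and fourth moment counts: for `P` admissible and either a product of at least two
pairwise non-proportional linear factors or an irreducible quadratic, with `P(n) ≥ 1` for all
`n ≥ 1`, there are `κ > 0` and `δ > 0` such that the number of `n ≤ N` with `P(n)` squarefree
is `κN + O(N^{3/4})` and the number of quadruples `(n₁,n₂,n₃,n₄) ∈ [1,N]⁴` with each `P(nᵢ)`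
squarefree and `P(n₁)P(n₂)P(n₃)P(n₄)` a perfect square is `3κ²N² + O_ε(N^{2-δ+ε})`. -/
theorem squarefree_density_and_fourth_moment_count
    (P : Polynomial ℤ)
    (hP : (∃ k : ℕ, 2 ≤ k ∧ ∃ a b : Fin k → ℤ, (∀ i, a i ≠ 0) ∧
            P = ∏ i, (Polynomial.C (a i) * Polynomial.X + Polynomial.C (b i)) ∧
            ∀ i j, i ≠ j → a i * b j - a j * b i ≠ 0) ∨
          (P.natDegree = 2 ∧ Irreducible P))
    (hadm : ¬ ∃ p : ℕ, p.Prime ∧ ∀ n : ℕ, 0 < n → (p : ℤ)^2 ∣ P.eval (n : ℤ))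
    (hpos : ∀ n : ℕ, 0 < n → 1 ≤ P.eval (n : ℤ)) :
    ∃ κ : ℝ, 0 < κ ∧ ∃ δ : ℝ, 0 < δ ∧
      (∃ C : ℝ, ∀ N : ℕ, 1 ≤ N →
        |({n : ℕ | 1 ≤ n ∧ n ≤ N ∧ Squarefree (P.eval (n : ℤ))}.ncard : ℝ) - κ * N| ≤
          C * (N : ℝ) ^ ((3:ℝ)/4)) ∧
      (∀ ε : ℝ, 0 < ε → ∃ C : ℝ, ∀ N : ℕ, 1 ≤ N →
        |({q : ℕ × ℕ × ℕ × ℕ |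
            (1 ≤ q.1 ∧ q.1 ≤ N) ∧ (1 ≤ q.2.1 ∧ q.2.1 ≤ N) ∧
            (1 ≤ q.2.2.1 ∧ q.2.2.1 ≤ N) ∧ (1 ≤ q.2.2.2 ∧ q.2.2.2 ≤ N) ∧
            Squarefree (P.eval (q.1 : ℤ)) ∧ Squarefree (P.eval (q.2.1 : ℤ)) ∧
            Squarefree (P.eval (q.2.2.1 : ℤ)) ∧ Squarefree (P.eval (q.2.2.2 : ℤ)) ∧
            IsSquare (P.eval (q.1 : ℤ) * P.eval (q.2.1 : ℤ) *
              P.eval (q.2.2.1 : ℤ) * P.eval (q.2.2.2 : ℤ))}.ncard : ℝ) -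
          3 * κ^2 * (N : ℝ)^2| ≤ C * (N : ℝ) ^ ((2 : ℝ) - δ + ε)) := by
  rcases hP with ⟨k, hk, a, b, ha, rfl, hab⟩ | ⟨hdeg, hirr⟩
  · refine squarefree_density_and_fourth_moment_count_general ?_
      (separable_map_prod_linear ha hab) (fun Q hQ hdvd ↦ ?_) hadm hpos
    · rwa [natDegree_prod_linear ha, Fintype.card_fin]
    · exact (natDegree_le_one_of_irreducible_of_dvd_prod_linear ha hQ hdvd).trans one_le_two
  · exact squarefree_density_and_fourth_moment_count_general hdeg.ge
      (separable_map_of_irreducible (by omega) hirr)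
      (fun Q _ hdvd ↦ (Polynomial.natDegree_le_of_dvd hdvd hirr.ne_zero).trans_eq hdeg) hadm hpos
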